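/- arXiv:1606.06318 — 3 statements merged into one kernel-verified Lean document; each statement's English description precedes it below -/
import Mathlib

section
/- Let ρ > 0, c > 0, x₀ ≥ 0, and let F : ℝ → ℝ be continuously differentiable with F(0) = 0, F'(y) ≤ 0 for all y ∈ ℝ, F'(0) < 0, F'(y) ≥ −b₀ for all y ∈ ℝ for some constant b₀ > 0, and lim_{y→+∞} F'(y) = −l for some l > 0. Then there exist an admissible control u_* : [0,∞) → ℝ which is essentially bounded on every compact interval [0,T], and a trajectory x_* associated with u_*, such that the function t ↦ e^{-ρt}(log u_*(t) − c·x_*(t)²) is Lebesgue integrable on [0,∞), and for every admissible control u and every trajectory x associated with u for which t ↦ e^{-ρt}(log u(t) − c·x(t)²) is Lebesgue integrable on [0,∞), one has B(u,x) ≤ B(u_*,x_*). In other words, the shallow-lake optimal control problem admits a locally bounded optimal control in L¹_loc(0,∞). -/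
open MeasureTheory Filter

/-- A control `u` is admissible: measurable, locally integrable on `[0,∞)`,
and positive almost everywhere on `[0,∞)`. -/
def Admissible (u : ℝ → ℝ) : Prop :=
  Measurable u ∧ (∀ T : ℝ, 0 < T → IntegrableOn u (Set.Icc 0 T)) ∧
    (∀ᵐ t ∂(volume.restrict (Set.Ici (0:ℝ))), 0 < u t)

/-- `x` is a trajectory associated with the control `u`, dynamics `F` and
initial state `x₀`. -/
def Trajectory (F : ℝ → ℝ) (x₀ : ℝ) (u x : ℝ → ℝ) : Prop :=
  ContinuousOn x (Set.Ici 0) ∧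
    ∀ t : ℝ, 0 ≤ t → x t = x₀ + ∫ s in (0:ℝ)..t, (F (x s) + u s)

/-- The objective functional `B(u,x) = ∫₀^∞ e^{-ρt}(log u(t) - c x(t)²) dt`. -/
noncomputable def objective (ρ c : ℝ) (u x : ℝ → ℝ) : ℝ :=
  ∫ t in Set.Ioi (0:ℝ), Real.exp (-ρ * t) * (Real.log (u t) - c * (x t) ^ 2)

/-- Integrability of the integrand of the objective functional. -/
def ObjIntegrable (ρ c : ℝ) (u x : ℝ → ℝ) : Prop :=
  IntegrableOn (fun t => Real.exp (-ρ * t) * (Real.log (u t) - c * (x t) ^ 2))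
    (Set.Ioi (0:ℝ))

structure FH (F : ℝ → ℝ) (b : ℝ) : Prop where
  bpos : 0 < b
  cont : Continuous F
  zero : F 0 = 0
  anti : ∀ p q, p ≤ q → F q ≤ F p
  lip : ∀ p q, p ≤ q → F p - F q ≤ b * (q - p)

structure Nice (F : ℝ → ℝ) (x₀ : ℝ) (u x : ℝ → ℝ) : Prop where
  meas : Measurable u
  pos : ∀ t, 0 < u t
  int : ∀ p q, IntervalIntegrable u volume p q
  cont : Continuous x
  eq : ∀ t, 0 ≤ t → x t = x₀ + ∫ s in (0:ℝ)..t, (F (x s) + u s)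

lemma sl_ac_of_hasDeriv (a a' : ℝ → ℝ) (ha : ∀ t, HasDerivAt a (a' t) t) (ha' : Continuous a')
    (s t : ℝ) : AbsolutelyContinuousOnInterval a s t := by
  have h1 : AbsolutelyContinuousOnInterval (fun r => ∫ q in s..r, a' q) s t :=
    (ha'.intervalIntegrable s t).absolutelyContinuousOnInterval_intervalIntegral (by simp)
  have h2 : AbsolutelyContinuousOnInterval (fun _ : ℝ => a s) s t := by
    have : LipschitzOnWith 0 (fun _ : ℝ => a s) (Set.uIcc s t) := by
      intro x _ y _; simp
    exact this.absolutelyContinuousOnInterval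
  have h3 := h2.add h1
  have : ((fun _ : ℝ => a s) + fun r => ∫ q in s..r, a' q) = a := by
    funext r
    simp only [Pi.add_apply]
    rw [intervalIntegral.integral_eq_sub_of_hasDerivAt (fun q _ => ha q) (ha'.intervalIntegrable _ _)]
    ring
  rwa [this] at h3

lemma sl_ibp (a a' v x : ℝ → ℝ) (ha : ∀ t, HasDerivAt a (a' t) t) (ha' : Continuous a')
    (hv : ∀ p q, IntervalIntegrable v volume p q) (x₀ : ℝ)
    (hx : ∀ t, 0 ≤ t → x t = x₀ + ∫ s in (0:ℝ)..t, v s) (s t : ℝ) (hs : 0 ≤ s) (hst : s ≤ t) :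
    a t * x t - a s * x s = ∫ r in s..t, (a' r * x r + a r * v r) := by
  have hac := sl_ac_of_hasDeriv a a' ha ha' s t
  set X : ℝ → ℝ := (fun _ : ℝ => x s) + fun r => ∫ q in s..r, v q with hX
  have hXx : ∀ r, 0 ≤ r → X r = x r := by
    intro r hr
    simp only [hX, Pi.add_apply]
    rw [hx s hs, hx r hr, add_assoc, intervalIntegral.integral_add_adjacent_intervals (hv _ _) (hv _ _)]
  have hXac : AbsolutelyContinuousOnInterval X s t := by
    have h1 : AbsolutelyContinuousOnInterval (fun r => ∫ q in s..r, v q) s t :=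
      (hv s t).absolutelyContinuousOnInterval_intervalIntegral (by simp)
    have h2 : AbsolutelyContinuousOnInterval (fun _ : ℝ => x s) s t := by
      have : LipschitzOnWith 0 (fun _ : ℝ => x s) (Set.uIcc s t) := by
        intro x _ y _; simp
      exact this.absolutelyContinuousOnInterval
    exact h2.add h1
  have h := hac.integral_deriv_mul_eq_sub hXac
  rw [hXx t (hs.trans hst), hXx s hs] at h
  rw [← h]
  apply intervalIntegral.integral_congr_ae
  filter_upwards [(hv s t).ae_hasDerivAt_integral] with r hr hr2
  have h4 := hr (Set.uIoc_subset_uIcc hr2) s (by simp)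
  have h5 : deriv X r = v r := by
    have : HasDerivAt X (0 + v r) r := (hasDerivAt_const r (x s)).add h4
    simpa using this.deriv
  have hr0 : 0 ≤ r := by
    rw [Set.uIoc_of_le hst] at hr2
    linarith [hr2.1]
  rw [(ha r).deriv, h5, hXx r hr0]

lemma sl_expd (k : ℝ) (t : ℝ) :
    HasDerivAt (fun t : ℝ => Real.exp (k * t)) (k * Real.exp (k * t)) t := by
  have := ((hasDerivAt_id t).const_mul k).exp
  simpa [mul_comm] using this

lemma sl_expc (k : ℝ) : Continuous (fun t : ℝ => Real.exp (k * t)) := by fun_prop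

section basics
variable {F : ℝ → ℝ} {b x₀ : ℝ} {u x : ℝ → ℝ}

lemma Nice.intv (hF : FH F b) (h : Nice F x₀ u x) (p q : ℝ) :
    IntervalIntegrable (fun s => F (x s) + u s) volume p q :=
  ((hF.cont.comp h.cont).intervalIntegrable p q).add (h.int p q)

lemma Nice.sub (hF : FH F b) (h : Nice F x₀ u x) (s t : ℝ) (hs : 0 ≤ s) (hst : s ≤ t) :
    x t - x s = ∫ r in s..t, (F (x r) + u r) := by
  rw [h.eq t (hs.trans hst), h.eq s hs, ← intervalIntegral.integral_add_adjacent_intervals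
    (h.intv hF 0 s) (h.intv hF s t)]
  ring

lemma Nice.nonneg (hF : FH F b) (h : Nice F x₀ u x) (hx₀ : 0 ≤ x₀) (t : ℝ) (ht : 0 ≤ t) :
    0 ≤ x t := by
  by_contra hneg
  push Not at hneg
  have hx0 : x 0 = x₀ := by simpa using h.eq 0 le_rfl
  set S : Set ℝ := {r | r ∈ Set.Icc 0 t ∧ 0 ≤ x r} with hS
  have hSc : IsClosed S := by
    have : S = Set.Icc 0 t ∩ x ⁻¹' (Set.Ici 0) := by ext; simp [hS]
    rw [this]
    exact isClosed_Icc.inter (isClosed_Ici.preimage h.cont)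
  have hne : S.Nonempty := ⟨0, ⟨le_rfl, ht⟩, by rw [hx0]; exact hx₀⟩
  have hbd : BddAbove S := ⟨t, fun r hr => hr.1.2⟩
  have hmem := hSc.csSup_mem hne hbd
  set s := sSup S
  have hsub := h.sub hF s t hmem.1.1 hmem.1.2
  have : 0 ≤ ∫ r in s..t, (F (x r) + u r) := by
    rw [intervalIntegral.integral_of_le hmem.1.2]
    apply setIntegral_nonneg measurableSet_Ioc
    intro r hr
    have hxr : x r < 0 := by
      by_contra hc
      push Not at hc
      have : r ∈ S := ⟨⟨hmem.1.1.trans hr.1.le, hr.2⟩, hc⟩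
      exact absurd (le_csSup hbd this) (not_le.mpr hr.1)
    have := hF.anti _ _ hxr.le
    rw [hF.zero] at this
    linarith [h.pos r]
  linarith [hmem.2]

lemma FH.le0 (hF : FH F b) {y : ℝ} (hy : 0 ≤ y) : F y ≤ 0 := by
  have := hF.anti _ _ hy
  rwa [hF.zero] at this

lemma FH.ge0 (hF : FH F b) {y : ℝ} (hy : 0 ≤ y) : -(b * y) ≤ F y := by
  have := hF.lip _ _ hy
  rw [hF.zero] at this
  linarith

lemma Nice.mono (hF : FH F b) (h : Nice F x₀ u x) (hx₀ : 0 ≤ x₀) (s t : ℝ) (hs : 0 ≤ s)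
    (hst : s ≤ t) :
    Real.exp (b * s) * x s + ∫ r in s..t, Real.exp (b * r) * u r ≤ Real.exp (b * t) * x t := by
  have hi := sl_ibp (fun t => Real.exp (b * t)) (fun t => b * Real.exp (b * t)) _ x (sl_expd b)
    (by fun_prop) (h.intv hF) x₀ h.eq s t hs hst
  have : ∫ r in s..t, Real.exp (b * r) * u r ≤
      ∫ r in s..t, (b * Real.exp (b * r) * x r + Real.exp (b * r) * (F (x r) + u r)) := by
    apply intervalIntegral.integral_mono_on hst
    · exact (h.int s t).continuousOn_mul (sl_expc b).continuousOn
    · apply IntervalIntegrable.add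
      · have := h.cont
        exact Continuous.intervalIntegrable (by fun_prop) _ _
      · exact (h.intv hF s t).continuousOn_mul (sl_expc b).continuousOn
    · intro r hr
      have h1 := hF.ge0 (h.nonneg hF hx₀ r (hs.trans hr.1))
      have h2 := Real.exp_pos (b * r)
      nlinarith
  linarith

lemma Nice.mono' (hF : FH F b) (h : Nice F x₀ u x) (hx₀ : 0 ≤ x₀) (s t : ℝ) (hs : 0 ≤ s)
    (hst : s ≤ t) :
    Real.exp (b * s) * x s ≤ Real.exp (b * t) * x t := by
  have := h.mono hF hx₀ s t hs hst
  have h2 : 0 ≤ ∫ r in s..t, Real.exp (b * r) * u r :=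
    intervalIntegral.integral_nonneg hst (fun r _ => mul_nonneg (Real.exp_pos _).le (h.pos r).le)
  linarith

lemma Nice.dis (hF : FH F b) (h : Nice F x₀ u x) (hx₀ : 0 ≤ x₀) (ρ : ℝ) (T : ℝ) (hT : 0 ≤ T) :
    ∫ r in (0:ℝ)..T, Real.exp (-ρ * r) * u r ≤ Real.exp (-ρ * T) * x T
      + (ρ + b) * ∫ r in (0:ℝ)..T, Real.exp (-ρ * r) * x r := by
  have hi := sl_ibp (fun t => Real.exp (-ρ * t)) (fun t => -ρ * Real.exp (-ρ * t)) _ x (sl_expd (-ρ))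
    (by fun_prop) (h.intv hF) x₀ h.eq 0 T le_rfl hT
  have hx0 : x 0 = x₀ := by simpa using h.eq 0 le_rfl
  have hc := h.cont
  have : ∫ r in (0:ℝ)..T, Real.exp (-ρ * r) * u r ≤
      ∫ r in (0:ℝ)..T, ((-ρ * Real.exp (-ρ * r) * x r + Real.exp (-ρ * r) * (F (x r) + u r))
        + (ρ + b) * (Real.exp (-ρ * r) * x r)) := by
    apply intervalIntegral.integral_mono_on hT
    · exact (h.int _ _).continuousOn_mul (sl_expc _).continuousOn
    · apply IntervalIntegrable.add
      · apply IntervalIntegrable.add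
        · exact Continuous.intervalIntegrable (by fun_prop) _ _
        · exact (h.intv hF _ _).continuousOn_mul (sl_expc _).continuousOn
      · exact Continuous.intervalIntegrable (by fun_prop) _ _
    · intro r hr
      have h1 := hF.ge0 (h.nonneg hF hx₀ r hr.1)
      have h2 := Real.exp_pos (-ρ * r)
      nlinarith
  rw [intervalIntegral.integral_add, ← hi, intervalIntegral.integral_const_mul] at this
  · simp only [mul_zero, Real.exp_zero, one_mul, hx0] at this
    linarith
  · apply IntervalIntegrable.add
    · exact Continuous.intervalIntegrable (by fun_prop) _ _
    · exact (h.intv hF _ _).continuousOn_mul (sl_expc _).continuousOn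
  · exact Continuous.intervalIntegrable (by fun_prop) _ _

end basics

section blow
variable {F : ℝ → ℝ} {b x₀ : ℝ} {u x : ℝ → ℝ}

lemma sl_expint (ρ : ℝ) (hρ : 0 < ρ) (T : ℝ) :
    ∫ r in (0:ℝ)..T, Real.exp (-ρ * r) ≤ 1 / ρ := by
  have h : ∀ r ∈ Set.uIcc (0:ℝ) T, HasDerivAt (fun r => -(1/ρ) * Real.exp (-ρ * r))
      (Real.exp (-ρ * r)) r := by
    intro r _
    have := (sl_expd (-ρ) r).const_mul (-(1/ρ))
    refine this.congr_deriv ?_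
    field_simp
  rw [intervalIntegral.integral_eq_sub_of_hasDerivAt h ((sl_expc _).intervalIntegrable _ _)]
  simp only [mul_zero, Real.exp_zero]
  have := Real.exp_pos (-ρ * T)
  have : 0 < 1/ρ * Real.exp (-ρ * T) := by positivity
  linarith

lemma Nice.uLe (hF : FH F b) (h : Nice F x₀ u x) (hx₀ : 0 ≤ x₀) (ρ c : ℝ) (hρ : 0 < ρ) (hc : 0 < c)
    (T : ℝ) (hT : 0 ≤ T) :
    ∫ r in (0:ℝ)..T, Real.exp (-ρ * r) * u r ≤ Real.exp (-ρ * T) * x T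
      + (c / 2) * (∫ r in (0:ℝ)..T, Real.exp (-ρ * r) * (x r)^2) + (ρ + b)^2 / (2 * c * ρ) := by
  have h1 := h.dis hF hx₀ ρ T hT
  have hcont := h.cont
  have h2 : (ρ + b) * ∫ r in (0:ℝ)..T, Real.exp (-ρ * r) * x r ≤
      (c / 2) * (∫ r in (0:ℝ)..T, Real.exp (-ρ * r) * (x r)^2) +
      ((ρ + b)^2 / (2 * c)) * ∫ r in (0:ℝ)..T, Real.exp (-ρ * r) := by
    rw [← intervalIntegral.integral_const_mul, ← intervalIntegral.integral_const_mul,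
      ← intervalIntegral.integral_const_mul, ← intervalIntegral.integral_add]
    · apply intervalIntegral.integral_mono_on hT
      · exact Continuous.intervalIntegrable (by fun_prop) _ _
      · exact Continuous.intervalIntegrable (by fun_prop) _ _
      · intro r hr
        have he := Real.exp_pos (-ρ * r)
        have : (ρ + b) * x r ≤ (c/2) * (x r)^2 + (ρ + b)^2 / (2 * c) := by
          have : (c/2) * (x r)^2 + (ρ + b)^2 / (2 * c) - (ρ + b) * x r
            = (c * x r - (ρ + b))^2 / (2 * c) := by field_simp; ring
          have : 0 ≤ (c * x r - (ρ + b))^2 / (2 * c) := by positivity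
          linarith
        nlinarith
    · exact Continuous.intervalIntegrable (by fun_prop) _ _
    · exact Continuous.intervalIntegrable (by fun_prop) _ _
  have h3 : ((ρ + b)^2 / (2 * c)) * ∫ r in (0:ℝ)..T, Real.exp (-ρ * r) ≤
      ((ρ + b)^2 / (2 * c)) * (1 / ρ) :=
    mul_le_mul_of_nonneg_left (sl_expint ρ hρ T) (by positivity)
  have h4 : ((ρ + b)^2 / (2 * c)) * (1 / ρ) = (ρ + b)^2 / (2 * c * ρ) := by field_simp
  linarith

lemma Nice.logLe (h : Nice F x₀ u x) (ρ : ℝ) (S T : ℝ) (hST : S ≤ T)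
    (hl : IntervalIntegrable (fun t => Real.exp (-ρ * t) * Real.log (u t)) volume S T) :
    ∫ r in S..T, Real.exp (-ρ * r) * Real.log (u r) ≤ ∫ r in S..T, Real.exp (-ρ * r) * u r := by
  apply intervalIntegral.integral_mono_on hST hl
  · exact (h.int _ _).continuousOn_mul (sl_expc _).continuousOn
  · intro r _
    have := Real.log_le_sub_one_of_pos (h.pos r)
    have he := Real.exp_pos (-ρ * r)
    nlinarith

lemma Nice.blow (hF : FH F b) (h : Nice F x₀ u x) (hx₀ : 0 ≤ x₀) (ρ c : ℝ) (hρ : 0 < ρ) (hc : 0 < c)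
    (hl : ∀ T, 0 ≤ T → IntervalIntegrable (fun t => Real.exp (-ρ * t) * Real.log (u t)) volume 0 T)
    (K T₁ : ℝ) (hK0 : 0 ≤ K) (hT₁ : 0 ≤ T₁)
    (hK : ∀ T, T₁ ≤ T → -K ≤ ∫ t in (0:ℝ)..T, Real.exp (-ρ * t) * (Real.log (u t) - c * (x t)^2))
    (T : ℝ) (hT : 0 ≤ T) :
    ∫ r in (0:ℝ)..T, Real.exp (-ρ * r) * (x r)^2 ≤ 4 * (K + (ρ + b)^2 / (2 * c * ρ)) / c := by
  have hcont := h.cont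
  set C := K + (ρ + b)^2 / (2 * c * ρ) with hC
  have hC0 : 0 ≤ C := by positivity
  set I : ℝ → ℝ := fun T => ∫ r in (0:ℝ)..T, Real.exp (-ρ * r) * (x r)^2 with hI
  have hIc : Continuous (fun r => Real.exp (-ρ * r) * (x r)^2) := by fun_prop
  have hId : ∀ t, HasDerivAt I (Real.exp (-ρ * t) * (x t)^2) t := fun t =>
    intervalIntegral.integral_hasDerivAt_right (hIc.intervalIntegrable _ _)
      hIc.aestronglyMeasurable.stronglyMeasurableAtFilter hIc.continuousAt
  have hmono : Monotone I := by
    apply monotone_of_deriv_nonneg (fun t => (hId t).differentiableAt)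
    intro t
    rw [(hId t).deriv]
    positivity
  -- main inequality
  have hmain : ∀ t, T₁ ≤ t → (c / 2) * I t ≤ C + Real.exp (-ρ * t) * x t := by
    intro t ht
    have ht0 := hT₁.trans ht
    have h1 := h.uLe hF hx₀ ρ c hρ hc t ht0
    have h2 := h.logLe ρ 0 t ht0 (hl t ht0)
    have h3 := hK t ht
    have h4 : ∫ r in (0:ℝ)..t, Real.exp (-ρ * r) * (Real.log (u r) - c * (x r)^2) =
        (∫ r in (0:ℝ)..t, Real.exp (-ρ * r) * Real.log (u r)) - c * I t := by
      rw [hI, ← intervalIntegral.integral_const_mul, ← intervalIntegral.integral_sub (hl t ht0)]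
      · congr 1; funext r; ring
      · exact Continuous.intervalIntegrable (by fun_prop) _ _
    change _ ≤ _ + c / 2 * I t + _ at h1
    linarith
  by_contra hcon
  push Not at hcon
  change 4 * C / c < I T at hcon
  set T₂ := max T T₁ with hT₂
  have hT₂0 : 0 ≤ T₂ := hT.trans (le_max_left _ _)
  have hbig : ∀ t, T₂ ≤ t → 4 * C / c < I t := fun t ht =>
    lt_of_lt_of_le hcon (hmono ((le_max_left _ _).trans ht))
  have hpos : ∀ t, T₂ ≤ t → 0 < I t := fun t ht => lt_of_le_of_lt (by positivity) (hbig t ht)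
  have hder : ∀ t, T₂ ≤ t → (c / 4)^2 ≤ (Real.exp (-ρ * t) * (x t)^2) / (I t)^2 := by
    intro t ht
    have h0 := hpos t ht
    have hg : (c / 4) * I t ≤ Real.exp (-ρ * t) * x t := by
      have h1 := hmain t ((le_max_right _ _).trans ht)
      have h2 := hbig t ht
      rw [div_lt_iff₀ hc] at h2
      linarith
    rw [le_div_iff₀ (by positivity), ← mul_pow]
    have he1 : Real.exp (-ρ * t) ≤ 1 := by
      rw [Real.exp_le_one_iff]; nlinarith [hT₂0.trans ht]
    have he0 := Real.exp_pos (-ρ * t)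
    calc (c / 4 * I t)^2 ≤ (Real.exp (-ρ * t) * x t)^2 := by
          apply pow_le_pow_left₀ (by positivity) hg
      _ = Real.exp (-ρ * t) * (Real.exp (-ρ * t) * (x t)^2) := by ring
      _ ≤ 1 * (Real.exp (-ρ * t) * (x t)^2) := by gcongr
      _ = _ := one_mul _
  -- the function -1/I - (c/4)^2 t is monotone on [T₂, ∞)
  set g : ℝ → ℝ := fun t => -(I t)⁻¹ - (c/4)^2 * t with hg
  have hgd : ∀ t, T₂ ≤ t → HasDerivAt g ((Real.exp (-ρ * t) * (x t)^2) / (I t)^2 - (c/4)^2) t := by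
    intro t ht
    have h1 := ((hId t).inv (hpos t ht).ne').neg
    have h2 := h1.sub ((hasDerivAt_id t).const_mul ((c/4)^2))
    refine h2.congr_deriv ?_
    ring
  have hgm : MonotoneOn g (Set.Ici T₂) := by
    apply monotoneOn_of_deriv_nonneg (convex_Ici _)
    · intro t ht
      exact (hgd t ht).continuousAt.continuousWithinAt
    · intro t ht
      rw [interior_Ici] at ht
      exact (hgd t (le_of_lt ht)).differentiableAt.differentiableWithinAt
    · intro t ht
      rw [interior_Ici] at ht
      rw [(hgd t (le_of_lt ht)).deriv]
      linarith [hder t (le_of_lt ht)]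
  set t' := T₂ + (I T₂)⁻¹ / (c/4)^2 with ht'
  have hi0 := hpos T₂ le_rfl
  have hle : T₂ ≤ t' := by
    have : 0 ≤ (I T₂)⁻¹ / (c/4)^2 := by positivity
    linarith
  have hfin := hgm (Set.mem_Ici.2 le_rfl) (Set.mem_Ici.2 hle) hle
  have hi1 := hpos t' hle
  have hi2 : 0 < (I t')⁻¹ := by positivity
  have : (c/4)^2 * t' = (c/4)^2 * T₂ + (I T₂)⁻¹ := by
    rw [ht']; field_simp
  simp only [hg] at hfin
  linarith

end blow

section cons
variable {F : ℝ → ℝ} {b x₀ : ℝ}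

lemma sl_cons (hF : FH F b) (hx₀ : 0 ≤ x₀) (ρ c : ℝ) (hρ : 0 < ρ) (hc : 0 < c) (K : ℝ) (hK : 0 ≤ K) :
    ∃ D θ : ℝ, 0 < D ∧ 0 < θ ∧ ∀ u x : ℝ → ℝ, Nice F x₀ u x → ObjIntegrable ρ c u x →
      -K ≤ objective ρ c u x →
      IntegrableOn (fun t => Real.exp (-ρ * t) * (x t)^2) (Set.Ioi 0) ∧
      IntegrableOn (fun t => Real.exp (-ρ * t) * Real.log (u t)) (Set.Ioi 0) ∧
      IntegrableOn (fun t => Real.exp (-ρ * t) * u t) (Set.Ioi 0) ∧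
      (∀ t, 0 ≤ t → x t ≤ D * Real.exp (ρ / 2 * t)) ∧
      (∀ t, 1 ≤ t → θ ≤ Real.exp (b * t) * x t) := by
  set C₀ := (ρ + b)^2 / (2 * c * ρ) with hC₀
  have hC₀0 : 0 ≤ C₀ := by positivity
  set CI := 4 * ((K + 1) + C₀) / c with hCI
  have hCIp : 0 < CI := by positivity
  set D := Real.sqrt (CI * Real.exp (ρ + 2 * b)) with hD
  have hDp : 0 < D := by rw [hD]; positivity
  set D₂ := D + c / 2 * CI + C₀ with hD₂
  set ω := ∫ r in (0:ℝ)..1, Real.exp (-ρ * r) with hω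
  have hωp : 0 < ω := by
    apply intervalIntegral.intervalIntegral_pos_of_pos
    · exact (sl_expc _).intervalIntegrable _ _
    · intro r; exact Real.exp_pos _
    · norm_num
  set θ := Real.exp (-(K + D₂ + 1) / ω) with hθ
  have hθp : 0 < θ := Real.exp_pos _
  refine ⟨D, θ, hDp, hθp, ?_⟩
  intro u x h hobj hge
  have hcont := h.cont
  have hIc : Continuous (fun r => Real.exp (-ρ * r) * (x r)^2) := by fun_prop
  have hl : ∀ T, 0 ≤ T →
      IntervalIntegrable (fun t => Real.exp (-ρ * t) * Real.log (u t)) volume 0 T := by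
    intro T hT
    have h1 : IntervalIntegrable (fun t => Real.exp (-ρ * t) * (Real.log (u t) - c * (x t)^2))
        volume 0 T := by
      rw [intervalIntegrable_iff_integrableOn_Ioc_of_le hT]
      exact hobj.mono_set Set.Ioc_subset_Ioi_self
    have h2 := h1.add ((hIc.const_mul c).intervalIntegrable 0 T)
    refine h2.congr ?_
    intro r _
    simp only [Pi.add_apply]
    ring
  have hIntX : ∀ T, 0 ≤ T → ∫ r in (0:ℝ)..T, Real.exp (-ρ * r) * (x r)^2 ≤ CI := by
    have htend := intervalIntegral_tendsto_integral_Ioi 0 hobj tendsto_id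
    have hev : ∀ᶠ T in atTop, -(K+1) < ∫ t in (0:ℝ)..T,
        Real.exp (-ρ * t) * (Real.log (u t) - c * (x t)^2) := by
      apply htend.eventually_const_lt
      change _ < objective ρ c u x
      linarith
    obtain ⟨T₁, hT₁⟩ := eventually_atTop.1 hev
    intro T hT
    exact h.blow hF hx₀ ρ c hρ hc hl (K+1) (max T₁ 0) (by linarith) (le_max_right _ _)
      (fun T hT => (hT₁ T ((le_max_left _ _).trans hT)).le) T hT
  have hxD : ∀ t, 0 ≤ t → x t ≤ D * Real.exp (ρ / 2 * t) := by
    intro t ht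
    have h1 := hIntX (t+1) (by linarith)
    have h2 : Real.exp (-ρ * (t+1)) * Real.exp (-2*b) * (x t)^2 ≤
        ∫ r in t..(t+1), Real.exp (-ρ * r) * (x r)^2 := by
      have : ∫ r in t..(t+1), (Real.exp (-ρ * (t+1)) * Real.exp (-2*b) * (x t)^2) =
        Real.exp (-ρ * (t+1)) * Real.exp (-2*b) * (x t)^2 := by simp
      rw [← this]
      apply intervalIntegral.integral_mono_on (by linarith) (by simp) (hIc.intervalIntegrable _ _)
      intro r hr
      have hm := h.mono' hF hx₀ t r ht hr.1
      have hx1 := h.nonneg hF hx₀ t ht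
      have hx2 := h.nonneg hF hx₀ r (ht.trans hr.1)
      have hbp := hF.bpos
      have h3 : Real.exp (-b) * x t ≤ x r := by
        have e1 : Real.exp (b * t) * x t = Real.exp (b * (t+1)) * (Real.exp (-b) * x t) := by
          rw [← mul_assoc, ← Real.exp_add]; congr 2; ring
        have e2 : Real.exp (b * r) * x r ≤ Real.exp (b * (t+1)) * x r := by
          gcongr; exact hr.2
        have := Real.exp_pos (b * (t+1))
        rw [e1] at hm
        exact le_of_mul_le_mul_left (hm.trans e2) this
      have h4 : Real.exp (-2*b) * (x t)^2 ≤ (x r)^2 := by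
        have : Real.exp (-2*b) * (x t)^2 = (Real.exp (-b) * x t)^2 := by
          rw [mul_pow, ← Real.exp_nat_mul]; congr 2; push_cast; ring
        rw [this]
        exact pow_le_pow_left₀ (by positivity) h3 2
      rw [mul_assoc]
      apply mul_le_mul _ h4 (by positivity) (by positivity)
      apply Real.exp_le_exp.2
      nlinarith [hr.2]
    have h3 : ∫ r in t..(t+1), Real.exp (-ρ * r) * (x r)^2 ≤
        ∫ r in (0:ℝ)..(t+1), Real.exp (-ρ * r) * (x r)^2 := by
      rw [← intervalIntegral.integral_add_adjacent_intervals (hIc.intervalIntegrable 0 t)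
        (hIc.intervalIntegrable t (t+1))]
      have : 0 ≤ ∫ r in (0:ℝ)..t, Real.exp (-ρ * r) * (x r)^2 :=
        intervalIntegral.integral_nonneg ht (fun r _ => by positivity)
      linarith
    refine abs_le_of_sq_le_sq' ?_ (by positivity) |>.2
    rw [mul_pow, hD, Real.sq_sqrt (by positivity), ← Real.exp_nat_mul]
    have h4 := h2.trans (h3.trans h1)
    have h5 : (x t)^2 = (Real.exp (ρ + 2*b) * Real.exp (ρ * t)) * 
        (Real.exp (-ρ * (t+1)) * Real.exp (-2*b) * (x t)^2) := by
      rw [← mul_assoc, ← Real.exp_add, ← Real.exp_add, ← Real.exp_add]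
      ring_nf
      simp
    rw [h5]
    have h6 : ((2:ℕ):ℝ) * (ρ / 2 * t) = ρ * t := by push_cast; ring
    rw [h6]
    calc _ ≤ (Real.exp (ρ + 2*b) * Real.exp (ρ * t)) * CI := by gcongr
      _ = _ := by ring
  have hxi : IntegrableOn (fun t => Real.exp (-ρ * t) * (x t)^2) (Set.Ioi 0) := by
    apply integrableOn_Ioi_of_intervalIntegral_norm_bounded CI 0 (l := atTop) (b := id)
    · intro i
      exact hIc.integrableOn_Ioc
    · exact tendsto_id
    · filter_upwards [eventually_ge_atTop (0:ℝ)] with T hT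
      refine le_trans (le_of_eq ?_) (hIntX T hT)
      apply intervalIntegral.integral_congr
      intro r _
      simp only [Real.norm_eq_abs]
      exact abs_of_nonneg (by positivity)
  have hlogi : IntegrableOn (fun t => Real.exp (-ρ * t) * Real.log (u t)) (Set.Ioi 0) := by
    have := hobj.add (hxi.const_mul c)
    refine this.congr (ae_of_all _ ?_)
    intro r
    simp only [Pi.add_apply]
    ring
  have huD : ∀ T, 0 ≤ T → ∫ r in (0:ℝ)..T, Real.exp (-ρ * r) * u r ≤ D₂ := by
    intro T hT
    have h1 := h.uLe hF hx₀ ρ c hρ hc T hT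
    have h2 := hIntX T hT
    have h3 : Real.exp (-ρ * T) * x T ≤ D := by
      calc Real.exp (-ρ * T) * x T ≤ Real.exp (-ρ * T) * (D * Real.exp (ρ / 2 * T)) := by
            gcongr; exact hxD T hT
        _ = D * Real.exp (-ρ/2 * T) := by
            rw [mul_left_comm, ← Real.exp_add]; ring_nf
        _ ≤ D * 1 := by
            gcongr
            rw [Real.exp_le_one_iff]
            nlinarith
        _ = D := mul_one _
    have h4 : c / 2 * (∫ r in (0:ℝ)..T, Real.exp (-ρ * r) * (x r)^2) ≤ c / 2 * CI := by gcongr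
    linarith
  have hui : IntegrableOn (fun t => Real.exp (-ρ * t) * u t) (Set.Ioi 0) := by
    apply integrableOn_Ioi_of_intervalIntegral_norm_bounded D₂ 0 (l := atTop) (b := id)
    · intro i
      exact ((h.int _ _).continuousOn_mul (sl_expc _).continuousOn).1
    · exact tendsto_id
    · filter_upwards [eventually_ge_atTop (0:ℝ)] with T hT
      refine le_trans (le_of_eq ?_) (huD T hT)
      apply intervalIntegral.integral_congr
      intro r _
      simp only [Real.norm_eq_abs]
      have := h.pos r
      exact abs_of_nonneg (by positivity)
  refine ⟨hxi, hlogi, hui, hxD, ?_⟩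
  -- lower bound
  have hutot : ∫ t in Set.Ioi (0:ℝ), Real.exp (-ρ * t) * u t ≤ D₂ := by
    have htend := intervalIntegral_tendsto_integral_Ioi 0 hui tendsto_id
    apply le_of_tendsto htend
    filter_upwards [eventually_ge_atTop (0:ℝ)] with T hT using huD T hT
  have hJ : -K ≤ ∫ t in Set.Ioi (0:ℝ), Real.exp (-ρ * t) * Real.log (u t) := by
    have h1 : objective ρ c u x = (∫ t in Set.Ioi (0:ℝ), Real.exp (-ρ * t) * Real.log (u t))
        - ∫ t in Set.Ioi (0:ℝ), c * (Real.exp (-ρ * t) * (x t)^2) := by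
      rw [← integral_sub hlogi (hxi.const_mul c)]
      unfold objective
      congr 1; funext r; ring
    have h2 : 0 ≤ ∫ t in Set.Ioi (0:ℝ), c * (Real.exp (-ρ * t) * (x t)^2) :=
      setIntegral_nonneg measurableSet_Ioi (fun r _ => by positivity)
    linarith
  have hsplit : ∫ t in Set.Ioi (0:ℝ), Real.exp (-ρ * t) * Real.log (u t) =
      (∫ t in (0:ℝ)..1, Real.exp (-ρ * t) * Real.log (u t)) +
      ∫ t in Set.Ioi (1:ℝ), Real.exp (-ρ * t) * Real.log (u t) := by
    rw [intervalIntegral.integral_of_le zero_le_one, ← setIntegral_union]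
    · rw [Set.Ioc_union_Ioi_eq_Ioi zero_le_one]
    · exact Set.Ioc_disjoint_Ioi le_rfl
    · exact measurableSet_Ioi
    · exact hlogi.mono_set Set.Ioc_subset_Ioi_self
    · exact hlogi.mono_set (Set.Ioi_subset_Ioi zero_le_one)
  have htail : ∫ t in Set.Ioi (1:ℝ), Real.exp (-ρ * t) * Real.log (u t) ≤ D₂ := by
    refine le_trans ?_ hutot
    calc _ ≤ ∫ t in Set.Ioi (1:ℝ), Real.exp (-ρ * t) * u t := by
          apply integral_mono (hlogi.mono_set (Set.Ioi_subset_Ioi zero_le_one))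
            (hui.mono_set (Set.Ioi_subset_Ioi zero_le_one))
          intro r
          have := Real.log_le_sub_one_of_pos (h.pos r)
          have he := Real.exp_pos (-ρ * r)
          simp only
          nlinarith
      _ ≤ _ := by
          apply setIntegral_mono_set hui
          · exact ae_of_all _ (fun r => mul_nonneg (Real.exp_pos _).le (h.pos r).le)
          · exact (Set.Ioi_subset_Ioi zero_le_one).eventuallyLE
  have hJ1 : -K - D₂ ≤ ∫ t in (0:ℝ)..1, Real.exp (-ρ * t) * Real.log (u t) := by linarith
  have huint : IntervalIntegrable (fun t => Real.exp (-ρ * t) * u t) volume 0 1 :=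
    (h.int _ _).continuousOn_mul (sl_expc _).continuousOn
  have hJ2 : ∫ t in (0:ℝ)..1, Real.exp (-ρ * t) * Real.log (u t) ≤
      θ⁻¹ * (∫ t in (0:ℝ)..1, Real.exp (-ρ * t) * u t) + Real.log θ * ω := by
    rw [hω, ← intervalIntegral.integral_const_mul, ← intervalIntegral.integral_const_mul,
      ← intervalIntegral.integral_add (huint.const_mul _)
        (((sl_expc _).intervalIntegrable _ _).const_mul _)]
    apply intervalIntegral.integral_mono_on zero_le_one (hl 1 zero_le_one)
    · exact (huint.const_mul _).add (((sl_expc _).intervalIntegrable _ _).const_mul _)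
    · intro r _
      have h1 := Real.log_le_sub_one_of_pos (div_pos (h.pos r) hθp)
      rw [Real.log_div (h.pos r).ne' hθp.ne'] at h1
      have h2 : Real.log (u r) ≤ θ⁻¹ * u r + Real.log θ := by
        rw [div_eq_inv_mul] at h1; linarith
      have he := Real.exp_pos (-ρ * r)
      calc _ ≤ Real.exp (-ρ * r) * (θ⁻¹ * u r + Real.log θ) := by gcongr
        _ = _ := by ring
  have hlogθ : Real.log θ * ω = -(K + D₂ + 1) := by
    rw [hθ, Real.log_exp]; field_simp
  have hV : θ ≤ ∫ t in (0:ℝ)..1, Real.exp (-ρ * t) * u t := by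
    have : 1 ≤ θ⁻¹ * (∫ t in (0:ℝ)..1, Real.exp (-ρ * t) * u t) := by linarith
    rw [← div_eq_inv_mul, le_div_iff₀ hθp] at this
    linarith
  intro t ht
  have hm1 := h.mono hF hx₀ 0 1 le_rfl zero_le_one
  have hm2 := h.mono' hF hx₀ 1 t zero_le_one ht
  have hx0 := h.nonneg hF hx₀ 0 le_rfl
  have hV2 : ∫ t in (0:ℝ)..1, Real.exp (-ρ * t) * u t ≤ ∫ t in (0:ℝ)..1, Real.exp (b * t) * u t := by
    apply intervalIntegral.integral_mono_on zero_le_one huint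
      ((h.int _ _).continuousOn_mul (sl_expc _).continuousOn)
    intro r hr
    have := (h.pos r).le
    have hb := hF.bpos
    have hr0 := hr.1
    gcongr
    linarith
  simp only [mul_zero, Real.exp_zero, one_mul] at hm1
  linarith

end cons

section trunc
variable {F : ℝ → ℝ} {b x₀ : ℝ}

lemma sl_log_trunc (u N : ℝ) (hu : 0 < u) (hN : 0 < N) :
    Real.log u - max (u - N) 0 / N ≤ Real.log (u - max (u - N) 0) := by
  rcases le_total (u - N) 0 with h | h
  · rw [max_eq_right h]; simp
  · rw [max_eq_left h]
    have h1 := Real.log_le_sub_one_of_pos (div_pos hu hN)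
    rw [Real.log_div hu.ne' hN.ne'] at h1
    have h2 : u - (u - N) = N := by ring
    have h3 : (u - N) / N = u / N - 1 := by field_simp
    rw [h2, h3]
    linarith

lemma sl_trunc_ineq (ρ c θ A β : ℝ) (hb : 0 < b) (hρ : 0 < ρ) (hc : 0 < c) (hθ : 0 < θ)
    (hβ : β = ρ + 2 * b) (hA : A = β * (1 + Real.exp (2 * β)) / (c * θ))
    (w x Y : ℝ → ℝ) (hw0 : ∀ t, 0 ≤ w t) (hwi : ∀ p q, IntervalIntegrable w volume p q)
    (hx : Continuous x) (hY : Continuous Y) (hx0 : ∀ t, 0 ≤ t → 0 ≤ x t)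
    (hYeq : ∀ t, 0 ≤ t → Y t = 0 + ∫ s in (0:ℝ)..t, Real.exp (b * s) * w s)
    (hlow : ∀ t, 1 ≤ t → θ ≤ Real.exp (b * t) * x t) (T : ℝ) (hT : 2 ≤ T) :
    ∫ t in (0:ℝ)..T, Real.exp (-ρ * t) * (w t / (A * Real.exp (b * t))) ≤
      A⁻¹ * (Real.exp (-β * T) * Y T) +
      c * ∫ t in (0:ℝ)..T, Real.exp (-ρ * t) * (x t * (Real.exp (-b * t) * Y t)) := by
  have hβp : 0 < β := by rw [hβ]; positivity
  have hAp : 0 < A := by rw [hA]; positivity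
  have hvi : ∀ p q, IntervalIntegrable (fun s => Real.exp (b * s) * w s) volume p q :=
    fun p q => (hwi p q).continuousOn_mul (sl_expc _).continuousOn
  have hY0 : Y 0 = 0 := by simpa using hYeq 0 le_rfl
  have hYm : ∀ s t, 0 ≤ s → s ≤ t → Y s ≤ Y t := by
    intro s t hs hst
    rw [hYeq s hs, hYeq t (hs.trans hst),
      ← intervalIntegral.integral_add_adjacent_intervals (hvi 0 s) (hvi s t)]
    have : 0 ≤ ∫ r in s..t, Real.exp (b * r) * w r :=
      intervalIntegral.integral_nonneg hst (fun r _ => mul_nonneg (Real.exp_pos _).le (hw0 r))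
    linarith
  have hYp : ∀ t, 0 ≤ t → 0 ≤ Y t := fun t ht => by rw [← hY0]; exact hYm 0 t le_rfl ht
  have hi := sl_ibp (fun t => Real.exp (-β * t)) (fun t => -β * Real.exp (-β * t)) _ Y (sl_expd (-β))
    (by fun_prop) hvi 0 hYeq 0 T le_rfl (by linarith)
  set Q : ℝ → ℝ := fun t => Real.exp (-β * t) * Y t with hQ
  have hQc : Continuous Q := by fun_prop
  have e1 : ∫ t in (0:ℝ)..T, Real.exp (-ρ * t) * (w t / (A * Real.exp (b * t))) =
      A⁻¹ * (Real.exp (-β * T) * Y T + β * ∫ t in (0:ℝ)..T, Q t) := by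
    have h1 : ∫ r in (0:ℝ)..T, (-β * Real.exp (-β * r) * Y r + Real.exp (-β * r) * (Real.exp (b * r) * w r))
        = -β * (∫ t in (0:ℝ)..T, Q t) +
        ∫ r in (0:ℝ)..T, Real.exp (-β * r) * (Real.exp (b * r) * w r) := by
      rw [← intervalIntegral.integral_const_mul, ← intervalIntegral.integral_add]
      · congr 1; funext r; simp only [hQ]; ring
      · exact Continuous.intervalIntegrable (by fun_prop) _ _
      · exact (hvi _ _).continuousOn_mul (sl_expc _).continuousOn
    have h2 : ∫ t in (0:ℝ)..T, Real.exp (-ρ * t) * (w t / (A * Real.exp (b * t))) =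
        A⁻¹ * ∫ r in (0:ℝ)..T, Real.exp (-β * r) * (Real.exp (b * r) * w r) := by
      rw [← intervalIntegral.integral_const_mul]
      congr 1; funext r
      have h3 : Real.exp (-ρ * r) = Real.exp (-β * r) * Real.exp (b * r) * Real.exp (b * r) := by
        rw [← Real.exp_add, ← Real.exp_add, hβ]; congr 1; ring
      rw [h3]
      have := Real.exp_pos (b * r)
      field_simp
    rw [h2]
    congr 1
    simp only [hY0, mul_zero, sub_zero] at hi
    linarith
  have hQnn : ∀ t, 0 ≤ t → 0 ≤ Q t := fun t ht => mul_nonneg (Real.exp_pos _).le (hYp t ht)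
  have e2 : ∫ t in (0:ℝ)..T, Q t ≤ (1 + Real.exp (2 * β)) * ∫ t in (1:ℝ)..T, Q t := by
    rw [← intervalIntegral.integral_add_adjacent_intervals (hQc.intervalIntegrable 0 1)
      (hQc.intervalIntegrable 1 T)]
    have h1 : ∫ t in (0:ℝ)..1, Q t ≤ Y 1 := by
      have : ∫ t in (0:ℝ)..1, Y 1 = Y 1 := by simp
      rw [← this]
      apply intervalIntegral.integral_mono_on zero_le_one (hQc.intervalIntegrable _ _) (by simp)
      intro r hr
      have h1 : Real.exp (-β * r) ≤ 1 := by
        rw [Real.exp_le_one_iff]; nlinarith [hr.1]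
      have h2 := hYm r 1 hr.1 hr.2
      have h3 := hYp r hr.1
      simp only [hQ]
      nlinarith [Real.exp_pos (-β * r)]
    have h2 : Real.exp (-(2 * β)) * Y 1 ≤ ∫ t in (1:ℝ)..2, Q t := by
      have : ∫ t in (1:ℝ)..2, Real.exp (-(2 * β)) * Y 1 = Real.exp (-(2 * β)) * Y 1 := by
        rw [intervalIntegral.integral_const]; norm_num
      rw [← this]
      apply intervalIntegral.integral_mono_on (by norm_num) (by simp) (hQc.intervalIntegrable _ _)
      intro r hr
      have h2 := hYm 1 r zero_le_one hr.1
      have h3 := hYp 1 zero_le_one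
      simp only [hQ]
      gcongr
      nlinarith [hr.2]
    have h3 : ∫ t in (1:ℝ)..2, Q t ≤ ∫ t in (1:ℝ)..T, Q t := by
      rw [← intervalIntegral.integral_add_adjacent_intervals (hQc.intervalIntegrable 1 2)
        (hQc.intervalIntegrable 2 T)]
      have : 0 ≤ ∫ t in (2:ℝ)..T, Q t :=
        intervalIntegral.integral_nonneg hT (fun r hr => hQnn r (by linarith [hr.1]))
      linarith
    have h4 : Y 1 ≤ Real.exp (2 * β) * ∫ t in (1:ℝ)..T, Q t := by
      have h5 : Real.exp (2 * β) * (Real.exp (-(2 * β)) * Y 1) = Y 1 := by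
        rw [← mul_assoc, ← Real.exp_add]; simp
      rw [← h5]
      have := h2.trans h3
      gcongr
    linarith
  have hRc : Continuous (fun t => Real.exp (-ρ * t) * (x t * (Real.exp (-b * t) * Y t))) := by
    fun_prop
  have e3 : θ * ∫ t in (1:ℝ)..T, Q t ≤
      ∫ t in (0:ℝ)..T, Real.exp (-ρ * t) * (x t * (Real.exp (-b * t) * Y t)) := by
    have h1 : θ * ∫ t in (1:ℝ)..T, Q t ≤
      ∫ t in (1:ℝ)..T, Real.exp (-ρ * t) * (x t * (Real.exp (-b * t) * Y t)) := by
      rw [← intervalIntegral.integral_const_mul]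
      apply intervalIntegral.integral_mono_on (by linarith)
        (Continuous.intervalIntegrable (by fun_prop) _ _) (hRc.intervalIntegrable _ _)
      intro r hr
      have h2 := hlow r hr.1
      have h3 : Real.exp (-ρ * r) * (x r * (Real.exp (-b * r) * Y r)) =
          (Real.exp (b * r) * x r) * Q r := by
        have : Real.exp (-β * r) = Real.exp (-ρ * r) * Real.exp (-b * r) * Real.exp (-b * r) := by
          rw [← Real.exp_add, ← Real.exp_add, hβ]; congr 1; ring
        have h4 : Real.exp (-b * r) * Real.exp (b * r) = 1 := by
          rw [← Real.exp_add]; simp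
        simp only [hQ]
        rw [this]
        linear_combination (-Real.exp (-ρ * r) * x r * Real.exp (-b * r) * Y r) * h4
      rw [h3]
      exact mul_le_mul_of_nonneg_right h2 (hQnn r (by linarith [hr.1]))
    rw [← intervalIntegral.integral_add_adjacent_intervals (hRc.intervalIntegrable 0 1)
        (hRc.intervalIntegrable 1 T)]
    have : 0 ≤ ∫ t in (0:ℝ)..1, Real.exp (-ρ * t) * (x t * (Real.exp (-b * t) * Y t)) := by
      apply intervalIntegral.integral_nonneg zero_le_one
      intro r hr
      have := hYp r hr.1
      have := hx0 r hr.1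
      positivity
    linarith
  rw [e1, mul_add]
  have e4 : A⁻¹ * (β * ∫ t in (0:ℝ)..T, Q t) ≤
      c * ∫ t in (0:ℝ)..T, Real.exp (-ρ * t) * (x t * (Real.exp (-b * t) * Y t)) := by
    calc A⁻¹ * (β * ∫ t in (0:ℝ)..T, Q t)
        ≤ A⁻¹ * (β * ((1 + Real.exp (2 * β)) * ∫ t in (1:ℝ)..T, Q t)) := by gcongr
      _ = c * (θ * ∫ t in (1:ℝ)..T, Q t) := by rw [hA]; field_simp
      _ ≤ _ := by gcongr
  linarith

end trunc

section trunc2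
variable {F : ℝ → ℝ} {b x₀ : ℝ}

lemma sl_expi (ρ : ℝ) (hρ : 0 < ρ) :
    IntegrableOn (fun t => Real.exp (-ρ * t)) (Set.Ioi 0) :=
  exp_neg_integrableOn_Ioi 0 hρ

lemma sl_trunc (hF : FH F b) (hx₀ : 0 ≤ x₀) (ρ c : ℝ) (hρ : 0 < ρ) (hc : 0 < c) (K : ℝ) (hK : 0 ≤ K) :
    ∃ P : ℝ, 0 < P ∧ ∀ u x : ℝ → ℝ, Nice F x₀ u x → ObjIntegrable ρ c u x →
      -K ≤ objective ρ c u x →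
      ∃ u' x' : ℝ → ℝ, Nice F x₀ u' x' ∧ ObjIntegrable ρ c u' x' ∧
        objective ρ c u x ≤ objective ρ c u' x' ∧
        (∀ t, 0 ≤ t → u' t ≤ P * Real.exp ((b + ρ) * t)) ∧
        (∀ t, 0 ≤ t → x' t ≤ P * Real.exp ((b + ρ) * t)) := by
  obtain ⟨D, θ, hD, hθ, hcons⟩ := sl_cons hF hx₀ ρ c hρ hc K hK
  have hb := hF.bpos
  obtain ⟨β, hβ⟩ : ∃ β, β = ρ + 2 * b := ⟨_, rfl⟩
  obtain ⟨A, hA⟩ : ∃ A, A = β * (1 + Real.exp (2 * β)) / (c * θ) := ⟨_, rfl⟩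
  have hβp : 0 < β := by rw [hβ]; positivity
  have hAp : 0 < A := by rw [hA]; positivity
  refine ⟨A + b * D + D, by positivity, ?_⟩
  intro u x h hobj hge
  obtain ⟨hxi, hlogi, hui, hxD, hlow⟩ := hcons u x h hobj hge
  have hxc := h.cont
  have hFc := hF.cont
  have hum := h.meas
  set w : ℝ → ℝ := fun t => max (u t - A * Real.exp (b * t)) 0 with hw
  have hw0 : ∀ t, 0 ≤ w t := fun t => le_max_right _ _
  have hwu : ∀ t, w t ≤ u t := fun t => max_le (by have := Real.exp_pos (b * t); nlinarith) (h.pos t).le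
  have hwlt : ∀ t, 0 < u t - w t := by
    intro t
    have := Real.exp_pos (b * t)
    have h1 : 0 < A * Real.exp (b * t) := by positivity
    simp only [hw]
    rcases le_total (u t - A * Real.exp (b * t)) 0 with h2 | h2
    · rw [max_eq_right h2]; simpa using h.pos t
    · rw [max_eq_left h2]; linarith
  have hwN : ∀ t, u t - w t ≤ A * Real.exp (b * t) := by
    intro t
    have : u t - A * Real.exp (b * t) ≤ w t := le_max_left _ _
    linarith
  have hwm : Measurable w := by
    apply Measurable.max _ measurable_const
    fun_prop
  have hwi : ∀ p q, IntervalIntegrable w volume p q := by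
    intro p q
    apply (h.int p q).mono_fun hwm.aestronglyMeasurable
    refine ae_of_all _ (fun t => ?_)
    beta_reduce
    rw [Real.norm_eq_abs, Real.norm_eq_abs, abs_of_nonneg (hw0 t), abs_of_pos (h.pos t)]
    exact hwu t
  have hvi : ∀ p q, IntervalIntegrable (fun s => Real.exp (b * s) * w s) volume p q :=
    fun p q => (hwi p q).continuousOn_mul (sl_expc _).continuousOn
  set Y : ℝ → ℝ := fun t => ∫ s in (0:ℝ)..(max t 0), Real.exp (b * s) * w s with hY
  have hYc : Continuous Y :=
    (intervalIntegral.continuous_primitive hvi 0).comp (continuous_id.max continuous_const)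
  have hYeq : ∀ t, 0 ≤ t → Y t = 0 + ∫ s in (0:ℝ)..t, Real.exp (b * s) * w s := by
    intro t ht
    simp only [hY, max_eq_left ht, zero_add]
  have hYp : ∀ t, 0 ≤ Y t := fun t =>
    intervalIntegral.integral_nonneg (le_max_right _ _)
      (fun r _ => mul_nonneg (Real.exp_pos _).le (hw0 r))
  set y : ℝ → ℝ := fun t => Real.exp (-b * t) * Y t with hy
  have hyc : Continuous y := by fun_prop
  have hyp : ∀ t, 0 ≤ y t := fun t => mul_nonneg (Real.exp_pos _).le (hYp t)
  have hyeq : ∀ t, 0 ≤ t → y t = ∫ s in (0:ℝ)..t, (w s - b * y s) := by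
    intro t ht
    have hi := sl_ibp (fun t => Real.exp (-b * t)) (fun t => -b * Real.exp (-b * t)) _ Y
      (sl_expd (-b)) (by fun_prop) hvi 0 hYeq 0 t le_rfl ht
    have hY0 : Y 0 = 0 := by simpa using hYeq 0 le_rfl
    rw [hY0, mul_zero, sub_zero] at hi
    change y t = _ at hi
    rw [hi]
    congr 1; funext r
    have : Real.exp (-b * r) * Real.exp (b * r) = 1 := by rw [← Real.exp_add]; simp
    simp only [hy]
    linear_combination (w r) * this
  set x' : ℝ → ℝ := fun t => x t - y t with hx'
  set u' : ℝ → ℝ := fun t => u t - w t + b * y t + F (x t) - F (x t - y t) with hu'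
  have hFlow : ∀ t, 0 ≤ b * y t + F (x t) - F (x t - y t) := by
    intro t
    have := hF.lip (x t - y t) (x t) (by linarith [hyp t])
    nlinarith
  have hFup : ∀ t, F (x t) - F (x t - y t) ≤ 0 := by
    intro t
    have := hF.anti (x t - y t) (x t) (by linarith [hyp t])
    linarith
  have hu'm : Measurable u' := by
    have h1 : Continuous (fun t => b * y t + F (x t) - F (x t - y t)) := by fun_prop
    have h2 := (hum.sub hwm).add h1.measurable
    convert h2 using 1
    funext t; simp only [hu', Pi.add_apply, Pi.sub_apply]; ring
  have hcorr : Continuous (fun t => b * y t + F (x t) - F (x t - y t)) := by fun_prop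
  have hN' : Nice F x₀ u' x' := by
    refine ⟨hu'm, ?_, ?_, by fun_prop, ?_⟩
    · intro t
      have := hwlt t; have := hFlow t
      simp only [hu']; linarith
    · intro p q
      have := ((h.int p q).sub (hwi p q)).add (hcorr.intervalIntegrable p q)
      refine this.congr ?_
      intro t _
      simp only [hu']; ring
    · intro t ht
      simp only [hx']
      rw [h.eq t ht, hyeq t ht, add_sub_assoc, ← intervalIntegral.integral_sub (h.intv hF 0 t)]
      · congr 2; funext r; simp only [hu']; ring
      · exact (hwi _ _).sub (Continuous.intervalIntegrable (by fun_prop) _ _)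
  have hx'0 : ∀ t, 0 ≤ t → 0 ≤ x' t := fun t ht => hN'.nonneg hF hx₀ t ht
  have hyx : ∀ t, 0 ≤ t → y t ≤ x t := fun t ht => by
    have := hx'0 t ht; simp only [hx'] at this; linarith
  -- pointwise inequality
  have hpt : ∀ t, 0 ≤ t → Real.exp (-ρ * t) * (Real.log (u t) - c * (x t)^2)
      + c * (Real.exp (-ρ * t) * (x t * y t)) -
      Real.exp (-ρ * t) * (w t / (A * Real.exp (b * t))) ≤
      Real.exp (-ρ * t) * (Real.log (u' t) - c * (x' t)^2) := by
    intro t ht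
    have h1 := sl_log_trunc (u t) (A * Real.exp (b * t)) (h.pos t) (by positivity)
    have h2 : Real.log (u t - w t) ≤ Real.log (u' t) := by
      apply Real.log_le_log (hwlt t)
      have := hFlow t
      simp only [hu']; linarith
    have h3 : x t * y t ≤ (x t)^2 - (x' t)^2 := by
      have := hyx t ht; have := hyp t
      simp only [hx']; nlinarith
    have h4 : Real.log (u t) - c * (x t)^2 + c * (x t * y t) - w t / (A * Real.exp (b * t)) ≤
        Real.log (u' t) - c * (x' t)^2 := by
      change Real.log (u t) - w t / _ ≤ Real.log (u t - w t) at h1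
      nlinarith
    have he := Real.exp_pos (-ρ * t)
    calc _ = Real.exp (-ρ * t) * (Real.log (u t) - c * (x t)^2 + c * (x t * y t)
          - w t / (A * Real.exp (b * t))) := by ring
      _ ≤ _ := by gcongr
  have hxyi : IntegrableOn (fun t => Real.exp (-ρ * t) * (x t * y t)) (Set.Ioi 0) := by
    apply Integrable.mono' hxi
    · exact Continuous.aestronglyMeasurable (by fun_prop)
    · refine (ae_restrict_mem measurableSet_Ioi).mono (fun t ht => ?_)
      have ht0 : 0 ≤ t := le_of_lt ht
      have h1 := hyx t ht0; have h2 := hyp t; have h3 := h.nonneg hF hx₀ t ht0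
      rw [Real.norm_eq_abs, abs_of_nonneg (by positivity), sq]
      gcongr
  have hwNi : IntegrableOn (fun t => Real.exp (-ρ * t) * (w t / (A * Real.exp (b * t))))
      (Set.Ioi 0) := by
    apply Integrable.mono' (hui.const_mul A⁻¹)
    · exact Measurable.aestronglyMeasurable (by fun_prop)
    · refine (ae_restrict_mem measurableSet_Ioi).mono (fun t ht => ?_)
      have ht0 : 0 ≤ t := le_of_lt ht
      have h1 := hw0 t; have h2 := hwu t; have h0 := (h.pos t).le
      have h3 : 1 ≤ Real.exp (b * t) := Real.one_le_exp (by positivity)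
      rw [Real.norm_eq_abs, abs_of_nonneg (by positivity)]
      have h4 : w t / (A * Real.exp (b * t)) ≤ u t / (A * 1) := by gcongr
      calc _ ≤ Real.exp (-ρ * t) * (u t / (A * 1)) := by gcongr
        _ = _ := by field_simp
  have hxi1 : IntegrableOn (fun t => Real.exp (-ρ * t) * x t) (Set.Ioi 0) := by
    apply Integrable.mono' ((sl_expi ρ hρ).add hxi)
    · exact Continuous.aestronglyMeasurable (by fun_prop)
    · refine ae_of_all _ (fun t => ?_)
      rw [Real.norm_eq_abs, abs_mul, abs_of_pos (Real.exp_pos _)]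
      simp only [Pi.add_apply]
      have : |x t| ≤ 1 + (x t)^2 := by
        rw [abs_le]; constructor <;> nlinarith [sq_nonneg (x t - 1), sq_nonneg (x t + 1)]
      have he := Real.exp_pos (-ρ * t)
      nlinarith
  have hlowi : IntegrableOn (fun t => Real.exp (-ρ * t) * (Real.log (u t) - c * (x t)^2)
      + c * (Real.exp (-ρ * t) * (x t * y t)) -
      Real.exp (-ρ * t) * (w t / (A * Real.exp (b * t)))) (Set.Ioi 0) :=
    (hobj.add (hxyi.const_mul c)).sub hwNi
  have hobj' : ObjIntegrable ρ c u' x' := by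
    unfold ObjIntegrable
    refine integrable_of_le_of_le (g₁ := fun t => Real.exp (-ρ * t) * (Real.log (u t) - c * (x t)^2)
      + c * (Real.exp (-ρ * t) * (x t * y t)) -
      Real.exp (-ρ * t) * (w t / (A * Real.exp (b * t))))
      (g₂ := fun t => Real.exp (-ρ * t) * u t + b * (Real.exp (-ρ * t) * x t)) ?_ ?_ ?_ hlowi
      (hui.add (hxi1.const_mul b))
    · have : Measurable x' := hN'.cont.measurable
      exact Measurable.aestronglyMeasurable (by fun_prop)
    · exact (ae_restrict_mem measurableSet_Ioi).mono (fun t ht => hpt t (le_of_lt ht))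
    · refine (ae_restrict_mem measurableSet_Ioi).mono (fun t ht => ?_)
      have ht0 : 0 ≤ t := le_of_lt ht
      have h1 := Real.log_le_sub_one_of_pos (hN'.pos t)
      have h2 := hFup t
      have h3 := hyx t ht0
      have h5 := hw0 t
      have h4 : u' t ≤ u t + b * x t := by
        simp only [hu']; nlinarith
      have he := Real.exp_pos (-ρ * t)
      calc Real.exp (-ρ * t) * (Real.log (u' t) - c * (x' t)^2) ≤
          Real.exp (-ρ * t) * (u t + b * x t) := by
            gcongr
            have : 0 ≤ c * (x' t)^2 := by positivity
            linarith
        _ = _ := by ring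
  refine ⟨u', x', hN', hobj', ?_, ?_, ?_⟩
  · have hle : ∫ t in Set.Ioi (0:ℝ), Real.exp (-ρ * t) * (w t / (A * Real.exp (b * t))) ≤
        c * ∫ t in Set.Ioi (0:ℝ), Real.exp (-ρ * t) * (x t * y t) := by
      have t1 := intervalIntegral_tendsto_integral_Ioi 0 hwNi tendsto_id
      have t2 := intervalIntegral_tendsto_integral_Ioi 0 hxyi tendsto_id
      have t3 : Tendsto (fun T : ℝ => A⁻¹ * (D * Real.exp (-(ρ / 2 * T)))) atTop (nhds 0) := by
        have : Tendsto (fun T : ℝ => Real.exp (-(ρ / 2 * T))) atTop (nhds 0) :=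
          Real.tendsto_exp_neg_atTop_nhds_zero.comp
            (tendsto_id.const_mul_atTop (by positivity : 0 < ρ / 2))
        simpa using (this.const_mul D).const_mul A⁻¹
      have t4 := t3.add (t2.const_mul c)
      rw [zero_add] at t4
      refine le_of_tendsto_of_tendsto t1 t4 ?_
      filter_upwards [eventually_ge_atTop (2:ℝ)] with T hT
      have hT0 : 0 ≤ T := by linarith
      have h1 := sl_trunc_ineq ρ c θ A β hb hρ hc hθ hβ hA w x Y hw0 hwi hxc hYc
        (h.nonneg hF hx₀) hYeq hlow T hT
      have h2 : Real.exp (-β * T) * Y T ≤ D * Real.exp (-(ρ / 2 * T)) := by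
        have h3 : Real.exp (-β * T) * Y T = Real.exp (-(ρ + b) * T) * y T := by
          simp only [hy]
          rw [← mul_assoc, ← Real.exp_add, hβ]; congr 2; ring
        rw [h3]
        calc Real.exp (-(ρ + b) * T) * y T ≤ Real.exp (-ρ * T) * (D * Real.exp (ρ / 2 * T)) := by
              apply mul_le_mul _ ((hyx T hT0).trans (hxD T hT0)) (hyp T) (Real.exp_pos _).le
              apply Real.exp_le_exp.2
              nlinarith
          _ = _ := by
              rw [mul_left_comm, ← Real.exp_add]; congr 2; ring
      refine h1.trans ?_
      simp only [id]
      gcongr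
    have hm := setIntegral_mono_on hlowi hobj' measurableSet_Ioi (fun t ht => hpt t (le_of_lt ht))
    have hs : ∫ t in Set.Ioi (0:ℝ), (Real.exp (-ρ * t) * (Real.log (u t) - c * (x t)^2)
      + c * (Real.exp (-ρ * t) * (x t * y t)) -
      Real.exp (-ρ * t) * (w t / (A * Real.exp (b * t)))) = objective ρ c u x +
        c * (∫ t in Set.Ioi (0:ℝ), Real.exp (-ρ * t) * (x t * y t)) -
        ∫ t in Set.Ioi (0:ℝ), Real.exp (-ρ * t) * (w t / (A * Real.exp (b * t))) := by
      rw [integral_sub, integral_add, integral_const_mul]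
      · rfl
      · exact hobj
      · exact hxyi.const_mul c
      · exact hobj.add (hxyi.const_mul c)
      · exact hwNi
    rw [hs] at hm
    change _ ≤ objective ρ c u' x' at hm
    linarith
  · intro t ht
    have h1 := hwN t; have h2 := hFup t; have h3 := hyx t ht; have h4 := hxD t ht
    have e1 : Real.exp (b * t) ≤ Real.exp ((b + ρ) * t) := Real.exp_le_exp.2 (by nlinarith)
    have e2 : Real.exp (ρ / 2 * t) ≤ Real.exp ((b + ρ) * t) := Real.exp_le_exp.2 (by nlinarith)
    calc u' t ≤ A * Real.exp (b * t) + b * (D * Real.exp (ρ / 2 * t)) := by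
          simp only [hu']; nlinarith
      _ ≤ A * Real.exp ((b + ρ) * t) + b * (D * Real.exp ((b + ρ) * t)) := by gcongr
      _ ≤ _ := by nlinarith [Real.exp_pos ((b + ρ) * t)]
  · intro t ht
    have h4 := hxD t ht
    have e2 : Real.exp (ρ / 2 * t) ≤ Real.exp ((b + ρ) * t) := Real.exp_le_exp.2 (by nlinarith)
    have h5 := hyp t
    calc x' t ≤ D * Real.exp (ρ / 2 * t) := by simp only [hx']; linarith
      _ ≤ D * Real.exp ((b + ρ) * t) := by gcongr
      _ ≤ (A + b * D + D) * Real.exp ((b + ρ) * t) := by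
        gcongr
        have : 0 < b * D := by positivity
        linarith

end trunc2

lemma sl_poly_approx (T : ℝ) (hT : 0 ≤ T) (h : ℝ → ℝ) (hh : IntervalIntegrable h volume 0 T)
    (ε : ℝ) (hε : 0 < ε) :
    ∃ p : Polynomial ℝ, ∫ t in (0:ℝ)..T, |h t - p.eval t| ≤ ε := by
  have hh' : Integrable h (volume.restrict (Set.Ioc 0 T)) :=
    (intervalIntegrable_iff_integrableOn_Ioc_of_le hT).1 hh
  obtain ⟨g, -, hg1, hgc, hgi⟩ := hh'.exists_hasCompactSupport_integral_sub_le (half_pos hε)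
  have hd : 0 < ε / (2 * (T + 1)) := by positivity
  obtain ⟨p, hp⟩ := exists_polynomial_near_of_continuousOn 0 T g hgc.continuousOn _ hd
  refine ⟨p, ?_⟩
  have hpc : Continuous (fun t => p.eval t) := p.continuous
  have hgI : IntervalIntegrable g volume 0 T := hgc.intervalIntegrable _ _
  have i1 : IntervalIntegrable (fun t => |h t - g t|) volume 0 T := (hh.sub hgI).abs
  have i2 : IntervalIntegrable (fun t => |g t - p.eval t|) volume 0 T :=
    Continuous.intervalIntegrable (by fun_prop) _ _
  have h1 : ∫ t in (0:ℝ)..T, |h t - g t| ≤ ε / 2 := by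
    rw [intervalIntegral.integral_of_le hT]
    exact hg1
  have h2 : ∫ t in (0:ℝ)..T, |g t - p.eval t| ≤ ε / 2 := by
    calc ∫ t in (0:ℝ)..T, |g t - p.eval t| ≤ ∫ t in (0:ℝ)..T, ε / (2 * (T + 1)) := by
          apply intervalIntegral.integral_mono_on hT i2 (by simp)
          intro t ht
          rw [abs_sub_comm]
          exact (hp t ht).le
      _ = T * (ε / (2 * (T + 1))) := by
          rw [intervalIntegral.integral_const, sub_zero, smul_eq_mul]
      _ ≤ (T + 1) * (ε / (2 * (T + 1))) := by gcongr; linarith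
      _ = ε / 2 := by field_simp
  calc ∫ t in (0:ℝ)..T, |h t - p.eval t| ≤
      ∫ t in (0:ℝ)..T, (|h t - g t| + |g t - p.eval t|) := by
        apply intervalIntegral.integral_mono_on hT _ (i1.add i2)
        · intro t _; exact abs_sub_le _ _ _
        · exact (hh.sub (hpc.intervalIntegrable _ _)).abs
    _ = _ := intervalIntegral.integral_add i1 i2
    _ ≤ ε := by linarith

lemma sl_weak (T : ℝ) (hT : 0 ≤ T) (C : ℝ) (d : ℕ → ℝ → ℝ)
    (hdi : ∀ n p q, IntervalIntegrable (d n) volume p q)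
    (hC : ∀ n t, 0 ≤ t → t ≤ T → |d n t| ≤ C)
    (hlim : ∀ t, 0 ≤ t → t ≤ T → Tendsto (fun n => ∫ s in (0:ℝ)..t, d n s) atTop (nhds 0))
    (h : ℝ → ℝ) (hh : IntervalIntegrable h volume 0 T) 
    (hhd : ∀ n, IntervalIntegrable (fun t => h t * d n t) volume 0 T) :
    Tendsto (fun n => ∫ t in (0:ℝ)..T, h t * d n t) atTop (nhds 0) := by
  have hC0 : 0 ≤ C := (abs_nonneg _).trans (hC 0 0 le_rfl hT)
  have hpoly : ∀ p : Polynomial ℝ, Tendsto (fun n => ∫ t in (0:ℝ)..T, p.eval t * d n t) atTop (nhds 0) := by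
    intro p
    have hpc : Continuous (fun t => p.eval t) := p.continuous
    have hpc' : Continuous (fun t => p.derivative.eval t) := p.derivative.continuous
    have hVc : ∀ n, Continuous (fun t => ∫ s in (0:ℝ)..t, d n s) := fun n =>
      intervalIntegral.continuous_primitive (hdi n) 0
    have e : ∀ n, ∫ t in (0:ℝ)..T, p.eval t * d n t = p.eval T * (∫ s in (0:ℝ)..T, d n s) -
        ∫ t in (0:ℝ)..T, p.derivative.eval t * ∫ s in (0:ℝ)..t, d n s := by
      intro n
      have := sl_ibp (fun t => p.eval t) (fun t => p.derivative.eval t) (d n)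
        (fun t => ∫ s in (0:ℝ)..t, d n s) (fun t => p.hasDerivAt t) hpc' (hdi n) 0
        (fun t _ => by simp) 0 T le_rfl hT
      simp only [intervalIntegral.integral_same, mul_zero, sub_zero] at this
      have hcc := hVc n
      rw [this, intervalIntegral.integral_add]
      · ring
      · exact (hpc'.mul hcc).intervalIntegrable _ _
      · exact (hdi n 0 T).continuousOn_mul hpc.continuousOn
    simp_rw [e]
    have t1 := (hlim T hT le_rfl).const_mul (p.eval T)
    have t2 : Tendsto (fun n => ∫ t in (0:ℝ)..T, p.derivative.eval t * ∫ s in (0:ℝ)..t, d n s)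
        atTop (nhds (∫ t in (0:ℝ)..T, p.derivative.eval t * 0)) := by
      apply intervalIntegral.tendsto_integral_filter_of_dominated_convergence
        (fun t => |p.derivative.eval t| * (C * T))
      · refine Eventually.of_forall (fun n => ?_)
        exact (hpc'.mul (hVc n)).aestronglyMeasurable
      · refine Eventually.of_forall (fun n => ae_of_all _ (fun t ht => ?_))
        rw [Set.uIoc_of_le hT] at ht
        rw [norm_mul, Real.norm_eq_abs]
        gcongr
        calc ‖∫ s in (0:ℝ)..t, d n s‖ ≤ C * |t - 0| := by
              apply intervalIntegral.norm_integral_le_of_norm_le_const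
              intro s hs
              rw [Set.uIoc_of_le ht.1.le] at hs
              exact hC n s hs.1.le (hs.2.trans ht.2)
          _ ≤ C * T := by
              rw [sub_zero, abs_of_pos ht.1]
              gcongr
              exact ht.2
      · exact Continuous.intervalIntegrable (by fun_prop) _ _
      · refine ae_of_all _ (fun t ht => ?_)
        rw [Set.uIoc_of_le hT] at ht
        exact (hlim t ht.1.le ht.2).const_mul _
    have := t1.sub t2
    simpa using this
  rw [Metric.tendsto_atTop]
  intro ε hε
  obtain ⟨p, hp⟩ := sl_poly_approx T hT h hh (ε / (2 * (C + 1))) (by positivity)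
  obtain ⟨N, hN⟩ := Metric.tendsto_atTop.1 (hpoly p) (ε / 2) (half_pos hε)
  refine ⟨N, fun n hn => ?_⟩
  have h1 := hN n hn
  rw [Real.dist_eq, sub_zero] at h1 ⊢
  have hpc : Continuous (fun t => p.eval t) := p.continuous
  have ipd : IntervalIntegrable (fun t => p.eval t * d n t) volume 0 T :=
    (hdi n 0 T).continuousOn_mul hpc.continuousOn
  have ihp : IntervalIntegrable (fun t => |h t - p.eval t|) volume 0 T :=
    (hh.sub (hpc.intervalIntegrable _ _)).abs
  have e1 : ∫ t in (0:ℝ)..T, h t * d n t = (∫ t in (0:ℝ)..T, (h t - p.eval t) * d n t) +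
      ∫ t in (0:ℝ)..T, p.eval t * d n t := by
    rw [← intervalIntegral.integral_add _ ipd]
    · congr 1; funext t; ring
    · refine ((hhd n).sub ipd).congr ?_
      intro t _; simp only []; ring
  have h2 : |∫ t in (0:ℝ)..T, (h t - p.eval t) * d n t| ≤ C * (ε / (2 * (C + 1))) := by
    calc |∫ t in (0:ℝ)..T, (h t - p.eval t) * d n t| ≤ ∫ t in (0:ℝ)..T, C * |h t - p.eval t| := by
          rw [← Real.norm_eq_abs]
          apply intervalIntegral.norm_integral_le_of_norm_le hT
          · refine ae_of_all _ (fun t ht => ?_)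
            rw [norm_mul, Real.norm_eq_abs, Real.norm_eq_abs, mul_comm]
            gcongr
            exact hC n t ht.1.le ht.2
          · exact ihp.const_mul C
      _ = C * ∫ t in (0:ℝ)..T, |h t - p.eval t| := by rw [intervalIntegral.integral_const_mul]
      _ ≤ _ := by gcongr
  have h3 : C * (ε / (2 * (C + 1))) ≤ ε / 2 := by
    rw [mul_div_assoc', div_le_div_iff₀ (by positivity) (by positivity)]
    nlinarith
  rw [e1]
  calc _ ≤ |∫ t in (0:ℝ)..T, (h t - p.eval t) * d n t| + |∫ t in (0:ℝ)..T, p.eval t * d n t| :=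
        abs_add_le _ _
    _ < ε := by linarith

section limit
variable {F : ℝ → ℝ} {b x₀ : ℝ}

lemma sl_lip (hF : FH F b) (hx₀ : 0 ≤ x₀) (P κ : ℝ) (hP : 0 < P) (hκ : 0 < κ) (u x : ℝ → ℝ)
    (h : Nice F x₀ u x) (hu : ∀ t, 0 ≤ t → u t ≤ P * Real.exp (κ * t))
    (hx : ∀ t, 0 ≤ t → x t ≤ P * Real.exp (κ * t)) (s t T : ℝ) (hs : s ≤ T) (ht : t ≤ T) :
    |x (max t 0) - x (max s 0)| ≤ (b + 1) * P * Real.exp (κ * max T 0) * |t - s| := by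
  wlog hst : s ≤ t generalizing s t
  · rw [abs_sub_comm, abs_sub_comm t s]
    exact this t s ht hs (le_of_not_ge hst)
  have hb := hF.bpos
  set s' := max s 0 with hs'
  set t' := max t 0 with ht'
  have h0 : 0 ≤ s' := le_max_right _ _
  have hst' : s' ≤ t' := max_le_max_right 0 hst
  rw [h.sub hF s' t' h0 hst', ← Real.norm_eq_abs]
  have hdist : |t' - s'| ≤ |t - s| := abs_max_sub_max_le_abs t s 0
  have h1 : ‖∫ r in s'..t', (F (x r) + u r)‖ ≤ (b + 1) * P * Real.exp (κ * max T 0) * |t' - s'| := by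
    apply intervalIntegral.norm_integral_le_of_norm_le_const
    intro r hr
    rw [Set.uIoc_of_le hst'] at hr
    have hr0 : 0 ≤ r := h0.trans hr.1.le
    have hrT : r ≤ max T 0 := hr.2.trans (max_le_max_right 0 ht)
    have a1 := hF.ge0 (h.nonneg hF hx₀ r hr0)
    have a2 := hF.le0 (h.nonneg hF hx₀ r hr0)
    have a3 := h.pos r
    have e : Real.exp (κ * r) ≤ Real.exp (κ * max T 0) := by gcongr
    have a4 : u r ≤ P * Real.exp (κ * max T 0) := (hu r hr0).trans (by gcongr)
    have a5 : x r ≤ P * Real.exp (κ * max T 0) := (hx r hr0).trans (by gcongr)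
    have a6 : b * x r ≤ b * (P * Real.exp (κ * max T 0)) := by gcongr
    have a7 : 0 < P * Real.exp (κ * max T 0) := by positivity
    have a8 : 0 < b * (P * Real.exp (κ * max T 0)) := by positivity
    rw [Real.norm_eq_abs, abs_le]
    constructor <;> nlinarith
  refine h1.trans ?_
  gcongr

lemma sl_limit (hF : FH F b) (hx₀ : 0 ≤ x₀) (P κ : ℝ) (hP : 0 < P) (hκ : 0 < κ) (un xn : ℕ → ℝ → ℝ)
    (h : ∀ n, Nice F x₀ (un n) (xn n)) (hu : ∀ n t, 0 ≤ t → un n t ≤ P * Real.exp (κ * t))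
    (hx : ∀ n t, 0 ≤ t → xn n t ≤ P * Real.exp (κ * t)) :
    ∃ (φ : ℕ → ℕ) (u x : ℝ → ℝ), StrictMono φ ∧ Measurable u ∧
      (∀ t, 0 ≤ u t ∧ u t ≤ P * Real.exp (κ * t)) ∧
      (∀ p q, IntervalIntegrable u volume p q) ∧ Continuous x ∧
      (∀ t, 0 ≤ t → x t = x₀ + ∫ s in (0:ℝ)..t, (F (x s) + u s)) ∧
      (∀ t, 0 ≤ t → Tendsto (fun n => xn (φ n) t) atTop (nhds (x t))) ∧
      (∀ t, 0 ≤ t → Tendsto (fun n => ∫ s in (0:ℝ)..t, un (φ n) s) atTop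
        (nhds (∫ s in (0:ℝ)..t, u s))) := by
  have hb := hF.bpos
  have hFc := hF.cont
  -- extraction
  obtain ⟨l, -, φ, hφ, hl⟩ := (isCompact_univ_pi (fun q : ℚ =>
    isCompact_Icc (a := (0:ℝ)) (b := P * Real.exp (κ * max (q:ℝ) 0)))).tendsto_subseq
    (x := fun n => fun q : ℚ => xn n (max (q:ℝ) 0)) (fun n q _ =>
      ⟨(h n).nonneg hF hx₀ _ (le_max_right _ _), hx n _ (le_max_right _ _)⟩)
  rw [tendsto_pi_nhds] at hl
  have hconv : ∀ t : ℝ, ∃ L, Tendsto (fun n => xn (φ n) (max t 0)) atTop (nhds L) := by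
    intro t
    apply cauchySeq_tendsto_of_complete
    rw [Metric.cauchySeq_iff']
    intro ε hε
    set Λ := (b + 1) * P * Real.exp (κ * max (t + 1) 0) with hΛ
    have hΛp : 0 < Λ := by positivity
    obtain ⟨q, hq1, hq2⟩ := exists_rat_btwn (show t < t + min 1 (ε / (4 * Λ)) by
      have : 0 < min 1 (ε / (4 * Λ)) := lt_min one_pos (by positivity)
      linarith)
    have hq3 : (q:ℝ) ≤ t + 1 := hq2.le.trans (by have := min_le_left 1 (ε / (4 * Λ)); linarith)
    have hq4 : |t - q| ≤ ε / (4 * Λ) := by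
      rw [abs_sub_comm, abs_of_pos (by linarith)]
      have := min_le_right 1 (ε / (4 * Λ)); linarith
    obtain ⟨N, hN⟩ := Metric.cauchySeq_iff'.1 (hl q).cauchySeq (ε / 2) (half_pos hε)
    refine ⟨N, fun n hn => ?_⟩
    have h1 := hN n hn
    have h2 : ∀ m, |xn m (max t 0) - xn m (max (q:ℝ) 0)| ≤ ε / 4 := by
      intro m
      refine (sl_lip hF hx₀ P κ hP hκ _ _ (h m) (hu m) (hx m) q t (t+1) hq3 (by linarith)).trans ?_
      calc Λ * |t - q| ≤ Λ * (ε / (4 * Λ)) := by gcongr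
        _ = ε / 4 := by field_simp
    have h3 := h2 (φ n)
    have h4 := h2 (φ N)
    simp only [Function.comp, Real.dist_eq] at h1 ⊢
    rw [abs_lt] at h1 ⊢
    rw [abs_le] at h3 h4
    constructor <;> linarith [h1.1, h1.2, h3.1, h3.2, h4.1, h4.2]
  choose x hxl using hconv
  have hxlip : ∀ s t T, s ≤ T → t ≤ T →
      |x t - x s| ≤ (b + 1) * P * Real.exp (κ * max T 0) * |t - s| := by
    intro s t T hs ht
    refine le_of_tendsto ((hxl t).sub (hxl s)).abs (Eventually.of_forall (fun n => ?_))
    exact sl_lip hF hx₀ P κ hP hκ _ _ (h _) (hu _) (hx _) s t T hs ht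
  have hxc : Continuous x := by
    rw [continuous_iff_continuousAt]
    intro t
    have : LipschitzOnWith (Real.toNNReal ((b + 1) * P * Real.exp (κ * max (t + 1) 0))) x
        (Set.Iio (t + 1)) := by
      apply LipschitzOnWith.of_dist_le_mul
      intro p hp q hq
      rw [Real.dist_eq, Real.dist_eq, Real.coe_toNNReal _ (by positivity)]
      exact hxlip q p (t+1) (le_of_lt hq) (le_of_lt hp)
    exact this.continuousOn.continuousAt (Iio_mem_nhds (by linarith))
  have hxt : ∀ t, 0 ≤ t → Tendsto (fun n => xn (φ n) t) atTop (nhds (x t)) := by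
    intro t ht
    have := hxl t
    rwa [max_eq_left ht] at this
  -- convergence of the integrals of the controls
  have hFconv : ∀ t, 0 ≤ t → Tendsto (fun n => ∫ s in (0:ℝ)..t, F (xn (φ n) s)) atTop
      (nhds (∫ s in (0:ℝ)..t, F (x s))) := by
    intro t ht
    apply intervalIntegral.tendsto_integral_filter_of_dominated_convergence
      (fun s => b * (P * Real.exp (κ * s)))
    · exact Eventually.of_forall (fun n => (hFc.comp (h (φ n)).cont).aestronglyMeasurable)
    · refine Eventually.of_forall (fun n => ae_of_all _ (fun s hs => ?_))
      rw [Set.uIoc_of_le ht] at hs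
      have hs0 := hs.1.le
      have a1 := hF.ge0 ((h (φ n)).nonneg hF hx₀ s hs0)
      have a2 := hF.le0 ((h (φ n)).nonneg hF hx₀ s hs0)
      rw [Real.norm_eq_abs, abs_of_nonpos a2]
      have := hx (φ n) s hs0
      nlinarith
    · exact Continuous.intervalIntegrable (by fun_prop) _ _
    · refine ae_of_all _ (fun s hs => ?_)
      rw [Set.uIoc_of_le ht] at hs
      exact (hFc.tendsto _).comp (hxt s hs.1.le)
  set W : ℝ → ℝ := fun t => x t - x₀ - ∫ s in (0:ℝ)..t, F (x s) with hW
  have hWl : ∀ t, 0 ≤ t → Tendsto (fun n => ∫ s in (0:ℝ)..t, un (φ n) s) atTop (nhds (W t)) := by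
    intro t ht
    have := ((hxt t ht).sub_const x₀).sub (hFconv t ht)
    refine this.congr (fun n => ?_)
    rw [(h (φ n)).eq t ht, intervalIntegral.integral_add]
    · ring
    · exact (hFc.comp (h (φ n)).cont).intervalIntegrable _ _
    · exact (h (φ n)).int _ _
  set U : ℝ → ℝ := fun t => W (max t 0) with hU
  set V : ℝ → ℝ := fun t => P / κ * Real.exp (κ * t) with hV
  have hVd : ∀ t, HasDerivAt V (P * Real.exp (κ * t)) t := by
    intro t
    refine ((sl_expd κ t).const_mul (P / κ)).congr_deriv ?_
    field_simp
  have hVm : Monotone V := by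
    intro p q hpq
    simp only [hV]
    gcongr
  have hUmono : ∀ s t, s ≤ t → U s ≤ U t ∧ U t - U s ≤ V t - V s := by
    intro s t hst
    have hs0 : 0 ≤ max s 0 := le_max_right _ _
    have hst' : max s 0 ≤ max t 0 := max_le_max_right 0 hst
    have t1 := (hWl _ (hs0.trans hst')).sub (hWl _ hs0)
    have e : ∀ n, (∫ r in (0:ℝ)..(max t 0), un (φ n) r) - (∫ r in (0:ℝ)..(max s 0), un (φ n) r) =
        ∫ r in (max s 0)..(max t 0), un (φ n) r := fun n =>
      intervalIntegral.integral_interval_sub_left ((h (φ n)).int _ _) ((h (φ n)).int _ _)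
    simp only [e] at t1
    constructor
    · have := ge_of_tendsto t1 (b := 0) (Eventually.of_forall (fun n =>
        intervalIntegral.integral_nonneg hst' (fun r _ => ((h (φ n)).pos r).le)))
      simp only [hU]; linarith
    · have h1 := le_of_tendsto t1 (b := V (max t 0) - V (max s 0)) (Eventually.of_forall (fun n => by
        rw [← intervalIntegral.integral_eq_sub_of_hasDerivAt (fun r _ => hVd r)
          (Continuous.intervalIntegrable (by fun_prop) _ _)]
        apply intervalIntegral.integral_mono_on hst' ((h (φ n)).int _ _)
          (Continuous.intervalIntegrable (by fun_prop) _ _)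
        intro r hr
        exact hu _ r (hs0.trans hr.1)))
      refine le_trans h1 ?_
      rcases le_total t 0 with ht | ht
      · rw [max_eq_right ht, max_eq_right (hst.trans ht)]
        have := hVm hst
        linarith
      · rw [max_eq_left ht]
        have := hVm (le_max_left s 0)
        linarith
  have hUm : Monotone U := fun s t hst => (hUmono s t hst).1
  have hVUm : Monotone (fun t => V t - U t) := fun s t hst => by
    have := (hUmono s t hst).2
    simp only; linarith
  have hbd : ∀ t, 0 ≤ deriv U t ∧ deriv U t ≤ P * Real.exp (κ * t) := by
    intro t
    refine ⟨hUm.deriv_nonneg, ?_⟩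
    by_cases hd : DifferentiableAt ℝ U t
    · have h1 : 0 ≤ deriv (fun t => V t - U t) t := hVUm.deriv_nonneg
      have h2 := ((hVd t).sub hd.hasDerivAt).deriv
      change deriv (fun t => V t - U t) t = _ at h2
      linarith
    · rw [deriv_zero_of_not_differentiableAt hd]
      positivity
  have hum : Measurable (deriv U) := measurable_deriv U
  have hui : ∀ p q, IntervalIntegrable (deriv U) volume p q := by
    intro p q
    have hc : Continuous (fun t => P * Real.exp (κ * t)) := by fun_prop
    apply (hc.intervalIntegrable p q).mono_fun hum.aestronglyMeasurable
    refine ae_of_all _ (fun t => ?_)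
    beta_reduce
    rw [Real.norm_eq_abs, Real.norm_eq_abs, abs_of_nonneg (hbd t).1, abs_of_pos (by positivity)]
    exact (hbd t).2
  have hW0 : W 0 = 0 := by
    have := hWl 0 le_rfl
    simp only [intervalIntegral.integral_same] at this
    exact (tendsto_nhds_unique this tendsto_const_nhds)
  have hUint : ∀ t, 0 ≤ t → ∫ s in (0:ℝ)..t, deriv U s = W t := by
    intro t ht
    have hlip : LipschitzOnWith (Real.toNNReal (P * Real.exp (κ * t))) U (Set.uIcc 0 t) := by
      apply LipschitzOnWith.of_le_add_mul
      intro p hp q hq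
      rw [Set.uIcc_of_le ht] at hp hq
      rw [Real.dist_eq, Real.coe_toNNReal _ (by positivity)]
      rcases le_total p q with hpq | hpq
      · have := hUm hpq
        have : 0 ≤ P * Real.exp (κ * t) * |p - q| := by positivity
        linarith
      · have h1 := (hUmono q p hpq).2
        have h2 : V p - V q ≤ P * Real.exp (κ * t) * (p - q) := by
          rw [← intervalIntegral.integral_eq_sub_of_hasDerivAt (fun r _ => hVd r)
            (Continuous.intervalIntegrable (by fun_prop) _ _)]
          calc _ ≤ ∫ r in q..p, P * Real.exp (κ * t) := by
                apply intervalIntegral.integral_mono_on hpq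
                  (Continuous.intervalIntegrable (by fun_prop) _ _) (by simp)
                intro r hr
                have : r ≤ t := hr.2.trans hp.2
                gcongr
            _ = _ := by rw [intervalIntegral.integral_const, smul_eq_mul, mul_comm]
        rw [abs_of_nonneg (by linarith)]
        linarith
    rw [hlip.absolutelyContinuousOnInterval.integral_deriv_eq_sub]
    simp only [hU, max_eq_left ht, max_self, hW0, sub_zero]
  refine ⟨φ, deriv U, x, hφ, hum, hbd, hui, hxc, ?_, hxt, ?_⟩
  · intro t ht
    have hi : IntervalIntegrable (fun s => F (x s)) volume 0 t :=
      (hFc.comp hxc).intervalIntegrable _ _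
    rw [intervalIntegral.integral_add hi (hui _ _), hUint t ht]
    simp only [hW]
    ring
  · intro t ht
    rw [hUint t ht]
    exact hWl t ht

end limit

lemma sl_lin_int (ρ A κ : ℝ) (hρ : 0 < ρ) :
    IntegrableOn (fun t => Real.exp (-ρ * t) * (A + κ * t)) (Set.Ioi (0:ℝ)) := by
  have h1 := (sl_expi ρ hρ).mul_const A
  have h2 : IntegrableOn (fun t => Real.exp (-ρ * t) * t) (Set.Ioi (0:ℝ)) := by
    have h3 := (sl_expi (ρ/2) (by positivity)).const_mul (2/ρ)
    refine Integrable.mono' h3 (Continuous.aestronglyMeasurable (by fun_prop)) ?_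
    refine (ae_restrict_iff' measurableSet_Ioi).2 (ae_of_all _ fun t ht => ?_)
    have ht' : (0:ℝ) < t := ht
    rw [Real.norm_of_nonneg (by positivity)]
    have e1 : Real.exp (-ρ * t) = Real.exp (-(ρ/2) * t) * Real.exp (-(ρ/2) * t) := by
      rw [← Real.exp_add]; ring_nf
    have e2 : Real.exp (-(ρ/2) * t) * Real.exp ((ρ/2) * t) = 1 := by
      rw [← Real.exp_add]; ring_nf; simp
    have e3 := Real.add_one_le_exp ((ρ/2) * t)
    have e4 : Real.exp (-(ρ/2) * t) * t ≤ 2/ρ := by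
      have : t ≤ 2/ρ * Real.exp ((ρ/2) * t) := by
        have h5 : t = 2/ρ * ((ρ/2) * t) := by field_simp
        have h6 : 2/ρ * ((ρ/2) * t) ≤ 2/ρ * Real.exp ((ρ/2) * t) := by
          apply mul_le_mul_of_nonneg_left _ (by positivity)
          linarith
        linarith
      calc _ ≤ Real.exp (-(ρ/2) * t) * (2/ρ * Real.exp ((ρ/2) * t)) := by gcongr
        _ = 2/ρ * (Real.exp (-(ρ/2) * t) * Real.exp ((ρ/2) * t)) := by ring
        _ = 2/ρ := by rw [e2, mul_one]
    rw [e1]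
    have := mul_le_mul_of_nonneg_right e4 (Real.exp_pos (-(ρ/2) * t)).le
    linarith
  have h4 := h1.add (h2.mul_const κ)
  refine h4.congr (ae_of_all _ fun t => ?_)
  simp only [Pi.add_apply]; ring

lemma sl_bdd_int (f : ℝ → ℝ) (hf : Measurable f) (T C : ℝ) (hT : 0 ≤ T)
    (hC : ∀ t, 0 ≤ t → t ≤ T → |f t| ≤ C) : IntervalIntegrable f volume 0 T := by
  have hc : IntervalIntegrable (fun _ : ℝ => C) volume 0 T := by simp
  refine hc.mono_fun hf.aestronglyMeasurable ?_
  refine (ae_restrict_iff' measurableSet_uIoc).2 (ae_of_all _ fun t ht => ?_)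
  rw [Set.uIoc_of_le hT] at ht
  exact (hC t ht.1.le ht.2).trans (le_abs_self C)

section usc
variable {F : ℝ → ℝ} {b x₀ : ℝ}

lemma sl_log_ell (P κ : ℝ) (hP : 0 < P) (hκ : 0 < κ) (t v : ℝ) (ht : 0 ≤ t) (hv : 0 < v)
    (h : v ≤ P * Real.exp (κ * t) + 1) : Real.log v ≤ Real.log (P+1) + κ * t := by
  have h1 : 1 ≤ Real.exp (κ * t) := Real.one_le_exp (by positivity)
  calc _ ≤ Real.log ((P+1) * Real.exp (κ * t)) := Real.log_le_log hv (by linarith)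
    _ = _ := by rw [Real.log_mul (by positivity) (by positivity), Real.log_exp]

lemma sl_usc_fin (hF : FH F b) (hx₀ : 0 ≤ x₀) (ρ c P κ M : ℝ) (hρ : 0 < ρ) (hc : 0 < c)
    (hP : 0 < P) (hκ : 0 < κ) (un xn : ℕ → ℝ → ℝ) (h : ∀ n, Nice F x₀ (un n) (xn n))
    (hu : ∀ n t, 0 ≤ t → un n t ≤ P * Real.exp (κ * t))
    (hx : ∀ n t, 0 ≤ t → xn n t ≤ P * Real.exp (κ * t))
    (hi : ∀ n, ObjIntegrable ρ c (un n) (xn n))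
    (hM : Tendsto (fun n => objective ρ c (un n) (xn n)) atTop (nhds M))
    (u x : ℝ → ℝ) (hum : Measurable u) (hub : ∀ t, 0 ≤ u t ∧ u t ≤ P * Real.exp (κ * t))
    (hui : ∀ p q, IntervalIntegrable u volume p q) (hxc : Continuous x)
    (hxl : ∀ t, 0 ≤ t → Tendsto (fun n => xn n t) atTop (nhds (x t)))
    (hul : ∀ t, 0 ≤ t → Tendsto (fun n => ∫ s in (0:ℝ)..t, un n s) atTop
        (nhds (∫ s in (0:ℝ)..t, u s)))
    (T ε : ℝ) (hT : 0 ≤ T) (hε : 0 < ε) (hε1 : ε ≤ 1) :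
    IntervalIntegrable (fun t => Real.exp (-ρ * t) *
      (Real.log (P+1) + κ * t - Real.log (u t + ε) + c * x t ^ 2)) volume 0 T ∧
    ∫ t in (0:ℝ)..T, Real.exp (-ρ * t) * (Real.log (P+1) + κ * t - Real.log (u t + ε) + c * x t ^ 2)
      ≤ (∫ t in Set.Ioi (0:ℝ), Real.exp (-ρ * t) * (Real.log (P+1) + κ * t)) - M := by
  set E := ∫ t in Set.Ioi (0:ℝ), Real.exp (-ρ * t) * (Real.log (P+1) + κ * t) with hE
  have hlin := sl_lin_int ρ (Real.log (P+1)) κ hρ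
  have hup : ∀ t, 0 < u t + ε := fun t => by linarith [(hub t).1]
  have hem : Measurable (fun t : ℝ => Real.exp (-ρ * t)) := (sl_expc (-ρ)).measurable
  have he1 : ∀ t, 0 ≤ t → Real.exp (-ρ * t) ≤ 1 := fun t ht => by
    rw [Real.exp_le_one_iff]; nlinarith
  have hmon : ∀ t, 0 ≤ t → t ≤ T → P * Real.exp (κ * t) ≤ P * Real.exp (κ * T) := by
    intro t _ h2; gcongr
  -- the weight
  set w : ℝ → ℝ := fun t => Real.exp (-ρ * t) / (u t + ε) with hw
  have hwm : Measurable w := hem.div (hum.add_const ε)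
  have hwb : ∀ t, 0 ≤ t → 0 ≤ w t ∧ w t ≤ 1 / ε := by
    intro t ht
    refine ⟨div_nonneg (Real.exp_pos _).le (hup t).le, ?_⟩
    exact div_le_div₀ (by norm_num) (he1 t ht) hε (by linarith [(hub t).1])
  have hwi : IntervalIntegrable w volume 0 T := sl_bdd_int w hwm T (1/ε) hT fun t ht _ => by
    rw [abs_of_nonneg (hwb t ht).1]; exact (hwb t ht).2
  set d : ℕ → ℝ → ℝ := fun n t => un n t - u t with hd
  have hdb : ∀ n t, 0 ≤ t → t ≤ T → |d n t| ≤ P * Real.exp (κ * T) := by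
    intro n t h0 h1
    have := hmon t h0 h1
    have := hu n t h0
    have := (h n).pos t
    have := hub t
    rw [abs_le]; constructor <;> simp only [hd] <;> linarith
  have hdm : ∀ n, Measurable (d n) := fun n => (h n).meas.sub hum
  have hwdi : ∀ n, IntervalIntegrable (fun t => w t * d n t) volume 0 T := fun n =>
    sl_bdd_int _ (hwm.mul (hdm n)) T (1/ε * (P * Real.exp (κ * T))) hT fun t h0 h1 => by
      rw [Pi.mul_apply, abs_mul, abs_of_nonneg (hwb t h0).1]
      exact mul_le_mul (hwb t h0).2 (hdb n t h0 h1) (abs_nonneg _) (by positivity)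
  have hweak : Tendsto (fun n => ∫ t in (0:ℝ)..T, w t * d n t) atTop (nhds 0) := by
    refine sl_weak T hT _ d (fun n p q => ((h n).int p q).sub (hui p q)) hdb ?_ w hwi hwdi
    intro t h0 h1
    have := (hul t h0).sub_const (∫ s in (0:ℝ)..t, u s)
    rw [sub_self] at this
    refine this.congr fun n => ?_
    rw [intervalIntegral.integral_sub ((h n).int _ _) (hui _ _)]
  -- the log part
  have hlogi : IntervalIntegrable (fun t => Real.exp (-ρ * t) *
      (Real.log (P+1) + κ * t - Real.log (u t + ε))) volume 0 T := by
    refine sl_bdd_int _ (hem.mul (((measurable_const.add (measurable_id.const_mul κ))).sub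
      (Real.measurable_log.comp (hum.add_const ε)))) T (Real.log (P+1) + κ * T - Real.log ε) hT ?_
    intro t h0 h1
    have a1 : Real.log (u t + ε) ≤ Real.log (P+1) + κ * t :=
      sl_log_ell P κ hP hκ t _ h0 (hup t) (by linarith [(hub t).2])
    have a2 : Real.log ε ≤ Real.log (u t + ε) := Real.log_le_log hε (by linarith [(hub t).1])
    have a3 : κ * t ≤ κ * T := by gcongr
    have a4 : 0 ≤ Real.log (P+1) + κ * t - Real.log (u t + ε) := by linarith
    change |Real.exp (-ρ * t) * (Real.log (P+1) + κ * t - Real.log (u t + ε))| ≤ _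
    rw [abs_mul, abs_of_pos (Real.exp_pos _), abs_of_nonneg a4]
    have := mul_le_mul_of_nonneg_right (he1 t h0) a4
    linarith
  have hxi : ∀ y : ℝ → ℝ, Continuous y →
      IntervalIntegrable (fun t => Real.exp (-ρ * t) * (c * y t ^ 2)) volume 0 T := fun y hy =>
    Continuous.intervalIntegrable (by fun_prop) _ _
  have hxlim : Tendsto (fun n => ∫ t in (0:ℝ)..T, Real.exp (-ρ * t) * (c * xn n t ^ 2)) atTop
      (nhds (∫ t in (0:ℝ)..T, Real.exp (-ρ * t) * (c * x t ^ 2))) := by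
    refine intervalIntegral.tendsto_integral_filter_of_dominated_convergence
      (fun _ => c * (P * Real.exp (κ * T)) ^ 2) ?_ ?_ (by simp) ?_
    · refine Eventually.of_forall fun n => ?_
      have := (h n).cont
      exact Continuous.aestronglyMeasurable (by fun_prop)
    · refine Eventually.of_forall fun n => ae_of_all _ fun t ht => ?_
      rw [Set.uIoc_of_le hT] at ht
      have a1 := (h n).nonneg hF hx₀ t ht.1.le
      have a2 := hx n t ht.1.le
      have a3 := hmon t ht.1.le ht.2
      rw [Real.norm_of_nonneg (by positivity)]
      have a4 : c * xn n t ^ 2 ≤ c * (P * Real.exp (κ * T)) ^ 2 := by gcongr; linarith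
      have := mul_le_mul_of_nonneg_right (he1 t ht.1.le) (show 0 ≤ c * xn n t ^ 2 by positivity)
      linarith
    · refine ae_of_all _ fun t ht => ?_
      rw [Set.uIoc_of_le hT] at ht
      exact (((hxl t ht.1.le).pow 2).const_mul c).const_mul _
  -- inequality for each n
  have key : ∀ n, (∫ t in (0:ℝ)..T, Real.exp (-ρ * t) *
      (Real.log (P+1) + κ * t - Real.log (u t + ε))) +
      (∫ t in (0:ℝ)..T, Real.exp (-ρ * t) * (c * xn n t ^ 2)) - (∫ t in (0:ℝ)..T, w t * d n t)
      ≤ E - objective ρ c (un n) (xn n) := by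
    intro n
    have hgi := hlin.sub (hi n)
    have hgE : ∫ t in Set.Ioi (0:ℝ), (Real.exp (-ρ * t) * (Real.log (P+1) + κ * t) -
        Real.exp (-ρ * t) * (Real.log (un n t) - c * xn n t ^ 2)) =
        E - objective ρ c (un n) (xn n) := by
      rw [integral_sub hlin (hi n)]; rfl
    rw [← intervalIntegral.integral_add hlogi (hxi _ (h n).cont),
      ← intervalIntegral.integral_sub (hlogi.add (hxi _ (h n).cont)) (hwdi n), ← hgE]
    rw [intervalIntegral.integral_of_le hT]
    have hsub : Set.Ioc 0 T ⊆ Set.Ioi (0:ℝ) := fun t ht => ht.1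
    calc _ ≤ ∫ t in Set.Ioc 0 T, (Real.exp (-ρ * t) * (Real.log (P+1) + κ * t) -
        Real.exp (-ρ * t) * (Real.log (un n t) - c * xn n t ^ 2)) := by
          refine setIntegral_mono_on ?_ (hgi.mono_set hsub) measurableSet_Ioc ?_
          · exact ((hlogi.add (hxi _ (h n).cont)).sub (hwdi n)).1
          · intro t ht
            have hp := (h n).pos t
            have a1 : Real.log (un n t) ≤ Real.log (u t + ε) + d n t / (u t + ε) := by
              have b1 := Real.log_le_sub_one_of_pos (div_pos hp (hup t))
              rw [Real.log_div hp.ne' (hup t).ne'] at b1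
              have b2 : un n t / (u t + ε) - 1 ≤ d n t / (u t + ε) := by
                rw [div_sub_one (hup t).ne']
                apply div_le_div_of_nonneg_right _ (hup t).le
                simp only [hd]; linarith
              linarith
            have a2 := mul_le_mul_of_nonneg_left a1 (Real.exp_pos (-ρ * t)).le
            have a3 : w t * d n t = Real.exp (-ρ * t) * (d n t / (u t + ε)) := by
              simp only [hw]; ring
            rw [a3]; linarith
      _ ≤ _ := by
          refine setIntegral_mono_set hgi ?_ (ae_of_all _ hsub)
          refine (ae_restrict_iff' measurableSet_Ioi).2 (ae_of_all _ fun t ht => ?_)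
          have ht' : (0:ℝ) < t := ht
          have a1 := sl_log_ell P κ hP hκ t _ ht'.le ((h n).pos t) (by linarith [hu n t ht'.le])
          have a2 : 0 ≤ c * xn n t ^ 2 := by positivity
          have a3 : 0 ≤ Real.exp (-ρ * t) * ((Real.log (P+1) + κ * t) - Real.log (un n t) + c * xn n t ^ 2) :=
            mul_nonneg (Real.exp_pos _).le (by linarith)
          simp only [Pi.zero_apply]
          linarith
  have hL := ((hxlim.const_add (∫ t in (0:ℝ)..T, Real.exp (-ρ * t) *
      (Real.log (P+1) + κ * t - Real.log (u t + ε)))).sub hweak)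
  have hR := hM.const_sub E
  have := le_of_tendsto_of_tendsto' hL hR key
  rw [sub_zero, ← intervalIntegral.integral_add hlogi (hxi _ hxc)] at this
  refine ⟨((hlogi.add (hxi _ hxc)).congr fun t _ => ?_), ?_⟩
  · ring
  refine le_of_eq_of_le ?_ this
  apply intervalIntegral.integral_congr
  intro t _
  simp only; ring

end usc

lemma sl_fatou (ρ c P κ M : ℝ) (hρ : 0 < ρ) (hc : 0 < c) (hP : 0 < P) (hκ : 0 < κ)
    (u x : ℝ → ℝ) (hum : Measurable u) (hub : ∀ t, 0 ≤ u t ∧ u t ≤ P * Real.exp (κ * t))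
    (hxc : Continuous x)
    (H : ∀ T ε : ℝ, 0 ≤ T → 0 < ε → ε ≤ 1 →
      IntervalIntegrable (fun t => Real.exp (-ρ * t) *
        (Real.log (P+1) + κ * t - Real.log (u t + ε) + c * x t ^ 2)) volume 0 T ∧
      ∫ t in (0:ℝ)..T, Real.exp (-ρ * t) *
        (Real.log (P+1) + κ * t - Real.log (u t + ε) + c * x t ^ 2)
      ≤ (∫ t in Set.Ioi (0:ℝ), Real.exp (-ρ * t) * (Real.log (P+1) + κ * t)) - M) :
    (∀ᵐ t ∂(volume.restrict (Set.Ioi (0:ℝ))), 0 < u t) ∧ ObjIntegrable ρ c u x ∧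
      M ≤ objective ρ c u x := by
  set E := ∫ t in Set.Ioi (0:ℝ), Real.exp (-ρ * t) * (Real.log (P+1) + κ * t) with hE
  have hlin := sl_lin_int ρ (Real.log (P+1)) κ hρ
  have hR : 0 ≤ E - M := by
    have := (H 0 1 le_rfl one_pos le_rfl).2
    simpa using this
  set e : ℕ → ℝ := fun k => 1 / ((k:ℝ) + 1) with he
  have he0 : ∀ k, 0 < e k := fun k => by simp only [he]; positivity
  have he1 : ∀ k, e k ≤ 1 := fun k => by
    simp only [he]; rw [div_le_one (by positivity)]; linarith [Nat.cast_nonneg (α := ℝ) k]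
  have hel : Tendsto e atTop (nhds 0) := tendsto_one_div_add_atTop_nhds_zero_nat
  set g : ℝ → ℝ → ℝ := fun ε t => Real.exp (-ρ * t) *
        (Real.log (P+1) + κ * t - Real.log (u t + ε) + c * x t ^ 2) with hg
  have hgm : ∀ ε, Measurable (g ε) := fun ε => by
    have := hxc.measurable
    simp only [hg]; fun_prop
  have hgn : ∀ ε t, 0 ≤ ε → ε ≤ 1 → 0 < t → 0 < u t + ε → 0 ≤ g ε t := by
    intro ε t h0 h1 ht hp
    have := sl_log_ell P κ hP hκ t _ ht.le hp (by linarith [(hub t).2])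
    have : 0 ≤ c * x t ^ 2 := by positivity
    exact mul_nonneg (Real.exp_pos _).le (by linarith)
  set f : ℕ → ℝ → ENNReal := fun k => (Set.Ioc (0:ℝ) k).indicator
    (fun t => ENNReal.ofReal (g (e k) t)) with hf
  have hfm : ∀ k, Measurable (f k) := fun k =>
    ((hgm _).ennreal_ofReal).indicator measurableSet_Ioc
  have hfi : ∀ k, ∫⁻ t in Set.Ioi (0:ℝ), f k t ≤ ENNReal.ofReal (E - M) := by
    intro k
    have hk : (0:ℝ) ≤ k := Nat.cast_nonneg k
    obtain ⟨h1, h2⟩ := H k (e k) hk (he0 k) (he1 k)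
    calc _ ≤ ∫⁻ t, f k t := setLIntegral_le_lintegral _ _
      _ = ∫⁻ t in Set.Ioc (0:ℝ) k, ENNReal.ofReal (g (e k) t) :=
        lintegral_indicator measurableSet_Ioc _
      _ = ENNReal.ofReal (∫ t in Set.Ioc (0:ℝ) k, g (e k) t) := by
        rw [ofReal_integral_eq_lintegral_ofReal h1.1]
        refine (ae_restrict_iff' measurableSet_Ioc).2 (ae_of_all _ fun t ht => ?_)
        exact hgn _ t (he0 k).le (he1 k) ht.1 (by linarith [he0 k, (hub t).1])
      _ ≤ _ := by
        rw [intervalIntegral.integral_of_le hk] at h2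
        exact ENNReal.ofReal_le_ofReal h2
  set G : ℝ → ENNReal := fun t => if 0 < u t then ENNReal.ofReal (g 0 t) else ⊤ with hG
  have hGm : Measurable G :=
    Measurable.ite (measurableSet_lt measurable_const hum) (hgm 0).ennreal_ofReal measurable_const
  have hlim : ∀ t, 0 < t → Tendsto (fun k => f k t) atTop (nhds (G t)) := by
    intro t ht
    have hev : ∀ᶠ k : ℕ in atTop, ENNReal.ofReal (g (e k) t) = f k t := by
      filter_upwards [eventually_ge_atTop ⌈t⌉₊] with k hk
      have : t ≤ k := (Nat.le_ceil t).trans (by exact_mod_cast hk)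
      simp only [hf]
      rw [Set.indicator_of_mem (show t ∈ Set.Ioc (0:ℝ) k from ⟨ht, this⟩)]
    refine Tendsto.congr' hev ?_
    by_cases hu0 : 0 < u t
    · simp only [hG, hu0, if_true]
      refine (ENNReal.continuous_ofReal.tendsto _).comp ?_
      simp only [hg]
      have h1 : Tendsto (fun k => Real.log (u t + e k)) atTop (nhds (Real.log (u t + 0))) :=
        (Real.continuousAt_log (by linarith)).tendsto.comp (hel.const_add (u t))
      exact ((h1.const_sub _).add_const _).const_mul _
    · simp only [hG, hu0, if_false]
      have hu00 : u t = 0 := le_antisymm (not_lt.1 hu0) (hub t).1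
      refine ENNReal.tendsto_ofReal_atTop.comp ?_
      simp only [hg, hu00, zero_add]
      have h1 : Tendsto (fun k => Real.log (e k)) atTop atBot :=
        Real.tendsto_log_nhdsGT_zero.comp
          (tendsto_nhdsWithin_iff.2 ⟨hel, Eventually.of_forall he0⟩)
      have h2 : Tendsto (fun k => Real.log (P+1) + κ * t - Real.log (e k)) atTop atTop := by
        simp only [sub_eq_add_neg]
        exact tendsto_atTop_add_const_left _ _ (tendsto_neg_atBot_atTop.comp h1)
      exact (tendsto_atTop_add_const_right _ _ h2).const_mul_atTop (Real.exp_pos _)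
  have hGi : ∫⁻ t in Set.Ioi (0:ℝ), G t ≤ ENNReal.ofReal (E - M) := by
    calc _ = ∫⁻ t in Set.Ioi (0:ℝ), liminf (fun k => f k t) atTop := by
          refine setLIntegral_congr_fun measurableSet_Ioi fun t ht => ?_
          exact (hlim t ht).liminf_eq.symm
      _ ≤ liminf (fun k => ∫⁻ t in Set.Ioi (0:ℝ), f k t) atTop := lintegral_liminf_le hfm
      _ ≤ liminf (fun k : ℕ => ENNReal.ofReal (E - M)) atTop :=
          liminf_le_liminf (Eventually.of_forall hfi)
      _ = _ := liminf_const _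
  have hpos : ∀ᵐ t ∂(volume.restrict (Set.Ioi (0:ℝ))), 0 < u t := by
    filter_upwards [ae_lt_top hGm (hGi.trans_lt ENNReal.ofReal_lt_top).ne] with t ht
    by_contra h
    simp [hG, h] at ht
  have hg0 : 0 ≤ᵐ[volume.restrict (Set.Ioi (0:ℝ))] g 0 := by
    filter_upwards [hpos, ae_restrict_mem measurableSet_Ioi] with t h1 h2
    exact hgn 0 t le_rfl zero_le_one h2 (by linarith)
  have hgl : ∫⁻ t in Set.Ioi (0:ℝ), ENNReal.ofReal (g 0 t) ≤ ENNReal.ofReal (E - M) := by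
    refine le_of_eq_of_le (lintegral_congr_ae ?_) hGi
    filter_upwards [hpos] with t ht
    simp [hG, ht]
  have hgi : IntegrableOn (g 0) (Set.Ioi (0:ℝ)) :=
    (lintegral_ofReal_ne_top_iff_integrable (hgm 0).aestronglyMeasurable hg0).1
      (hgl.trans_lt ENNReal.ofReal_lt_top).ne
  have hgI : ∫ t in Set.Ioi (0:ℝ), g 0 t ≤ E - M := by
    rw [integral_eq_lintegral_of_nonneg_ae hg0 (hgm 0).aestronglyMeasurable]
    exact ENNReal.toReal_le_of_le_ofReal hR hgl
  have heq : ∀ t, Real.exp (-ρ * t) * (Real.log (P+1) + κ * t) - g 0 t =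
      Real.exp (-ρ * t) * (Real.log (u t) - c * x t ^ 2) := by
    intro t; simp only [hg, add_zero]; ring
  refine ⟨hpos, ?_, ?_⟩
  · exact (hlin.sub hgi).congr (ae_of_all _ heq)
  · have : objective ρ c u x = E - ∫ t in Set.Ioi (0:ℝ), g 0 t := by
      rw [hE, ← integral_sub hlin hgi]
      simp only [heq]; rfl
    linarith

lemma sl_FH (b₀ : ℝ) (F : ℝ → ℝ) (hb₀ : 0 < b₀) (hF : ContDiff ℝ 1 F) (hF0 : F 0 = 0)
    (hF'le : ∀ y : ℝ, deriv F y ≤ 0) (hF'ge : ∀ y : ℝ, -b₀ ≤ deriv F y) : FH F b₀ := by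
  have hd : Differentiable ℝ F := hF.differentiable (by norm_num)
  refine ⟨hb₀, hF.continuous, hF0, fun p q h => antitone_of_deriv_nonpos hd hF'le h, ?_⟩
  intro p q hpq
  have hD : ∀ y, HasDerivAt (fun y => F y + b₀ * y) (deriv F y + b₀ * 1) y := fun y =>
    (hd y).hasDerivAt.add ((hasDerivAt_id y).const_mul b₀)
  have hm : Monotone (fun y => F y + b₀ * y) := by
    refine monotone_of_deriv_nonneg (fun y => (hD y).differentiableAt) fun y => ?_
    rw [(hD y).deriv]; linarith [hF'ge y]
  have := hm hpq
  simp only at this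
  linarith

section start
variable {F : ℝ → ℝ} {b x₀ : ℝ}

lemma sl_normalize (ρ c : ℝ) (u x : ℝ → ℝ) (hu : Admissible u)
    (hx : Trajectory F x₀ u x) (ho : ObjIntegrable ρ c u x) :
    ∃ u' x', Nice F x₀ u' x' ∧ ObjIntegrable ρ c u' x' ∧
      objective ρ c u x = objective ρ c u' x' := by
  classical
  obtain ⟨hum, hui, hup⟩ := hu
  obtain ⟨hxc, hxe⟩ := hx
  set u' : ℝ → ℝ := fun t => if 0 ≤ t ∧ 0 < u t then u t else 1 with hu'
  set x' : ℝ → ℝ := fun t => x (max t 0) with hx'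
  have hms : MeasurableSet {t : ℝ | 0 ≤ t ∧ 0 < u t} :=
    (measurableSet_le measurable_const measurable_id).inter (measurableSet_lt measurable_const hum)
  have hum' : Measurable u' := Measurable.ite hms hum measurable_const
  have hup' : ∀ t, 0 < u' t := by
    intro t; simp only [hu']
    split_ifs with h
    · exact h.2
    · exact one_pos
  have hae : ∀ᵐ t : ℝ, 0 ≤ t → u' t = u t := by
    have := (ae_restrict_iff' measurableSet_Ici).1 hup
    filter_upwards [this] with t ht h0
    simp only [hu']
    rw [if_pos ⟨h0, ht h0⟩]
  have hxx : ∀ t, 0 ≤ t → x' t = x t := fun t ht => by simp only [hx']; rw [max_eq_left ht]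
  have hobj : ∀ᵐ t ∂(volume.restrict (Set.Ioi (0:ℝ))),
      Real.exp (-ρ * t) * (Real.log (u t) - c * (x t) ^ 2) =
      Real.exp (-ρ * t) * (Real.log (u' t) - c * (x' t) ^ 2) := by
    refine (ae_restrict_iff' measurableSet_Ioi).2 ?_
    filter_upwards [hae] with t ht h0
    have h0' : (0:ℝ) < t := h0
    rw [ht h0'.le, hxx t h0'.le]
  refine ⟨u', x', ⟨hum', hup', ?_, ?_, ?_⟩, ho.congr hobj, integral_congr_ae hobj⟩
  · intro p q
    set R := |p| + |q| + 1 with hR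
    have hR0 : 0 < R := by positivity
    have hw : Integrable ((Set.Icc 0 R).indicator u) :=
      (hui R hR0).integrable_indicator measurableSet_Icc
    have h1 : IntegrableOn u' (Set.Icc (-R) R) := by
      have hb : IntegrableOn (fun t => |(Set.Icc 0 R).indicator u t| + 1) (Set.Icc (-R) R) :=
        (hw.abs.integrableOn).add (by simp)
      refine Integrable.mono' hb hum'.aestronglyMeasurable ?_
      refine (ae_restrict_iff' measurableSet_Icc).2 (ae_of_all _ fun t ht => ?_)
      rw [Real.norm_of_nonneg (hup' t).le]
      simp only [hu']
      split_ifs with h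
      · rw [Set.indicator_of_mem (show t ∈ Set.Icc 0 R from ⟨h.1, ht.2⟩)]
        linarith [le_abs_self (u t)]
      · linarith [abs_nonneg ((Set.Icc 0 R).indicator u t)]
    rw [intervalIntegrable_iff]
    refine h1.mono_set ?_
    refine Set.uIoc_subset_uIcc.trans (Set.uIcc_subset_Icc ?_ ?_) <;> constructor <;>
      linarith [neg_abs_le p, le_abs_self p, neg_abs_le q, le_abs_self q, abs_nonneg p, abs_nonneg q]
  · exact hxc.comp_continuous (by fun_prop) (fun t => Set.mem_Ici.2 (le_max_right t 0))
  · intro t ht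
    rw [hxx t ht, hxe t ht]
    congr 1
    apply intervalIntegral.integral_congr_ae
    filter_upwards [hae] with s hs hs2
    rw [Set.uIoc_of_le ht] at hs2
    rw [hs hs2.1.le, hxx s hs2.1.le]

lemma sl_start (hF : FH F b) (hx₀ : 0 ≤ x₀) (ρ c : ℝ) (hρ : 0 < ρ) (hc : 0 < c) :
    ∃ u x, Nice F x₀ u x ∧ ObjIntegrable ρ c u x := by
  have hb := hF.bpos
  have hFc := hF.cont
  have hxc : Continuous (fun t : ℝ => x₀ + max t 0) := by fun_prop
  have huc : Continuous (fun t : ℝ => 1 - F (x₀ + max t 0)) := by fun_prop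
  have hle : ∀ t : ℝ, F (x₀ + max t 0) ≤ 0 ∧ -(b * (x₀ + max t 0)) ≤ F (x₀ + max t 0) := by
    intro t
    have h0 : 0 ≤ x₀ + max t 0 := add_nonneg hx₀ (le_max_right _ _)
    have h1 := hF.anti 0 _ h0
    have h2 := hF.lip 0 _ h0
    rw [hF.zero] at h1 h2
    constructor <;> linarith
  refine ⟨fun t => 1 - F (x₀ + max t 0), fun t => x₀ + max t 0,
    ⟨huc.measurable, fun t => by linarith [(hle t).1], fun p q => huc.intervalIntegrable p q,
      hxc, ?_⟩, ?_⟩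
  · intro t ht
    simp [ht]
  · set D := 16 / ρ ^ 2 * Real.exp (ρ / 2 * x₀) with hD
    have hbi : IntegrableOn (fun t => b * Real.exp (-ρ * t) +
        ((b + c) * D) * Real.exp (-(ρ/2) * t)) (Set.Ioi (0:ℝ)) :=
      ((sl_expi ρ hρ).const_mul b).add ((sl_expi (ρ/2) (by positivity)).const_mul _)
    refine Integrable.mono' hbi ?_ ?_
    · exact (by fun_prop (disch := assumption) : Measurable _).aestronglyMeasurable
    · refine (ae_restrict_iff' measurableSet_Ioi).2 (ae_of_all _ fun t ht => ?_)
      have ht' : (0:ℝ) < t := ht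
      have hl := hle t
      simp only
      rw [max_eq_left ht'.le] at hl ⊢
      set y := x₀ + t with hy
      have hy0 : 0 ≤ y := by positivity
      have l1 : 0 ≤ Real.log (1 - F y) := Real.log_nonneg (by linarith)
      have l2 : Real.log (1 - F y) ≤ b * y := by
        have := Real.log_le_sub_one_of_pos (show 0 < 1 - F y by linarith)
        linarith
      have l3 : |Real.log (1 - F y) - c * y ^ 2| ≤ b + (b + c) * y ^ 2 := by
        have : 0 ≤ c * y ^ 2 := by positivity
        have : b * y ≤ b * (1 + y ^ 2) := by
          apply mul_le_mul_of_nonneg_left _ hb.le; nlinarith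
        have : 0 ≤ b * y ^ 2 := by positivity
        rw [abs_le]; constructor <;> nlinarith
      have l4 : Real.exp (-ρ * t) * y ^ 2 ≤ D * Real.exp (-(ρ/2) * t) := by
        have m1 := Real.add_one_le_exp ((ρ/4) * y)
        have m2 : ((ρ/4) * y) ^ 2 ≤ Real.exp ((ρ/4) * y) ^ 2 := by
          gcongr; linarith
        have m3 : Real.exp ((ρ/4) * y) ^ 2 = Real.exp (ρ / 2 * x₀) * Real.exp (ρ / 2 * t) := by
          rw [← Real.exp_nat_mul, ← Real.exp_add]; congr 1; push_cast; rw [hy]; ring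
        have m4 : y ^ 2 ≤ D * Real.exp (ρ / 2 * t) := by
          have : y ^ 2 = 16 / ρ ^ 2 * ((ρ/4) * y) ^ 2 := by field_simp; norm_num
          rw [this, hD, mul_assoc, ← m3]
          gcongr
        have m5 : Real.exp (-(ρ/2) * t) = Real.exp (-ρ * t) * Real.exp (ρ / 2 * t) := by
          rw [← Real.exp_add]; ring_nf
        rw [m5]
        have := mul_le_mul_of_nonneg_left m4 (Real.exp_pos (-ρ * t)).le
        linarith
      rw [norm_mul, Real.norm_of_nonneg (Real.exp_pos _).le, Real.norm_eq_abs]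
      have l5 := mul_le_mul_of_nonneg_left l3 (Real.exp_pos (-ρ * t)).le
      have l6 := mul_le_mul_of_nonneg_left l4 (show 0 ≤ b + c by positivity)
      linarith

end start

/-- The shallow-lake optimal control problem admits a locally bounded optimal
control in `L¹_loc(0,∞)`. -/
theorem shallow_lake_existence_of_optimum
    (ρ c x₀ b₀ l : ℝ) (F : ℝ → ℝ)
    (hρ : 0 < ρ) (hc : 0 < c) (hx₀ : 0 ≤ x₀) (hb₀ : 0 < b₀) (hl : 0 < l)
    (hF : ContDiff ℝ 1 F) (hF0 : F 0 = 0)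
    (hF'le : ∀ y : ℝ, deriv F y ≤ 0)
    (hF'0 : deriv F 0 < 0)
    (hF'ge : ∀ y : ℝ, -b₀ ≤ deriv F y)
    (hFlim : Tendsto (deriv F) atTop (nhds (-l))) :
    ∃ ust xst : ℝ → ℝ,
      Admissible ust ∧
      (∀ T : ℝ, 0 < T → ∃ C : ℝ, ∀ᵐ t ∂(volume.restrict (Set.Icc (0:ℝ) T)), |ust t| ≤ C) ∧
      Trajectory F x₀ ust xst ∧
      ObjIntegrable ρ c ust xst ∧
      (∀ u x : ℝ → ℝ, Admissible u → Trajectory F x₀ u x → ObjIntegrable ρ c u x →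
        objective ρ c u x ≤ objective ρ c ust xst) := by
  have hFH := sl_FH b₀ F hb₀ hF hF0 hF'le hF'ge
  obtain ⟨ua, xa, hna, hoa⟩ := sl_start hFH hx₀ ρ c hρ hc
  set K := max 0 (-objective ρ c ua xa) with hK
  have hK0 : 0 ≤ K := le_max_left _ _
  have hKa : -K ≤ objective ρ c ua xa := by linarith [le_max_right 0 (-objective ρ c ua xa)]
  obtain ⟨P, hP, hT⟩ := sl_trunc hFH hx₀ ρ c hρ hc K hK0
  set κ := b₀ + ρ with hκd
  have hκ : 0 < κ := by positivity
  set good : (ℝ → ℝ) → (ℝ → ℝ) → Prop := fun u x => Nice F x₀ u x ∧ ObjIntegrable ρ c u x ∧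
    (∀ t, 0 ≤ t → u t ≤ P * Real.exp (κ * t)) ∧ (∀ t, 0 ≤ t → x t ≤ P * Real.exp (κ * t)) with hgood
  set S : Set ℝ := {r | ∃ u x, good u x ∧ objective ρ c u x = r} with hS
  have hne : S.Nonempty := by
    obtain ⟨u', x', h1, h2, -, h4, h5⟩ := hT ua xa hna hoa hKa
    exact ⟨_, u', x', ⟨h1, h2, h4, h5⟩, rfl⟩
  have hlin := sl_lin_int ρ (Real.log (P+1)) κ hρ
  have hbdd : BddAbove S := by
    refine ⟨∫ t in Set.Ioi (0:ℝ), Real.exp (-ρ * t) * (Real.log (P+1) + κ * t), ?_⟩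
    rintro r ⟨u, x, ⟨h1, h2, h3, h4⟩, rfl⟩
    refine setIntegral_mono_on h2 hlin measurableSet_Ioi fun t ht => ?_
    have ht' : (0:ℝ) < t := ht
    have a1 := sl_log_ell P κ hP hκ t _ ht'.le (h1.pos t) (by linarith [h3 t ht'.le])
    have a2 : 0 ≤ c * x t ^ 2 := by positivity
    exact mul_le_mul_of_nonneg_left (by linarith) (Real.exp_pos _).le
  obtain ⟨r, -, hr, hrS⟩ := exists_seq_tendsto_sSup hne hbdd
  choose un xn hgn hr' using hrS
  obtain ⟨φ, u, x, hφ, hum, hub, hui, hxc, hxe, hxl, hul⟩ := sl_limit hFH hx₀ P κ hP hκ un xn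
    (fun n => (hgn n).1) (fun n => (hgn n).2.2.1) (fun n => (hgn n).2.2.2)
  have hM : Tendsto (fun n => objective ρ c (un (φ n)) (xn (φ n))) atTop (nhds (sSup S)) := by
    simp only [hr']
    exact hr.comp hφ.tendsto_atTop
  obtain ⟨hpos, hoi, hopt⟩ := sl_fatou ρ c P κ (sSup S) hρ hc hP hκ u x hum hub hxc
    (fun T ε => sl_usc_fin hFH hx₀ ρ c P κ (sSup S) hρ hc hP hκ (fun n => un (φ n))
      (fun n => xn (φ n)) (fun n => (hgn (φ n)).1) (fun n => (hgn (φ n)).2.2.1)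
      (fun n => (hgn (φ n)).2.2.2) (fun n => (hgn (φ n)).2.1) hM u x hum hub hui hxc hxl hul T ε)
  have hle : ∀ v y, Nice F x₀ v y → ObjIntegrable ρ c v y → -K ≤ objective ρ c v y →
      objective ρ c v y ≤ sSup S := by
    intro v y h1 h2 h3
    obtain ⟨v', y', k1, k2, k3, k4, k5⟩ := hT v y h1 h2 h3
    exact k3.trans (le_csSup hbdd ⟨v', y', ⟨k1, k2, k4, k5⟩, rfl⟩)
  refine ⟨u, x, ⟨hum, ?_, ?_⟩, ?_, ⟨hxc.continuousOn, hxe⟩, hoi, ?_⟩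
  · intro T hT0
    exact (intervalIntegrable_iff_integrableOn_Icc_of_le hT0.le).1 (hui 0 T)
  · rwa [← Measure.restrict_congr_set (Ioi_ae_eq_Ici (a := (0:ℝ)) (μ := volume))]
  · intro T hT0
    refine ⟨P * Real.exp (κ * T), (ae_restrict_iff' measurableSet_Icc).2 (ae_of_all _ fun t ht => ?_)⟩
    rw [abs_of_nonneg (hub t).1]
    refine (hub t).2.trans ?_
    have := ht.2
    gcongr
  · intro v y hv hy ho
    obtain ⟨v', y', h1, h2, h3⟩ := sl_normalize ρ c v y hv hy ho
    rw [h3]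
    refine le_trans ?_ hopt
    by_cases hk : -K ≤ objective ρ c v' y'
    · exact hle v' y' h1 h2 hk
    · exact (not_le.1 hk).le.trans (hKa.trans (hle ua xa hna hoa hKa))
end

section
/- Let ρ > 0, c > 0, x₀ ≥ 0, b₀ > 0, and let F : ℝ → ℝ be continuously differentiable with F(0) = 0 and −b₀ ≤ F'(y) ≤ 0 for all y ∈ ℝ. Then for every real number r there exists a constant K > 0 (depending only on ρ, c, b₀ and r) such that: for every admissible control u and every trajectory x associated with u for which t ↦ e^{-ρt}(log u(t) − c·x(t)²) is Lebesgue integrable on [0,∞) and B(u,x) ≥ r, the function t ↦ e^{-ρt}u(t) is integrable on [0,∞) and ∫₀^∞ e^{-ρt} u(t) dt ≤ K. -/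
open MeasureTheory Filter

theorem parts_aux (x₀ T : ℝ) (hT : 0 ≤ T) (f x w w' : ℝ → ℝ)
    (hf : IntervalIntegrable f volume 0 T)
    (hx : ∀ t : ℝ, 0 ≤ t → x t = x₀ + ∫ s in (0:ℝ)..t, f s)
    (hw : ContDiff ℝ 1 w) (hw' : ∀ t, HasDerivAt w (w' t) t) :
    ∫ t in (0:ℝ)..T, (w' t * x t + w t * f t) = w T * x T - w 0 * x 0 := by
  have hy : AbsolutelyContinuousOnInterval (fun t => ∫ s in (0:ℝ)..t, f s) 0 T :=
    hf.absolutelyContinuousOnInterval_intervalIntegral (by simp)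
  have hc : AbsolutelyContinuousOnInterval (fun _ : ℝ => x₀) 0 T :=
    (contDiff_const.contDiffOn).absolutelyContinuousOnInterval
  have hz := hc.add hy
  have hwa : AbsolutelyContinuousOnInterval w 0 T :=
    hw.contDiffOn.absolutelyContinuousOnInterval
  have key := hwa.integral_deriv_mul_eq_sub hz
  simp only [Pi.add_apply] at key
  rw [hx T hT, hx 0 le_rfl, ← key]
  apply intervalIntegral.integral_congr_ae
  filter_upwards [hf.ae_hasDerivAt_integral] with t ht htm
  have htm' : t ∈ Set.uIcc 0 T := Set.uIoc_subset_uIcc htm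
  have h0 : 0 ≤ t := by
    rw [Set.uIcc_of_le hT] at htm'
    exact htm'.1
  have hd : deriv ((fun _ : ℝ => x₀) + fun t => ∫ s in (0:ℝ)..t, f s) t = f t :=
    (((ht htm' 0 (by simp)).const_add x₀)).deriv
  rw [hd, (hw' t).deriv, hx t h0]

theorem F_bound (b₀ : ℝ) (F : ℝ → ℝ) (hF : ContDiff ℝ 1 F) (hF0 : F 0 = 0)
    (hd : ∀ y : ℝ, -b₀ ≤ deriv F y ∧ deriv F y ≤ 0) (hb₀ : 0 < b₀) (y : ℝ) :
    |F y| ≤ b₀ * |y| := by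
  have := convex_univ.norm_image_sub_le_of_norm_deriv_le (f := F) (C := b₀) (x := 0) (y := y)
    (fun z _ => hF.differentiable (by norm_num) z)
    (fun z _ => by
      rw [Real.norm_eq_abs, abs_le]
      exact ⟨(hd z).1, (hd z).2.trans hb₀.le⟩) trivial trivial
  simpa [hF0] using this

theorem pointwise_aux (ρ c b₀ T : ℝ) (hρ : 0 < ρ) (hc : 0 < c) (hb₀ : 0 < b₀) (hT : 1 ≤ T)
    (e ψ x f u : ℝ) (he : 0 < e) (hψ0 : 0 ≤ ψ) (hψ1 : ψ ≤ 1) (hf : |f| ≤ b₀ * |x|)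
    (hu : 0 < u) :
    ψ ^ 2 * (e * u) ≤ 2 * ((2 * ψ * (-1 / T) * e + ψ ^ 2 * (-ρ * e)) * x + (ψ ^ 2 * e) * (f + u))
      - ψ ^ 2 * (e * (Real.log u - c * x ^ 2)) + (2 + ρ + b₀) ^ 2 / c * e := by
  have hlog : Real.log u ≤ u := (Real.log_le_sub_one_of_pos hu).trans (by linarith)
  have hT' : 0 < T := by linarith
  have h1T : 1 / T ≤ 1 := by rw [div_le_one hT']; exact hT
  have h1T0 : 0 < 1 / T := by positivity
  have hx : 0 ≤ |x| := abs_nonneg x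
  obtain ⟨hx1, hx2⟩ := abs_le.1 (le_refl |x|)
  obtain ⟨hf1, hf2⟩ := abs_le.1 hf
  set A := 2 + ρ + b₀ with hA
  set y := ψ * |x| with hy
  have hy0 : 0 ≤ y := by positivity
  have hψx : ψ * x ≤ y := mul_le_mul_of_nonneg_left hx2 hψ0
  have hψy : ψ * y ≤ y := mul_le_of_le_one_left hy0 hψ1
  have e1 : 4 * (1 / T) * (ψ * x) ≤ 4 * y := by
    have : (1 / T) * (ψ * x) ≤ (1 / T) * y := mul_le_mul_of_nonneg_left hψx h1T0.le
    have : (1 / T) * y ≤ y := mul_le_of_le_one_left hy0 h1T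
    linarith
  have e2 : 2 * ρ * (ψ * (ψ * x)) ≤ 2 * ρ * y := by
    have : ψ * (ψ * x) ≤ ψ * y := mul_le_mul_of_nonneg_left hψx hψ0
    have : ρ * (ψ * (ψ * x)) ≤ ρ * y := mul_le_mul_of_nonneg_left (by linarith) hρ.le
    linarith
  have e3 : -(2 * b₀ * y) ≤ 2 * (ψ ^ 2 * f) := by
    have h1 : ψ ^ 2 * (-(b₀ * |x|)) ≤ ψ ^ 2 * f := mul_le_mul_of_nonneg_left hf1 (by positivity)
    have h2 : b₀ * (ψ * y) ≤ b₀ * y := mul_le_mul_of_nonneg_left hψy hb₀.le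
    have h3 : ψ ^ 2 * (-(b₀ * |x|)) = -(b₀ * (ψ * y)) := by rw [hy]; ring
    linarith
  have e4 : 0 ≤ c * y ^ 2 - 2 * A * y + A ^ 2 / c := by
    have : c * y ^ 2 - 2 * A * y + A ^ 2 / c = (c * y - A) ^ 2 / c := by field_simp; ring
    rw [this]; positivity
  have e5 : y ^ 2 = ψ ^ 2 * x ^ 2 := by rw [hy, mul_pow, sq_abs]
  have e6 : 0 ≤ -(4 * (1 / T) * (ψ * x)) - 2 * ρ * (ψ * (ψ * x)) + 2 * (ψ ^ 2 * f)
      + c * (ψ ^ 2 * x ^ 2) + A ^ 2 / c := by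
    rw [← e5]
    have : 2 * A * y = 4 * y + 2 * ρ * y + 2 * b₀ * y := by rw [hA]; ring
    linarith
  have e7 := mul_nonneg he.le e6
  have e8 : ψ ^ 2 * e * Real.log u ≤ ψ ^ 2 * e * u :=
    mul_le_mul_of_nonneg_left hlog (by positivity)
  have e9 : (-1 / T) = -(1 / T) := by ring
  rw [e9]
  nlinarith [e7, e8]

theorem finite_aux (ρ c b₀ : ℝ) (hρ : 0 < ρ) (hc : 0 < c) (hb₀ : 0 < b₀) (T : ℝ) (hT : 1 ≤ T)
    (x₀ : ℝ) (F u x : ℝ → ℝ) (hx₀ : 0 ≤ x₀) (hF : ContDiff ℝ 1 F) (hF0 : F 0 = 0)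
    (hd : ∀ y : ℝ, -b₀ ≤ deriv F y ∧ deriv F y ≤ 0)
    (hu : Admissible u) (hx : Trajectory F x₀ u x) (hobj : ObjIntegrable ρ c u x) :
    IntegrableOn (fun t => (1 - t / T) ^ 2 * (Real.exp (-ρ * t) * u t)) (Set.Ioc 0 T) ∧
    ∫ t in Set.Ioc 0 T, (1 - t / T) ^ 2 * (Real.exp (-ρ * t) * u t) ≤
      - (∫ t in Set.Ioc 0 T, (1 - t / T) ^ 2 *
          (Real.exp (-ρ * t) * (Real.log (u t) - c * (x t) ^ 2)))
        + (2 + ρ + b₀) ^ 2 / c * (1 / ρ) := by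
  have hT0 : 0 < T := by linarith
  have hui : IntervalIntegrable u volume 0 T := by
    rw [intervalIntegrable_iff_integrableOn_Icc_of_le hT0.le]
    exact hu.2.1 T hT0
  have hxc : ContinuousOn x (Set.uIcc 0 T) := by
    rw [Set.uIcc_of_le hT0.le]
    exact hx.1.mono Set.Icc_subset_Ici_self
  have hFx : IntervalIntegrable (fun t => F (x t)) volume 0 T :=
    (hF.continuous.comp_continuousOn hxc).intervalIntegrable
  have hfi : IntervalIntegrable (fun t => F (x t) + u t) volume 0 T := hFx.add hui
  have hGi : IntervalIntegrable
      (fun t => Real.exp (-ρ * t) * (Real.log (u t) - c * (x t) ^ 2)) volume 0 T := by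
    rw [intervalIntegrable_iff_integrableOn_Ioc_of_le hT0.le]
    exact hobj.mono_set Set.Ioc_subset_Ioi_self
  have hI1 : IntervalIntegrable (fun t => (1 - t / T) ^ 2 * (Real.exp (-ρ * t) * u t))
      volume 0 T :=
    (hui.continuousOn_mul (by fun_prop)).continuousOn_mul (by fun_prop)
  have hI2 : IntervalIntegrable (fun t => (1 - t / T) ^ 2 *
      (Real.exp (-ρ * t) * (Real.log (u t) - c * (x t) ^ 2))) volume 0 T :=
    hGi.continuousOn_mul (by fun_prop)
  have hI3 : IntervalIntegrable (fun t =>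
      ((2 * (1 - t / T) * (-1 / T) * Real.exp (-ρ * t) + (1 - t / T) ^ 2 *
        (-ρ * Real.exp (-ρ * t))) * x t
      + ((1 - t / T) ^ 2 * Real.exp (-ρ * t)) * (F (x t) + u t))) volume 0 T := by
    refine IntervalIntegrable.add (ContinuousOn.intervalIntegrable ?_)
      (hfi.continuousOn_mul (by fun_prop))
    exact ContinuousOn.mul (by fun_prop) hxc
  have hI4 : IntegrableOn (fun t => Real.exp (-ρ * t)) (Set.Ioi (0:ℝ)) :=
    exp_neg_integrableOn_Ioi 0 hρ
  have hI4' : IntervalIntegrable (fun t => Real.exp (-ρ * t)) volume 0 T :=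
    Continuous.intervalIntegrable (by fun_prop) _ _
  have hE : ∫ t in (0:ℝ)..T, Real.exp (-ρ * t) ≤ 1 / ρ := by
    have h1 : ∫ t in Set.Ioi (0:ℝ), Real.exp (-ρ * t) = 1 / ρ := by
      rw [integral_exp_mul_Ioi (by linarith) 0]
      simp
    rw [← h1, intervalIntegral.integral_of_le hT0.le]
    exact setIntegral_mono_set hI4 (ae_of_all _ fun t => (Real.exp_pos _).le)
      (ae_of_all _ Set.Ioc_subset_Ioi_self)
  have hparts := parts_aux x₀ T hT0.le (fun t => F (x t) + u t) x
    (fun t => (1 - t / T) ^ 2 * Real.exp (-ρ * t))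
    (fun t => 2 * (1 - t / T) * (-1 / T) * Real.exp (-ρ * t) + (1 - t / T) ^ 2 *
        (-ρ * Real.exp (-ρ * t))) hfi hx.2 (by fun_prop) (by
      intro t
      have h1 : HasDerivAt (fun t : ℝ => 1 - t / T) (-1 / T) t := by
        have := ((hasDerivAt_id t).div_const T).const_sub 1
        simpa [neg_div] using this
      have h2 : HasDerivAt (fun t : ℝ => Real.exp (-ρ * t)) (-ρ * Real.exp (-ρ * t)) t := by
        have := ((hasDerivAt_id t).const_mul (-ρ)).exp
        simpa [mul_comm] using this
      have := (h1.pow 2).mul h2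
      refine this.congr_deriv ?_
      simp)
  have hx0 : x 0 = x₀ := by
    rw [hx.2 0 le_rfl]
    simp
  have hparts' := hparts
  simp only [div_self hT0.ne', sub_self, hx0] at hparts'
  have hu0 : ∀ᵐ t ∂(volume.restrict (Set.Ioc (0:ℝ) T)), 0 < u t :=
    ae_mono (Measure.restrict_mono
      (Set.Ioc_subset_Ioi_self.trans Set.Ioi_subset_Ici_self) le_rfl) hu.2.2
  refine ⟨(intervalIntegrable_iff_integrableOn_Ioc_of_le hT0.le).1 hI1, ?_⟩
  rw [← intervalIntegral.integral_of_le hT0.le, ← intervalIntegral.integral_of_le hT0.le]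
  have hmono := intervalIntegral.integral_mono_ae_restrict hT0.le hI1
    (((hI3.const_mul 2).sub hI2).add (hI4'.const_mul ((2 + ρ + b₀) ^ 2 / c))) (by
      rw [Measure.restrict_congr_set Ioc_ae_eq_Icc.symm]
      filter_upwards [hu0, ae_restrict_mem measurableSet_Ioc] with t ht htm
      have hψ1 : t / T ≤ 1 := by rw [div_le_one hT0]; exact htm.2
      have hψ0 : 0 ≤ t / T := div_nonneg htm.1.le hT0.le
      exact pointwise_aux ρ c b₀ T hρ hc hb₀ hT (Real.exp (-ρ * t)) (1 - t / T) (x t) (F (x t))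
        (u t) (Real.exp_pos _) (by linarith) (by linarith) (F_bound b₀ F hF hF0 hd hb₀ _) ht)
  rw [intervalIntegral.integral_add ((hI3.const_mul 2).sub hI2) (hI4'.const_mul _),
    intervalIntegral.integral_sub (hI3.const_mul 2) hI2,
    intervalIntegral.integral_const_mul, intervalIntegral.integral_const_mul, hparts] at hmono
  have hq : (2 + ρ + b₀) ^ 2 / c * ∫ t in (0:ℝ)..T, Real.exp (-ρ * t)
      ≤ (2 + ρ + b₀) ^ 2 / c * (1 / ρ) := mul_le_mul_of_nonneg_left hE (by positivity)
  simp [div_self hT0.ne', hx0] at hmono hq ⊢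
  linarith

/-- Uniform bound on the discounted integral of controls whose objective value is
at least `r`; the constant `K` depends only on `ρ`, `c`, `b₀` and `r`. -/
theorem discounted_control_uniform_bound
    (ρ c b₀ : ℝ) (hρ : 0 < ρ) (hc : 0 < c) (hb₀ : 0 < b₀) (r : ℝ) :
    ∃ K : ℝ, 0 < K ∧
      ∀ (x₀ : ℝ) (F : ℝ → ℝ) (u x : ℝ → ℝ),
        0 ≤ x₀ → ContDiff ℝ 1 F → F 0 = 0 →
        (∀ y : ℝ, -b₀ ≤ deriv F y ∧ deriv F y ≤ 0) →
        Admissible u → Trajectory F x₀ u x → ObjIntegrable ρ c u x →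
        r ≤ objective ρ c u x →
        IntegrableOn (fun t => Real.exp (-ρ * t) * u t) (Set.Ioi (0:ℝ)) ∧
          (∫ t in Set.Ioi (0:ℝ), Real.exp (-ρ * t) * u t) ≤ K := by
  set C := (2 + ρ + b₀) ^ 2 / c * (1 / ρ) with hC
  have hC0 : 0 ≤ C := by positivity
  refine ⟨|r| + 1 + C, by positivity, ?_⟩
  intro x₀ F u x hx₀ hF hF0 hd hu hx hobj hr
  set K := |r| + 1 + C with hK
  have hK0 : 0 ≤ K := by positivity
  have hfin := fun n : ℕ => finite_aux ρ c b₀ hρ hc hb₀ ((n:ℝ) + 1)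
    (by have : (0:ℝ) ≤ n := Nat.cast_nonneg n
        linarith) x₀ F u x hx₀ hF hF0 hd hu hx hobj
  have hpos : ∀ n : ℕ, (0:ℝ) < (n:ℝ) + 1 := fun n => by positivity
  -- pointwise limit of the cut-off
  have hlim : ∀ t : ℝ, 0 < t → ∀ a : ℝ, Tendsto (fun n : ℕ =>
      (Set.Ioc 0 ((n:ℝ) + 1)).indicator (fun t => (1 - t / ((n:ℝ) + 1)) ^ 2 * a) t)
      atTop (nhds a) := by
    intro t ht a
    have h1 : Tendsto (fun n : ℕ => (1 - t / ((n:ℝ) + 1)) ^ 2 * a) atTop (nhds a) := by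
      have h2 : Tendsto (fun n : ℕ => t / ((n:ℝ) + 1)) atTop (nhds 0) :=
        tendsto_const_nhds.div_atTop (tendsto_atTop_add_const_right _ _ tendsto_natCast_atTop_atTop)
      have h3 := ((h2.const_sub 1).pow 2).mul_const a
      simpa using h3
    refine h1.congr' ?_
    filter_upwards [tendsto_natCast_atTop_atTop.eventually_ge_atTop t] with n hn
    rw [Set.indicator_of_mem]
    exact ⟨ht, by linarith⟩
  have hrest : ∀ (n : ℕ) (g : ℝ → ℝ),
      ∫ t in Set.Ioi (0:ℝ), (Set.Ioc 0 ((n:ℝ) + 1)).indicator g t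
        = ∫ t in Set.Ioc 0 ((n:ℝ) + 1), g t := by
    intro n g
    rw [setIntegral_indicator measurableSet_Ioc,
      Set.inter_eq_self_of_subset_right Set.Ioc_subset_Ioi_self]
  have hind : ∀ (n : ℕ) (g : ℝ → ℝ) (t : ℝ), (Set.Ioc 0 ((n:ℝ) + 1)).indicator
      (fun s => (1 - s / ((n:ℝ) + 1)) ^ 2 * g s) t =
      (Set.Ioc 0 ((n:ℝ) + 1)).indicator (fun s => (1 - s / ((n:ℝ) + 1)) ^ 2 * g t) t := by
    intro n g t
    by_cases h : t ∈ Set.Ioc 0 ((n:ℝ) + 1)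
    · simp only [Set.indicator_of_mem h]
    · simp only [Set.indicator_of_notMem h]
  -- dominated convergence for the objective
  have hdct : Tendsto (fun n : ℕ => ∫ t in Set.Ioc 0 ((n:ℝ) + 1), (1 - t / ((n:ℝ) + 1)) ^ 2 *
      (Real.exp (-ρ * t) * (Real.log (u t) - c * (x t) ^ 2))) atTop
      (nhds (objective ρ c u x)) := by
    simp_rw [← hrest]
    unfold objective
    refine tendsto_integral_of_dominated_convergence
      (fun t => ‖Real.exp (-ρ * t) * (Real.log (u t) - c * (x t) ^ 2)‖) ?_ hobj.norm ?_ ?_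
    · intro n
      refine AEStronglyMeasurable.indicator ?_ measurableSet_Ioc
      exact AEStronglyMeasurable.mul
        (Continuous.aestronglyMeasurable (by fun_prop)) hobj.aestronglyMeasurable
    · intro n
      refine ae_of_all _ fun t => ?_
      by_cases h : t ∈ Set.Ioc 0 ((n:ℝ) + 1)
      · rw [Set.indicator_of_mem h, norm_mul]
        refine mul_le_of_le_one_left (norm_nonneg _) ?_
        have h1 : t / ((n:ℝ) + 1) ≤ 1 := by rw [div_le_one (hpos n)]; exact h.2
        have h0 : 0 ≤ t / ((n:ℝ) + 1) := div_nonneg h.1.le (hpos n).le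
        rw [Real.norm_eq_abs, abs_of_nonneg (by positivity)]
        exact pow_le_one₀ (by linarith) (by linarith)
      · rw [Set.indicator_of_notMem h]
        simp only [norm_zero]
        positivity
    · filter_upwards [ae_restrict_mem measurableSet_Ioi] with t ht
      simp_rw [hind _ (fun t => Real.exp (-ρ * t) * (Real.log (u t) - c * (x t) ^ 2)) t]
      exact hlim t ht _
  have hev : ∀ᶠ n : ℕ in atTop, ∫ t in Set.Ioc 0 ((n:ℝ) + 1), (1 - t / ((n:ℝ) + 1)) ^ 2 *
      (Real.exp (-ρ * t) * u t) ≤ K := by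
    filter_upwards [hdct.eventually_const_le (show r - 1 < objective ρ c u x by linarith)] with n hn
    have := (hfin n).2
    have := neg_abs_le r
    linarith
  have hu0 : ∀ᵐ t ∂(volume.restrict (Set.Ioi (0:ℝ))), 0 < u t :=
    ae_mono (Measure.restrict_mono Set.Ioi_subset_Ici_self le_rfl) hu.2.2
  have hnn : 0 ≤ᵐ[volume.restrict (Set.Ioi (0:ℝ))] fun t => Real.exp (-ρ * t) * u t := by
    filter_upwards [hu0] with t ht
    exact (mul_pos (Real.exp_pos _) ht).le
  have hmeas : Measurable fun t => Real.exp (-ρ * t) * u t :=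
    (Continuous.measurable (by fun_prop)).mul hu.1
  have hfatou : ∫⁻ t in Set.Ioi (0:ℝ), ENNReal.ofReal (Real.exp (-ρ * t) * u t)
      ≤ ENNReal.ofReal K := by
    let h : ℕ → ℝ → ℝ := fun n => (Set.Ioc 0 ((n:ℝ) + 1)).indicator
      (fun t => (1 - t / ((n:ℝ) + 1)) ^ 2 * (Real.exp (-ρ * t) * u t))
    have hm : ∀ n, Measurable fun t => ENNReal.ofReal (h n t) := by
      intro n
      refine ENNReal.measurable_ofReal.comp (Measurable.indicator ?_ measurableSet_Ioc)
      exact (Continuous.measurable (by fun_prop)).mul hmeas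
    calc ∫⁻ t in Set.Ioi (0:ℝ), ENNReal.ofReal (Real.exp (-ρ * t) * u t)
        = ∫⁻ t in Set.Ioi (0:ℝ), liminf (fun n => ENNReal.ofReal (h n t)) atTop := by
          refine lintegral_congr_ae ?_
          filter_upwards [ae_restrict_mem measurableSet_Ioi] with t ht
          refine (Tendsto.liminf_eq (ENNReal.tendsto_ofReal ?_)).symm
          simp only [h]
          simp_rw [hind _ (fun t => Real.exp (-ρ * t) * u t) t]
          exact hlim t ht _
      _ ≤ liminf (fun n => ∫⁻ t in Set.Ioi (0:ℝ), ENNReal.ofReal (h n t)) atTop :=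
          lintegral_liminf_le hm
      _ ≤ ENNReal.ofReal K := by
          refine liminf_le_of_frequently_le' (Eventually.frequently ?_)
          filter_upwards [hev] with n hn
          have hint : IntegrableOn (h n) (Set.Ioi 0) :=
            ((integrable_indicator_iff measurableSet_Ioc).2 (hfin n).1).integrableOn
          have hnn' : 0 ≤ᵐ[volume.restrict (Set.Ioi (0:ℝ))] h n := by
            filter_upwards [hnn] with t ht
            exact Set.indicator_apply_nonneg fun _ => mul_nonneg (sq_nonneg _) ht
          rw [← ofReal_integral_eq_lintegral_ofReal hint hnn']
          refine ENNReal.ofReal_le_ofReal ?_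
          rw [hrest]
          exact hn
  have hint : IntegrableOn (fun t => Real.exp (-ρ * t) * u t) (Set.Ioi (0:ℝ)) :=
    ⟨hmeas.aestronglyMeasurable,
      (hasFiniteIntegral_iff_ofReal hnn).2 (hfatou.trans_lt ENNReal.ofReal_lt_top)⟩
  refine ⟨hint, ?_⟩
  rw [← ofReal_integral_eq_lintegral_ofReal hint hnn] at hfatou
  exact (ENNReal.ofReal_le_ofReal_iff hK0).1 hfatou
end

section
/- (Uniform localization from above.) Let ρ > 0, c > 0, x₀ ≥ 0, b₀ > 0, and let F : ℝ → ℝ be continuously differentiable with F(0) = 0 and −b₀ ≤ F'(y) ≤ 0 for all y ∈ ℝ. Fix K₁ ≥ 1 and T > 0; let β > 0 be the unique positive solution of log β + b₀·β = −T·b₀, and set N = K₁·β^{-2}·e^{2ρ(T+β)}. Then for every admissible control u and every trajectory x associated with u such that ∫₀^∞ e^{-ρt} u(t) dt ≤ K₁ and t ↦ e^{-ρt}(log u(t) − c·x(t)²) is Lebesgue integrable on [0,∞), there exist an admissible control ũ and a trajectory x̃ associated with ũ satisfying: (i) ũ(t) = min(u(t), N) for a.e. t ∈ [0,T]; (ii)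 0 ≤ x̃(t) ≤ x(t) for all t ≥ 0; (iii) t ↦ e^{-ρt}(log ũ(t) − c·x̃(t)²) is Lebesgue integrable on [0,∞) and B(ũ,x̃) ≥ B(u,x). -/
open MeasureTheory Filter

lemma ula_exp_bound {g : ℝ → ℝ} (hg : Continuous g) {C l : ℝ} (hl : 0 < l) (hC : 0 ≤ C)
    (h : ∀ s, |g s| ≤ C * Real.exp (l * s)) {t : ℝ} (ht : 0 ≤ t) :
    Real.exp (-l * t) * |∫ s in (0:ℝ)..t, g s| ≤ C / l := by
  have h1 : |∫ s in (0:ℝ)..t, g s| ≤ ∫ s in (0:ℝ)..t, C * Real.exp (l * s) := by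
    have := intervalIntegral.norm_integral_le_of_norm_le (μ := volume) (f := g)
      (g := fun s => C * Real.exp (l * s)) ht (ae_of_all _ fun s _ => h s)
      ((by fun_prop : Continuous fun s => C * Real.exp (l * s)).intervalIntegrable _ _)
    simpa using this
  have h2 : (∫ s in (0:ℝ)..t, C * Real.exp (l * s)) = C * ((Real.exp (l * t) - 1) / l) := by
    rw [intervalIntegral.integral_const_mul, intervalIntegral.integral_comp_mul_left _ hl.ne',
      integral_exp]
    simp only [mul_zero, Real.exp_zero, smul_eq_mul]
    ring
  rw [h2] at h1
  have h3 : Real.exp (-l * t) * Real.exp (l * t) = 1 := by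
    rw [← Real.exp_add]; simp
  calc Real.exp (-l * t) * |∫ s in (0:ℝ)..t, g s|
      ≤ Real.exp (-l * t) * (C * ((Real.exp (l * t) - 1) / l)) := by gcongr
    _ = C / l * (Real.exp (-l * t) * Real.exp (l * t) - Real.exp (-l*t)) := by ring
    _ ≤ C / l * 1 := by
        rw [h3]
        have := Real.exp_pos (-l * t)
        gcongr; linarith
    _ = C / l := by ring

lemma ula_exists {F U : ℝ → ℝ} {b₀ K l : ℝ} (hb₀ : 0 < b₀) (hFc : Continuous F) (hF0 : F 0 = 0)
    (hL : ∀ a b, |F a - F b| ≤ b₀ * |a - b|) (hU : Continuous U) (hl : 2 * b₀ ≤ l)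
    (hUb : ∀ t, 0 ≤ t → |U t| ≤ K * Real.exp (l * t)) :
    ∃ X : ℝ → ℝ, Continuous X ∧ ∀ t, 0 ≤ t → X t = U t + ∫ s in (0:ℝ)..t, F (X s) := by
  have hl0 : 0 < l := by linarith
  have hint : ∀ z : BoundedContinuousFunction ℝ ℝ,
      Continuous fun s => F (Real.exp (l * s) * z s) := fun z => by
    have := z.continuous
    fun_prop
  have hgrow : ∀ z : BoundedContinuousFunction ℝ ℝ, ∀ s,
      |F (Real.exp (l * s) * z s)| ≤ (b₀ * ‖z‖) * Real.exp (l * s) := fun z s => by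
    have h1 := hL (Real.exp (l * s) * z s) 0
    rw [hF0, sub_zero, sub_zero, abs_mul, abs_of_pos (Real.exp_pos _)] at h1
    have h2 := z.norm_coe_le_norm s
    rw [Real.norm_eq_abs] at h2
    calc _ ≤ _ := h1
      _ ≤ b₀ * (Real.exp (l * s) * ‖z‖) := by gcongr
      _ = _ := by ring
  let Φ : BoundedContinuousFunction ℝ ℝ → BoundedContinuousFunction ℝ ℝ := fun z =>
    BoundedContinuousFunction.ofNormedAddCommGroup
      (fun t => Real.exp (-l * max t 0) *
        (U (max t 0) + ∫ s in (0:ℝ)..(max t 0), F (Real.exp (l * s) * z s)))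
      (by
        have h := intervalIntegral.continuous_primitive (μ := volume)
          (fun a b => (hint z).intervalIntegrable a b) 0
        have h2 : Continuous fun t : ℝ => max t 0 := by fun_prop
        have h3 := h.comp h2
        have h4 := hU.comp h2
        have h5 : Continuous fun t : ℝ => Real.exp (-l * max t 0) := by fun_prop
        exact h5.mul (h4.add h3))
      (K + (b₀ * ‖z‖) / l)
      (by
        intro t
        have ht : 0 ≤ max t 0 := le_max_right _ _
        generalize max t 0 = r at ht
        have h1 := ula_exp_bound (hint z) hl0 (by positivity) (hgrow z) ht
        have h2 := hUb r ht
        have h3 : Real.exp (-l * r) * Real.exp (l * r) = 1 := by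
          rw [← Real.exp_add]; simp
        have h4 : Real.exp (-l * r) * |U r| ≤ K := by
          calc _ ≤ Real.exp (-l * r) * (K * Real.exp (l * r)) := by gcongr
            _ = K * (Real.exp (-l * r) * Real.exp (l * r)) := by ring
            _ = K := by rw [h3, mul_one]
        rw [Real.norm_eq_abs, abs_mul, abs_of_pos (Real.exp_pos _)]
        calc _ ≤ Real.exp (-l * r) * (|U r| + |∫ s in (0:ℝ)..r, F (Real.exp (l * s) * z s)|) := by
              gcongr; exact abs_add_le _ _
          _ ≤ _ := by rw [mul_add]; linarith)
  have hΦ : ContractingWith (1/2 : NNReal) Φ := by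
    refine ⟨by
      rw [← NNReal.coe_lt_coe]; norm_num, LipschitzWith.of_dist_le_mul fun z z' => ?_⟩
    have hd : 0 ≤ dist z z' := dist_nonneg
    rw [BoundedContinuousFunction.dist_le (by positivity)]
    intro t
    have ht : 0 ≤ max t 0 := le_max_right _ _
    change |Real.exp (-l * max t 0) *
        (U (max t 0) + ∫ s in (0:ℝ)..(max t 0), F (Real.exp (l * s) * z s)) -
        Real.exp (-l * max t 0) *
        (U (max t 0) + ∫ s in (0:ℝ)..(max t 0), F (Real.exp (l * s) * z' s))| ≤ _
    generalize max t 0 = r at ht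
    rw [← mul_sub, add_sub_add_left_eq_sub, ← intervalIntegral.integral_sub
      ((hint z).intervalIntegrable _ _) ((hint z').intervalIntegrable _ _), abs_mul,
      abs_of_pos (Real.exp_pos _)]
    have h1 := ula_exp_bound ((hint z).sub (hint z')) (C := b₀ * dist z z') hl0 (by positivity)
      (fun s => by
        have h1 := hL (Real.exp (l * s) * z s) (Real.exp (l * s) * z' s)
        rw [← mul_sub, abs_mul, abs_of_pos (Real.exp_pos _)] at h1
        have h2 := z.dist_coe_le_dist (g := z') s
        rw [Real.dist_eq] at h2
        calc _ ≤ _ := h1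
          _ ≤ b₀ * (Real.exp (l * s) * dist z z') := by gcongr
          _ = _ := by ring) ht
    refine h1.trans ?_
    rw [div_le_iff₀ hl0]
    push_cast
    nlinarith
  obtain ⟨z, hz, -⟩ := hΦ.exists_fixedPoint 0 (edist_ne_top _ _)
  refine ⟨fun t => Real.exp (l * t) * z t, by have := z.continuous; fun_prop, fun t ht => ?_⟩
  have h1 : Φ z t = z t := by rw [hz]
  change Real.exp (-l * max t 0) *
        (U (max t 0) + ∫ s in (0:ℝ)..(max t 0), F (Real.exp (l * s) * z s)) = z t at h1
  rw [max_eq_left ht] at h1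
  have h3 : Real.exp (l * t) * Real.exp (-l * t) = 1 := by
    rw [← Real.exp_add]; simp
  simp only
  rw [← h1, ← mul_assoc, h3, one_mul]

lemma ula_comp {F x y D : ℝ → ℝ} {b₀ M s τ : ℝ} (hF : ContDiff ℝ 1 F)
    (hF' : ∀ y : ℝ, -b₀ ≤ deriv F y ∧ deriv F y ≤ 0)
    (hx : Continuous x) (hy : Continuous y) (hs : s ≤ τ)
    (hv : ∀ t, s ≤ t → t ≤ τ →
      x t - y t - D t = x s - y s - D s + ∫ r in s..t, (F (x r) - F (y r)))
    (hD : ∀ t, s ≤ t → t ≤ τ → D t ≤ M) (h0 : 0 ≤ x s - y s - D s + M) :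
    D τ - M + Real.exp (-b₀ * (τ - s)) * (x s - y s - D s + M) ≤ x τ - y τ := by
  have hFc : Continuous F := hF.continuous
  have hdF : Continuous (deriv F) := hF.continuous_deriv le_rfl
  let a : ℝ → ℝ := fun t => - ∫ θ in (0:ℝ)..1, deriv F (y t + θ * (x t - y t))
  have ha : Continuous a := by
    apply Continuous.neg
    apply intervalIntegral.continuous_parametric_intervalIntegral_of_continuous'
    fun_prop
  have haF : ∀ t, F (x t) - F (y t) = - a t * (x t - y t) := by
    intro t
    have h := intervalIntegral.integral_eq_sub_of_hasDerivAt (a := 0) (b := 1)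
      (f := fun θ => F (y t + θ * (x t - y t)))
      (f' := fun θ => deriv F (y t + θ * (x t - y t)) * (x t - y t))
      (fun θ _ => by
        have h1 : HasDerivAt (fun θ => y t + θ * (x t - y t)) (x t - y t) θ := by
          simpa using ((hasDerivAt_id θ).mul_const (x t - y t)).const_add (y t)
        exact ((hF.differentiable one_ne_zero _).hasDerivAt).comp θ h1)
      ((by fun_prop : Continuous _).intervalIntegrable _ _)
    rw [intervalIntegral.integral_mul_const] at h
    simp only [a, neg_neg]
    rw [h]; simp
  have ha0 : ∀ t, 0 ≤ a t := fun t => by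
    have : (∫ θ in (0:ℝ)..1, deriv F (y t + θ * (x t - y t))) ≤ ∫ θ in (0:ℝ)..1, (0:ℝ) :=
      intervalIntegral.integral_mono_on (by norm_num)
        ((by fun_prop : Continuous _).intervalIntegrable _ _) (by simp) (fun θ _ => (hF' _).2)
    simp at this
    simp only [a]; linarith
  have hab : ∀ t, a t ≤ b₀ := fun t => by
    have : (∫ θ in (0:ℝ)..1, (-b₀)) ≤ (∫ θ in (0:ℝ)..1, deriv F (y t + θ * (x t - y t))) :=
      intervalIntegral.integral_mono_on (by norm_num) (by simp)
        ((by fun_prop : Continuous _).intervalIntegrable _ _) (fun θ _ => (hF' _).1)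
    simp at this
    simp only [a]; linarith
  let A : ℝ → ℝ := fun t => ∫ r in s..t, a r
  have hA : ∀ t, HasDerivAt A (a t) t := fun t => ha.integral_hasStrictDerivAt s t |>.hasDerivAt
  have hcF : Continuous fun r => F (x r) - F (y r) := by fun_prop
  let p : ℝ → ℝ := fun t => x s - y s - D s + M + ∫ r in s..t, (F (x r) - F (y r))
  have hp : ∀ t, HasDerivAt p (F (x t) - F (y t)) t := fun t =>
    (hcF.integral_hasStrictDerivAt s t).hasDerivAt.const_add _
  let q : ℝ → ℝ := fun t => p t * Real.exp (A t)
  have hq : ∀ t, HasDerivAt q ((F (x t) - F (y t)) * Real.exp (A t)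
      + p t * (Real.exp (A t) * a t)) t := fun t => (hp t).mul (hA t).exp
  have hmono : MonotoneOn q (Set.Icc s τ) := by
    apply monotoneOn_of_deriv_nonneg (convex_Icc _ _)
      (fun t _ => (hq t).continuousAt.continuousWithinAt)
      (fun t _ => (hq t).differentiableAt.differentiableWithinAt)
    intro t ht
    rw [interior_Icc] at ht
    rw [(hq t).deriv, haF]
    have h1 := hv t ht.1.le ht.2.le
    have h2 := hD t ht.1.le ht.2.le
    have h3 : p t = x t - y t + (M - D t) := by simp only [p]; linarith
    rw [h3]
    have : -a t * (x t - y t) * Real.exp (A t) + (x t - y t + (M - D t)) * (Real.exp (A t) * a t)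
      = (M - D t) * (Real.exp (A t) * a t) := by ring
    rw [this]
    have := ha0 t
    have := Real.exp_pos (A t)
    have : 0 ≤ M - D t := by linarith
    positivity
  have h1 := hmono (Set.left_mem_Icc.2 hs) (Set.right_mem_Icc.2 hs) hs
  simp only [q, p, A, intervalIntegral.integral_same, Real.exp_zero, mul_one, add_zero] at h1
  have h2 := hv τ hs le_rfl
  have hAb : A τ ≤ b₀ * (τ - s) := by
    have := intervalIntegral.integral_mono_on hs (ha.intervalIntegrable (μ := volume) s τ)
      (intervalIntegrable_const (c := b₀)) (fun t _ => hab t)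
    simp at this
    simp only [A]; linarith
  have h3 : Real.exp (-b₀ * (τ - s)) ≤ Real.exp (-A τ) := by
    apply Real.exp_le_exp.2; linarith
  have h4 : Real.exp (-A τ) * Real.exp (A τ) = 1 := by rw [← Real.exp_add]; simp
  have h5 : x s - y s - D s + M + (∫ r in s..τ, (F (x r) - F (y r))) = x τ - y τ - D τ + M := by
    linarith
  rw [h5] at h1
  have h6 : Real.exp (-A τ) * (x s - y s - D s + M) ≤ x τ - y τ - D τ + M := by
    calc _ ≤ Real.exp (-A τ) * ((x τ - y τ - D τ + M) * Real.exp (A τ)) := by gcongr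
      _ = (Real.exp (-A τ) * Real.exp (A τ)) * (x τ - y τ - D τ + M) := by ring
      _ = _ := by rw [h4, one_mul]
  have h7 := mul_le_mul_of_nonneg_right h3 h0
  linarith

lemma ula_weight {f : ℝ → ℝ} {ρ t : ℝ} (hρ : 0 < ρ) (ht : 0 ≤ t)
    (hf : ∀ᵐ s ∂(volume.restrict (Set.Ioi (0:ℝ))), 0 ≤ f s)
    (hi : IntegrableOn (fun s => Real.exp (-ρ * s) * f s) (Set.Ioi 0))
    (hit : IntegrableOn f (Set.Ioc 0 t)) :
    (∫ s in (0:ℝ)..t, f s) ≤ Real.exp (ρ * t) * ∫ s in Set.Ioi (0:ℝ), Real.exp (-ρ * s) * f s := by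
  have hsub : Set.Ioc 0 t ⊆ Set.Ioi (0:ℝ) := Set.Ioc_subset_Ioi_self
  have h1 : (∫ s in Set.Ioc 0 t, Real.exp (-ρ * s) * f s)
      ≤ ∫ s in Set.Ioi (0:ℝ), Real.exp (-ρ * s) * f s := by
    apply setIntegral_mono_set hi
    · filter_upwards [hf] with s hs
      exact mul_nonneg (Real.exp_pos _).le hs
    · exact hsub.eventuallyLE
  have h2 : (∫ s in (0:ℝ)..t, f s)
      ≤ ∫ s in Set.Ioc 0 t, Real.exp (ρ * t) * (Real.exp (-ρ * s) * f s) := by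
    rw [intervalIntegral.integral_of_le ht]
    apply setIntegral_mono_ae_restrict hit ((hi.mono_set hsub).const_mul _)
    filter_upwards [ae_restrict_of_ae_restrict_of_subset hsub hf, ae_restrict_mem measurableSet_Ioc]
      with s hs hm
    rw [← mul_assoc, ← Real.exp_add]
    have : 1 ≤ Real.exp (ρ * t + -ρ * s) := by
      apply Real.one_le_exp; nlinarith [hm.2]
    nlinarith
  rw [integral_const_mul] at h2
  refine h2.trans ?_
  gcongr

noncomputable def ulaCtrl (u : ℝ → ℝ) (N I T β : ℝ) : ℝ → ℝ := fun t =>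
  if t ≤ T then min (u t) N else if t ≤ T + β then u t + I else u t

lemma ula_adm {u : ℝ → ℝ} {N I T β : ℝ} (hu : Admissible u) (hN : 0 < N) (hI : 0 ≤ I) :
    Admissible (ulaCtrl u N I T β) := by
  obtain ⟨hm, hi, hp⟩ := hu
  have hmeas : Measurable (ulaCtrl u N I T β) :=
    Measurable.ite measurableSet_Iic (hm.min measurable_const)
      (Measurable.ite measurableSet_Iic (hm.add_const _) hm)
  refine ⟨hmeas, fun S hS => ?_, ?_⟩
  · have h1 := hi S hS
    have h2 : IntegrableOn (fun t => |u t| + (N + I)) (Set.Icc 0 S) := by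
      apply h1.abs.add
      exact integrableOn_const (by simp)
    refine Integrable.mono' h2 hmeas.aestronglyMeasurable (ae_of_all _ fun t => ?_)
    simp only [ulaCtrl, Real.norm_eq_abs]
    have ha := abs_nonneg (u t)
    split_ifs
    · rcases min_cases (u t) N with h | h
      · rw [h.1]; linarith
      · rw [h.1, abs_of_pos hN]; linarith
    · refine (abs_add_le _ _).trans ?_
      rw [abs_of_nonneg hI]; linarith
    · linarith
  · filter_upwards [hp] with t ht
    simp only [ulaCtrl]
    split_ifs
    · exact lt_min ht hN
    · linarith
    · exact ht

lemma ula_Ioc {u : ℝ → ℝ} (hu : Admissible u) {a b : ℝ} (ha : 0 ≤ a) :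
    IntegrableOn u (Set.Ioc a b) := by
  refine (hu.2.1 (max b 1) (by positivity)).mono_set fun t ht => ⟨?_, ?_⟩
  · linarith [ht.1]
  · exact ht.2.trans (le_max_left _ _)

lemma ula_ii {u : ℝ → ℝ} (hu : Admissible u) {a b : ℝ} (ha : 0 ≤ a) (hab : a ≤ b) :
    IntervalIntegrable u volume a b :=
  (intervalIntegrable_iff_integrableOn_Ioc_of_le hab).2 (ula_Ioc hu ha)

lemma ula_pos {u : ℝ → ℝ} (hu : Admissible u) :
    ∀ᵐ s ∂(volume.restrict (Set.Ioi (0:ℝ))), 0 < u s :=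
  ae_restrict_of_ae_restrict_of_subset Set.Ioi_subset_Ici_self hu.2.2

lemma ula_budget {ρ K₁ T β N I : ℝ} {u : ℝ → ℝ} (hρ : 0 < ρ) (hu : Admissible u)
    (hT : 0 < T) (hβ : 0 < β) (hN : 0 < N)
    (hI : I = ∫ s in (0:ℝ)..T, (u s - min (u s) N))
    (hw : IntegrableOn (fun t => Real.exp (-ρ * t) * u t) (Set.Ioi (0:ℝ)))
    (hK : (∫ t in Set.Ioi (0:ℝ), Real.exp (-ρ * t) * u t) ≤ K₁) :
    (∫ s in T..(T+β), u s) + I ≤ K₁ * Real.exp (ρ * (T + β)) := by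
  have hmin : IntegrableOn (fun s => u s - min (u s) N) (Set.Ioc 0 T) := by
    have h1 := ula_Ioc hu (a := 0) (b := T) le_rfl
    exact h1.sub (h1.inf (integrableOn_const (by simp)))
  have h1 : I ≤ ∫ s in (0:ℝ)..T, u s := by
    rw [hI, intervalIntegral.integral_of_le hT.le, intervalIntegral.integral_of_le hT.le]
    apply setIntegral_mono_ae_restrict hmin (ula_Ioc hu le_rfl)
    filter_upwards [ae_restrict_of_ae_restrict_of_subset Set.Ioc_subset_Ioi_self (ula_pos hu)]
      with s hs
    have := lt_min hs hN
    linarith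
  have h2 := intervalIntegral.integral_add_adjacent_intervals
    (ula_ii hu le_rfl hT.le) (ula_ii hu hT.le (by linarith : T ≤ T + β))
  have h3 := ula_weight hρ (t := T + β) (by positivity)
    ((ula_pos hu).mono fun _ h => h.le) hw (ula_Ioc hu le_rfl)
  have h4 := mul_le_mul_of_nonneg_left hK (Real.exp_pos (ρ * (T + β))).le
  linarith

lemma ula_log1 {u N : ℝ} (hu : 0 < u) (hN : 0 < N) :
    -((u - min u N) / N) ≤ Real.log (min u N) - Real.log u := by
  rcases min_cases u N with h | h
  · rw [h.1]; simp
  · rw [h.1]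
    have h1 := Real.log_le_sub_one_of_pos (div_pos hu hN)
    rw [Real.log_div hu.ne' hN.ne'] at h1
    have : (u - N) / N = u / N - 1 := by field_simp
    rw [this]; linarith

lemma ula_log2 {u I M : ℝ} (hu : 0 < u) (hI : 0 ≤ I) (hM : 0 < M) :
    I * (2 / M - (u + I) / M ^ 2) ≤ Real.log (u + I) - Real.log u := by
  have hs : 0 < u + I := by linarith
  have h1 := Real.log_le_sub_one_of_pos (div_pos hu hs)
  rw [Real.log_div hu.ne' hs.ne'] at h1
  have h2 : u / (u + I) - 1 = - (I * (1 / (u + I))) := by field_simp; ring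
  have h3 : 2 / M - (u + I) / M ^ 2 ≤ 1 / (u + I) := by
    have : 1 / (u + I) - (2 / M - (u + I) / M ^ 2) = (M - (u + I)) ^ 2 / ((u + I) * M ^ 2) := by
      field_simp; ring
    have h4 : 0 ≤ (M - (u + I)) ^ 2 / ((u + I) * M ^ 2) := by positivity
    linarith
  have h4 := mul_le_mul_of_nonneg_left h3 hI
  linarith

lemma ula_phi {ρ K₁ T β N I : ℝ} {u : ℝ → ℝ} (hu : Admissible u)
    (hT : 0 < T) (hβ : 0 < β) (hβ1 : β ≤ 1) (hK₁ : 1 ≤ K₁) (hI0 : 0 ≤ I)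
    (hN : N = K₁ * β⁻¹ ^ 2 * Real.exp (2 * ρ * (T + β)))
    (hI : I = ∫ s in (0:ℝ)..T, (u s - min (u s) N))
    (hB : (∫ s in T..(T+β), u s) + I ≤ K₁ * Real.exp (ρ * (T + β))) (hρ : 0 < ρ) :
    ∃ φ : ℝ → ℝ, IntegrableOn φ (Set.Ioi 0) ∧ 0 ≤ ∫ t in Set.Ioi (0:ℝ), φ t ∧
      ∀ᵐ t ∂(volume.restrict (Set.Ioi (0:ℝ))),
        φ t ≤ Real.exp (-ρ * t) * (Real.log (ulaCtrl u N I T β t) - Real.log (u t)) := by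
  have hN0 : 0 < N := by rw [hN]; positivity
  set E := Real.exp (ρ * (T + β)) with hE
  have hE0 : 0 < E := Real.exp_pos _
  set M := K₁ * E / β with hM
  have hM0 : 0 < M := by positivity
  let f1 : ℝ → ℝ := fun t => -((u t - min (u t) N) / N)
  let f2 : ℝ → ℝ := fun t => E⁻¹ * (I * (2 / M - (u t + I) / M ^ 2))
  have hf1 : IntegrableOn f1 (Set.Ioc 0 T) := by
    have h1 := ula_Ioc hu (a := 0) (b := T) le_rfl
    exact ((h1.sub (h1.inf (integrableOn_const (by simp)))).div_const _).neg
  have hc : ∀ C : ℝ, IntegrableOn (fun _ => C) (Set.Ioc T (T + β)) :=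
    fun C => integrableOn_const (by simp)
  have hf2 : IntegrableOn f2 (Set.Ioc T (T + β)) := by
    have h1 := ula_Ioc hu (a := T) (b := T + β) hT.le
    exact (((hc _).sub ((h1.add (hc _)).div_const _)).const_mul _).const_mul _
  have hs1 : Set.Ioc 0 T ⊆ Set.Ioi (0:ℝ) := Set.Ioc_subset_Ioi_self
  have hs2 : Set.Ioc T (T + β) ⊆ Set.Ioi (0:ℝ) := fun t ht => lt_trans hT ht.1
  have hi1 : IntegrableOn ((Set.Ioc 0 T).indicator f1) (Set.Ioi 0) :=
    ((integrable_indicator_iff measurableSet_Ioc).2 hf1).integrableOn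
  have hi2 : IntegrableOn ((Set.Ioc T (T + β)).indicator f2) (Set.Ioi 0) :=
    ((integrable_indicator_iff measurableSet_Ioc).2 hf2).integrableOn
  refine ⟨fun t => (Set.Ioc 0 T).indicator f1 t + (Set.Ioc T (T + β)).indicator f2 t,
    hi1.add hi2, ?_, ?_⟩
  · rw [integral_add hi1 hi2, setIntegral_indicator measurableSet_Ioc,
      setIntegral_indicator measurableSet_Ioc, Set.inter_eq_right.2 hs1, Set.inter_eq_right.2 hs2]
    have e1 : (∫ t in Set.Ioc 0 T, f1 t) = - (I / N) := by
      simp only [f1]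
      rw [integral_neg, integral_div, ← intervalIntegral.integral_of_le hT.le, ← hI]
    set J := ∫ s in T..(T+β), u s with hJ
    have e2 : (∫ t in Set.Ioc T (T + β), f2 t)
        = E⁻¹ * (I * (β * (2 / M) - (J + β * I) / M ^ 2)) := by
      simp only [f2]
      rw [integral_const_mul, integral_const_mul]
      have h1 := ula_ii hu hT.le (by linarith : T ≤ T + β)
      rw [← intervalIntegral.integral_of_le (by linarith : T ≤ T + β),
        intervalIntegral.integral_sub (by simp) ((h1.add (by simp)).div_const _),
        intervalIntegral.integral_div, intervalIntegral.integral_div,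
        intervalIntegral.integral_add h1 (by simp),
        intervalIntegral.integral_const, intervalIntegral.integral_const, ← hJ]
      simp only [smul_eq_mul, add_sub_cancel_left]
      ring
    rw [e1, e2]
    have h1 : J + β * I ≤ β * M := by
      have : β * M = K₁ * E := by rw [hM]; field_simp
      rw [this]
      nlinarith
    have h2 : (J + β * I) / M ^ 2 ≤ β * M / M ^ 2 := by gcongr
    have h3 : β * M / M ^ 2 = β / M := by field_simp
    have hNE : N = E * M / β := by
      rw [hN, hM, hE]
      have : Real.exp (2 * ρ * (T + β)) = Real.exp (ρ * (T + β)) * Real.exp (ρ * (T + β)) := by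
        rw [← Real.exp_add]; ring_nf
      rw [this]; field_simp
    have h4 : I / N = E⁻¹ * (I * (β / M)) := by
      rw [hNE]; field_simp
    rw [h4]
    have h5 : β / M ≤ β * (2 / M) - (J + β * I) / M ^ 2 := by
      have : β * (2 / M) = 2 * (β / M) := by ring
      linarith
    have h6 : E⁻¹ * (I * (β / M)) ≤ E⁻¹ * (I * (β * (2 / M) - (J + β * I) / M ^ 2)) := by gcongr
    linarith
  · filter_upwards [ula_pos hu, ae_restrict_mem measurableSet_Ioi] with t hp h0
    have h0' : (0:ℝ) < t := h0
    by_cases h1 : t ≤ T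
    · have m1 : t ∈ Set.Ioc 0 T := ⟨h0, h1⟩
      have m2 : t ∉ Set.Ioc T (T + β) := fun h => absurd h.1 (not_lt.2 h1)
      rw [Set.indicator_of_mem m1, Set.indicator_of_notMem m2, add_zero]
      simp only [ulaCtrl, if_pos h1, f1]
      have h2 := ula_log1 hp hN0
      have h3 : 0 ≤ (u t - min (u t) N) / N :=
        div_nonneg (sub_nonneg.2 (min_le_left _ _)) hN0.le
      have h4 : Real.exp (-ρ * t) ≤ 1 := by
        apply Real.exp_le_one_iff.2; nlinarith
      have h5 := mul_le_mul_of_nonneg_left h2 (Real.exp_pos (-ρ * t)).le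
      nlinarith
    · have m1 : t ∉ Set.Ioc 0 T := fun h => h1 h.2
      by_cases h2 : t ≤ T + β
      · have m2 : t ∈ Set.Ioc T (T + β) := ⟨not_le.1 h1, h2⟩
        rw [Set.indicator_of_notMem m1, Set.indicator_of_mem m2, zero_add]
        simp only [ulaCtrl, if_neg h1, if_pos h2, f2]
        have h3 := ula_log2 hp hI0 hM0
        have h4 : E⁻¹ ≤ Real.exp (-ρ * t) := by
          rw [hE, ← Real.exp_neg]
          apply Real.exp_le_exp.2; nlinarith
        have h5 : 0 ≤ Real.log (u t + I) - Real.log (u t) :=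
          sub_nonneg.2 (Real.log_le_log hp (by linarith))
        exact (mul_le_mul_of_nonneg_left h3 (inv_pos.2 hE0).le).trans
          (mul_le_mul_of_nonneg_right h4 h5)
      · have m2 : t ∉ Set.Ioc T (T + β) := fun h => h2 h.2
        rw [Set.indicator_of_notMem m1, Set.indicator_of_notMem m2]
        simp [ulaCtrl, if_neg h1, if_neg h2]

lemma ula_obj {ρ c N I T β : ℝ} {u x y φ : ℝ → ℝ} (hρ : 0 < ρ) (hc : 0 < c) (hN : 0 < N)
    (hI : 0 ≤ I) (hu : Admissible u)
    (hx : ContinuousOn x (Set.Ici 0)) (hy : ContinuousOn y (Set.Ici 0))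
    (hyx : ∀ t : ℝ, 0 ≤ t → 0 ≤ y t ∧ y t ≤ x t)
    (hw : IntegrableOn (fun t => Real.exp (-ρ * t) * u t) (Set.Ioi (0:ℝ)))
    (ho : ObjIntegrable ρ c u x)
    (hφi : IntegrableOn φ (Set.Ioi 0)) (hφ0 : 0 ≤ ∫ t in Set.Ioi (0:ℝ), φ t)
    (hφ : ∀ᵐ t ∂(volume.restrict (Set.Ioi (0:ℝ))),
        φ t ≤ Real.exp (-ρ * t) * (Real.log (ulaCtrl u N I T β t) - Real.log (u t))) :
    ObjIntegrable ρ c (ulaCtrl u N I T β) y ∧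
      objective ρ c u x ≤ objective ρ c (ulaCtrl u N I T β) y := by
  have hua := ula_adm (T := T) (β := β) hu hN hI
  have hes : Measurable fun t : ℝ => Real.exp (-ρ * t) := by fun_prop
  have hxm : AEStronglyMeasurable x (volume.restrict (Set.Ioi (0:ℝ))) :=
    (hx.mono Set.Ioi_subset_Ici_self).aestronglyMeasurable measurableSet_Ioi
  have hym : AEStronglyMeasurable y (volume.restrict (Set.Ioi (0:ℝ))) :=
    (hy.mono Set.Ioi_subset_Ici_self).aestronglyMeasurable measurableSet_Ioi
  have hexp : IntegrableOn (fun t : ℝ => Real.exp (-ρ * t)) (Set.Ioi 0) :=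
    integrableOn_exp_mul_Ioi (by linarith) 0
  have hX : IntegrableOn (fun t => Real.exp (-ρ * t) * (c * x t ^ 2)) (Set.Ioi 0) := by
    refine Integrable.mono' (hw.sub ho)
      (hes.aestronglyMeasurable.mul ((hxm.pow 2).const_mul c)) ?_
    filter_upwards [ula_pos hu] with t hp
    have h1 := Real.log_le_sub_one_of_pos hp
    have h2 : 0 ≤ Real.exp (-ρ * t) * (c * x t ^ 2) := by positivity
    rw [Real.norm_eq_abs, abs_of_nonneg h2]
    have := Real.exp_pos (-ρ * t)
    simp only [Pi.sub_apply]
    nlinarith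
  have hLu : IntegrableOn (fun t => Real.exp (-ρ * t) * Real.log (u t)) (Set.Ioi 0) := by
    refine (ho.add hX).congr (ae_of_all _ fun t => ?_)
    simp only [Pi.add_apply]; ring
  have hY : IntegrableOn (fun t => Real.exp (-ρ * t) * (c * y t ^ 2)) (Set.Ioi 0) := by
    refine Integrable.mono' hX
      (hes.aestronglyMeasurable.mul ((hym.pow 2).const_mul c)) ?_
    filter_upwards [ae_restrict_mem measurableSet_Ioi] with t ht
    have h2 : 0 ≤ Real.exp (-ρ * t) * (c * y t ^ 2) := by positivity
    rw [Real.norm_eq_abs, abs_of_nonneg h2]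
    have := hyx t (le_of_lt ht)
    have h3 := this.1
    have h4 := this.2
    gcongr
  have hLt : IntegrableOn (fun t => Real.exp (-ρ * t) * Real.log (ulaCtrl u N I T β t))
      (Set.Ioi 0) := by
    refine Integrable.mono' ((hLu.abs.add hw).add (hexp.mul_const (|Real.log N| + I)))
      (hes.aestronglyMeasurable.mul (hua.1.log.aestronglyMeasurable)) ?_
    filter_upwards [ula_pos hu, ula_pos hua] with t hp hq
    have he := Real.exp_pos (-ρ * t)
    simp only [Pi.add_apply, abs_mul, abs_of_pos he, Real.norm_eq_abs]
    rw [← mul_add, ← mul_add]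
    apply mul_le_mul_of_nonneg_left _ he.le
    have a1 := abs_nonneg (Real.log (u t))
    have a2 := abs_nonneg (Real.log N)
    simp only [ulaCtrl]
    split_ifs
    · rcases min_cases (u t) N with h | h
      · rw [h.1]; linarith
      · rw [h.1]; linarith
    · have h1 := Real.log_le_sub_one_of_pos (by linarith : 0 < u t + I)
      have h2 := Real.log_le_log hp (by linarith : u t ≤ u t + I)
      have h3 := neg_abs_le (Real.log (u t))
      rw [abs_le]; constructor <;> linarith
    · linarith
  have ho' : ObjIntegrable ρ c (ulaCtrl u N I T β) y := by
    refine (hLt.sub hY).congr (ae_of_all _ fun t => ?_)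
    simp only [Pi.sub_apply]; ring
  refine ⟨ho', ?_⟩
  have h1 : (∫ t in Set.Ioi (0:ℝ), φ t) ≤ objective ρ c (ulaCtrl u N I T β) y
      - objective ρ c u x := by
    unfold objective
    rw [← integral_sub ho' ho]
    apply integral_mono_ae hφi (ho'.sub ho)
    filter_upwards [hφ, ae_restrict_mem measurableSet_Ioi] with t h ht
    have := hyx t (le_of_lt ht)
    have h3 : y t ^ 2 ≤ x t ^ 2 := by
      have h3 := this.1
      have h4 := this.2
      gcongr
    have he := Real.exp_pos (-ρ * t)
    have h4 : 0 ≤ Real.exp (-ρ * t) * (c * (x t ^ 2 - y t ^ 2)) := by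
      have : 0 ≤ x t ^ 2 - y t ^ 2 := by linarith
      positivity
    simp only [Pi.sub_apply]
    linarith
  linarith

lemma ula_cont {v : ℝ → ℝ} (hv : Admissible v) :
    ∃ V : ℝ → ℝ, Continuous V ∧ ∀ t, 0 ≤ t → V t = ∫ s in (0:ℝ)..t, v s := by
  have hii : ∀ a b : ℝ, IntervalIntegrable ((Set.Ici (0:ℝ)).indicator v) volume a b := by
    intro a b
    rw [intervalIntegrable_iff]
    have h1 : IntegrableOn ((Set.Ici (0:ℝ)).indicator v) (Set.Icc (min a b) (max a b)) := by
      rw [IntegrableOn, integrable_indicator_iff measurableSet_Ici, IntegrableOn,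
        Measure.restrict_restrict measurableSet_Ici]
      refine (hv.2.1 (max (max a b) 1) (by positivity)).mono_set fun t ht => ⟨ht.1, ?_⟩
      exact ht.2.2.trans (le_max_left _ _)
    exact h1.mono_set Set.Ioc_subset_Icc_self
  refine ⟨fun t => ∫ s in (0:ℝ)..t, (Set.Ici (0:ℝ)).indicator v s,
    intervalIntegral.continuous_primitive hii 0, fun t ht => ?_⟩
  apply intervalIntegral.integral_congr
  intro s hs
  rw [Set.uIcc_of_le ht] at hs
  exact Set.indicator_of_mem (show s ∈ Set.Ici (0:ℝ) from hs.1) v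

lemma ula_traj {F v x : ℝ → ℝ} {x₀ : ℝ} (hF : Continuous F) (hv : Admissible v)
    (hx : Continuous x) {t : ℝ} (ht : 0 ≤ t) :
    (∫ s in (0:ℝ)..t, (F (x s) + v s)) = (∫ s in (0:ℝ)..t, F (x s)) + ∫ s in (0:ℝ)..t, v s :=
  intervalIntegral.integral_add ((hF.comp hx).intervalIntegrable _ _) (ula_ii hv le_rfl ht)

/-- Uniform localization from above: a control in a maximizing sequence can be
truncated above by `N = K₁ β⁻² e^{2ρ(T+β)}` on `[0,T]` without decreasing the
objective value, while not increasing the trajectory. -/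
theorem uniform_localization_above
    (ρ c x₀ b₀ K₁ T β N : ℝ) (F : ℝ → ℝ)
    (hρ : 0 < ρ) (hc : 0 < c) (hx₀ : 0 ≤ x₀) (hb₀ : 0 < b₀)
    (hF : ContDiff ℝ 1 F) (hF0 : F 0 = 0)
    (hF' : ∀ y : ℝ, -b₀ ≤ deriv F y ∧ deriv F y ≤ 0)
    (hK₁ : 1 ≤ K₁) (hT : 0 < T)
    (hβpos : 0 < β) (hβeq : Real.log β + b₀ * β = -T * b₀)
    (hN : N = K₁ * β⁻¹ ^ 2 * Real.exp (2 * ρ * (T + β))) :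
    ∀ u x : ℝ → ℝ, Admissible u → Trajectory F x₀ u x →
      IntegrableOn (fun t => Real.exp (-ρ * t) * u t) (Set.Ioi (0:ℝ)) →
      (∫ t in Set.Ioi (0:ℝ), Real.exp (-ρ * t) * u t) ≤ K₁ →
      ObjIntegrable ρ c u x →
      ∃ ut xt : ℝ → ℝ,
        Admissible ut ∧ Trajectory F x₀ ut xt ∧
        (∀ᵐ t ∂(volume.restrict (Set.Icc (0:ℝ) T)), ut t = min (u t) N) ∧
        (∀ t : ℝ, 0 ≤ t → 0 ≤ xt t ∧ xt t ≤ x t) ∧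
        ObjIntegrable ρ c ut xt ∧
        objective ρ c u x ≤ objective ρ c ut xt := by
  intro u x hu htr hw hK ho
  have hN0 : 0 < N := by rw [hN]; positivity
  have hβe : β = Real.exp (-b₀ * (T + β)) := by
    rw [← Real.exp_log hβpos]
    congr 1
    rw [Real.exp_log hβpos]; linarith
  have hβ1 : β ≤ 1 := by
    rw [hβe]; apply Real.exp_le_one_iff.2
    have : 0 < b₀ * (T + β) := by positivity
    linarith
  have hFc : Continuous F := hF.continuous
  have hL : ∀ a b, |F a - F b| ≤ b₀ * |a - b| := by
    intro a b
    have := Convex.norm_image_sub_le_of_norm_deriv_le (f := F) (C := b₀) (s := Set.univ)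
      (fun z _ => hF.differentiable one_ne_zero z)
      (fun z _ => by
        rw [Real.norm_eq_abs, abs_le]
        exact ⟨(hF' z).1, (hF' z).2.trans hb₀.le⟩) convex_univ (Set.mem_univ b) (Set.mem_univ a)
    simpa using this
  obtain ⟨I, hI⟩ : ∃ I, I = ∫ s in (0:ℝ)..T, (u s - min (u s) N) := ⟨_, rfl⟩
  have hI0 : 0 ≤ I := by
    rw [hI]
    exact intervalIntegral.integral_nonneg hT.le fun s _ => sub_nonneg.2 (min_le_left _ _)
  have hB := ula_budget hρ hu hT hβpos hN0 hI hw hK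
  obtain ⟨φ, hφi, hφ0, hφ⟩ := ula_phi hu hT hβpos hβ1 hK₁ hI0 hN hI hB hρ
  obtain ⟨v, hv⟩ : ∃ v, v = ulaCtrl u N I T β := ⟨_, rfl⟩
  have hva : Admissible v := hv ▸ ula_adm hu hN0 hI0
  have hvv : ∀ t, v t = if t ≤ T then min (u t) N else if t ≤ T + β then u t + I else u t :=
    fun t => by rw [hv]; rfl
  -- the discounted integral of v
  have hvw : IntegrableOn (fun t => Real.exp (-ρ * t) * |v t|) (Set.Ioi (0:ℝ)) := by
    have hexp : IntegrableOn (fun t : ℝ => Real.exp (-ρ * t)) (Set.Ioi 0) :=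
      integrableOn_exp_mul_Ioi (by linarith) 0
    have hes : Measurable fun t : ℝ => Real.exp (-ρ * t) := by fun_prop
    refine Integrable.mono' (hw.add (hexp.mul_const I))
      (hes.mul hva.1.abs).aestronglyMeasurable ?_
    filter_upwards [ula_pos hva, ula_pos hu] with t hp hq
    have he := Real.exp_pos (-ρ * t)
    rw [abs_of_pos hp, Real.norm_eq_abs, abs_of_pos (mul_pos he hp)]
    simp only [Pi.add_apply]
    rw [← mul_add]
    apply mul_le_mul_of_nonneg_left _ he.le
    rw [hvv]
    split_ifs
    · exact (min_le_left _ _).trans (by linarith)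
    · exact le_rfl
    · linarith
  obtain ⟨V, hVc, hV⟩ := ula_cont hva
  obtain ⟨y, hyc, hy⟩ := ula_exists (F := F) (U := fun t => x₀ + V t)
    (K := x₀ + ∫ t in Set.Ioi (0:ℝ), Real.exp (-ρ * t) * |v t|) (l := ρ + 2 * b₀) hb₀ hFc hF0 hL
    (continuous_const.add hVc) (by linarith) (by
      intro t ht
      have h1 := ula_weight hρ ht (ae_of_all _ fun s => abs_nonneg (v s)) hvw
        (ula_Ioc hva le_rfl).abs
      have h2 : |V t| ≤ ∫ s in (0:ℝ)..t, |v s| := by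
        rw [hV t ht]; exact intervalIntegral.abs_integral_le_integral_abs ht
      have h3 : Real.exp (ρ * t) ≤ Real.exp ((ρ + 2 * b₀) * t) := by
        apply Real.exp_le_exp.2; nlinarith [mul_nonneg hb₀.le ht]
      have h4 : 1 ≤ Real.exp ((ρ + 2 * b₀) * t) := by
        apply Real.one_le_exp; positivity
      have h5 : 0 ≤ ∫ t in Set.Ioi (0:ℝ), Real.exp (-ρ * t) * |v t| :=
        integral_nonneg fun s => by positivity
      have h6 := abs_add_le x₀ (V t)
      rw [abs_of_nonneg hx₀] at h6
      nlinarith [mul_le_mul_of_nonneg_right h3 h5, mul_le_mul_of_nonneg_left h4 hx₀])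
  have hytr : Trajectory F x₀ v y := by
    refine ⟨hyc.continuousOn, fun t ht => ?_⟩
    rw [ula_traj (x₀ := x₀) hFc hva hyc ht, hy t ht, hV t ht]; ring
  -- extended trajectory x
  let X : ℝ → ℝ := fun t => x (max t 0)
  have hXc : Continuous X := by
    have hmx : Continuous fun t : ℝ => max t 0 := by fun_prop
    exact htr.1.comp_continuous hmx (fun t => le_max_right t 0)
  have hXx : ∀ t, 0 ≤ t → X t = x t := fun t ht => by simp only [X, max_eq_left ht]
  have hX : ∀ t, 0 ≤ t → X t = x₀ + (∫ s in (0:ℝ)..t, F (X s)) + ∫ s in (0:ℝ)..t, u s := by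
    intro t ht
    have e : (∫ s in (0:ℝ)..t, (F (x s) + u s)) = ∫ s in (0:ℝ)..t, (F (X s) + u s) := by
      apply intervalIntegral.integral_congr
      intro s hs
      rw [Set.uIcc_of_le ht] at hs
      simp only [hXx s hs.1]
    rw [hXx t ht, htr.2 t ht, e, ula_traj (x₀ := x₀) hFc hu hXc ht]; ring
  -- the difference of primitives
  let D : ℝ → ℝ := fun t => ∫ s in (0:ℝ)..t, (u s - v s)
  have hdii : ∀ a b, 0 ≤ a → a ≤ b → IntervalIntegrable (fun s => u s - v s) volume a b :=
    fun a b ha hab => (ula_ii hu ha hab).sub (ula_ii hva ha hab)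
  have hDadd : ∀ a b, 0 ≤ a → a ≤ b → D b = D a + ∫ s in a..b, (u s - v s) := fun a b ha hab =>
    (intervalIntegral.integral_add_adjacent_intervals (hdii 0 a le_rfl ha) (hdii a b ha hab)).symm
  have hD0 : D 0 = 0 := intervalIntegral.integral_same
  have hDm : ∀ a b, 0 ≤ a → a ≤ b → b ≤ T → D a ≤ D b := by
    intro a b ha hab hb
    rw [hDadd a b ha hab]
    have : 0 ≤ ∫ s in a..b, (u s - v s) := by
      apply intervalIntegral.integral_nonneg hab
      intro s hs
      rw [hvv, if_pos (hs.2.trans hb)]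
      exact sub_nonneg.2 (min_le_left _ _)
    linarith
  have hDT : D T = I := by
    rw [hI]
    apply intervalIntegral.integral_congr
    intro s hs
    rw [Set.uIcc_of_le hT.le] at hs
    simp only [hvv, if_pos hs.2]
  have hD2 : ∀ t, T ≤ t → t ≤ T + β → D t = I - I * (t - T) := by
    intro t h1 h2
    rw [hDadd T t hT.le h1, hDT]
    have : (∫ s in T..t, (u s - v s)) = ∫ s in T..t, (-I) := by
      rw [intervalIntegral.integral_of_le h1, intervalIntegral.integral_of_le h1]
      apply setIntegral_congr_fun measurableSet_Ioc
      intro s hs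
      simp only [hvv, if_neg (not_le.2 hs.1), if_pos (hs.2.trans h2)]
      ring
    rw [this, intervalIntegral.integral_const, smul_eq_mul]; ring
  have hD3 : ∀ t, T + β ≤ t → D t = D (T + β) := by
    intro t h1
    rw [hDadd (T + β) t (by positivity) h1]
    have : (∫ s in (T + β)..t, (u s - v s)) = ∫ s in (T + β)..t, (0:ℝ) := by
      rw [intervalIntegral.integral_of_le h1, intervalIntegral.integral_of_le h1]
      apply setIntegral_congr_fun measurableSet_Ioc
      intro s hs
      have h3 : ¬ s ≤ T := by have := hs.1; intro h; linarith
      simp only [hvv, if_neg h3, if_neg (not_le.2 hs.1), sub_self]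
    rw [this]; simp
  have hcX : Continuous fun r => F (X r) := hFc.comp hXc
  have hcY : Continuous fun r => F (y r) := hFc.comp hyc
  have hdiff : ∀ t, 0 ≤ t → X t - y t - D t = ∫ r in (0:ℝ)..t, (F (X r) - F (y r)) := by
    intro t ht
    have e1 : D t = (∫ s in (0:ℝ)..t, u s) - ∫ s in (0:ℝ)..t, v s :=
      intervalIntegral.integral_sub (ula_ii hu le_rfl ht) (ula_ii hva le_rfl ht)
    rw [intervalIntegral.integral_sub (hcX.intervalIntegrable _ _) (hcY.intervalIntegrable _ _),
      e1, hX t ht, hy t ht, hV t ht]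
    ring
  have hdiff2 : ∀ s t, 0 ≤ s → s ≤ t →
      X t - y t - D t = X s - y s - D s + ∫ r in s..t, (F (X r) - F (y r)) := by
    intro s t hs hst
    rw [hdiff s hs, hdiff t (hs.trans hst)]
    exact (intervalIntegral.integral_add_adjacent_intervals
      ((hcX.sub hcY).intervalIntegrable _ _) ((hcX.sub hcY).intervalIntegrable _ _)).symm
  have hw0 : X 0 - y 0 - D 0 = 0 := by rw [hdiff 0 le_rfl, intervalIntegral.integral_same]
  have hmid : ∀ t, T ≤ t → t ≤ T + β → y t ≤ X t := by
    intro t h1 h2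
    have h := ula_comp (D := D) (M := I) (s := 0) (τ := t) hF hF' hXc hyc (by linarith)
      (fun r hr _ => hdiff2 0 r le_rfl hr)
      (fun r hr hrt => by
        rcases le_total r T with h | h
        · rw [← hDT]; exact hDm r T hr h le_rfl
        · rw [hD2 r h (hrt.trans h2)]
          have := mul_nonneg hI0 (sub_nonneg.2 h)
          linarith)
      (by rw [hw0]; linarith)
    rw [hw0, hD2 t h1 h2, zero_add, sub_zero] at h
    have h3 : β ≤ Real.exp (-b₀ * t) := by
      rw [hβe]; apply Real.exp_le_exp.2; nlinarith
    have h4 : t - T ≤ Real.exp (-b₀ * t) := by linarith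
    have h5 := mul_le_mul_of_nonneg_right h4 hI0
    linarith
  have hyX : ∀ t, 0 ≤ t → y t ≤ X t := by
    intro t ht
    rcases le_total t T with h1 | h1
    · have hDt : 0 ≤ D t := by rw [← hD0]; exact hDm 0 t le_rfl ht h1
      have h := ula_comp (D := D) (M := D t) (s := 0) (τ := t) hF hF' hXc hyc ht
        (fun r hr _ => hdiff2 0 r le_rfl hr)
        (fun r hr hrt => hDm r t hr hrt h1) (by rw [hw0]; linarith)
      rw [hw0, zero_add] at h
      have := mul_nonneg (Real.exp_pos (-b₀ * (t - 0))).le hDt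
      linarith
    · rcases le_total t (T + β) with h2 | h2
      · exact hmid t h1 h2
      · have h3 := hmid (T + β) (by linarith) le_rfl
        have h4 : 0 ≤ X (T + β) - y (T + β) - D (T + β) + D (T + β) := by linarith
        have h := ula_comp (D := D) (M := D (T + β)) (s := T + β) (τ := t) hF hF' hXc hyc h2
          (fun r hr _ => hdiff2 (T + β) r (by positivity) hr)
          (fun r hr hrt => (hD3 r hr).le) h4
        have := mul_nonneg (Real.exp_pos (-b₀ * (t - (T + β)))).le h4
        rw [hD3 t h2] at h
        linarith
  -- nonnegativity
  have hy0 : ∀ t, 0 ≤ t → 0 ≤ y t := by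
    intro t ht
    have hVm : ∀ a b, 0 ≤ a → a ≤ b → V a ≤ V b := by
      intro a b ha hab
      rw [hV a ha, hV b (ha.trans hab), ← intervalIntegral.integral_add_adjacent_intervals
        (ula_ii hva le_rfl ha) (ula_ii hva ha hab)]
      have : 0 ≤ ∫ s in a..b, v s := by
        rw [intervalIntegral.integral_of_le hab]
        apply integral_nonneg_of_ae
        have hs : Set.Ioc a b ⊆ Set.Ioi 0 := fun s hs => lt_of_le_of_lt ha hs.1
        exact (ae_restrict_of_ae_restrict_of_subset hs (ula_pos hva)).mono fun _ h => h.le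
      linarith
    have hV0 : V 0 = 0 := by rw [hV 0 le_rfl, intervalIntegral.integral_same]
    have hy00 : y 0 = x₀ := by rw [hy 0 le_rfl, hV0]; simp
    have h2 := hVm 0 t le_rfl ht
    have h4 : 0 ≤ y 0 - 0 - (x₀ + V 0) + (x₀ + V t) := by rw [hy00]; linarith
    have h := ula_comp (x := y) (y := fun _ => 0) (D := fun t => x₀ + V t) (M := x₀ + V t)
      (s := 0) (τ := t) hF hF' hyc continuous_const ht
      (fun r hr _ => by
        simp only [hF0, sub_zero]
        rw [hy r hr, hy00, hV0]; ring)
      (fun r hr hrt => by have := hVm r t hr hrt; linarith) h4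
    have := mul_nonneg (Real.exp_pos (-b₀ * (t - 0))).le h4
    linarith
  have hfin : ∀ t : ℝ, 0 ≤ t → 0 ≤ y t ∧ y t ≤ x t := fun t ht =>
    ⟨hy0 t ht, hXx t ht ▸ hyX t ht⟩
  obtain ⟨hobj1, hobj2⟩ := ula_obj hρ hc hN0 hI0 hu htr.1 hyc.continuousOn hfin hw ho hφi hφ0 hφ
  rw [← hv] at hobj1 hobj2
  refine ⟨v, y, hva, hytr, ?_, hfin, hobj1, hobj2⟩
  filter_upwards [ae_restrict_mem measurableSet_Icc] with t ht
  rw [hvv, if_pos ht.2]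
end
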